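/- Let x → ∞. Then max_{n ≤ x} log r₂(r₂(n)) = (√(log x)/log₂ x)·( c/√2 + O(log₃ x / log₂ x) ), where c = (8·∑_{l=1}^∞ (log(1 + 1/l))²)^{1/2} and log_k denotes the k-fold iterated natural logarithm. -/

import Mathlib

open Filter

/-- `r2 n` counts the representations of `n` as a sum of two squares
(signs and order counted). -/
noncomputable def r2 (n : ℕ) : ℕ :=
  Nat.card {p : ℤ × ℤ // p.1 ^ 2 + p.2 ^ 2 = (n : ℤ)}

/-- The constant `c = (8·∑_{l=1}^∞ (log(1 + 1/l))²)^{1/2}`. -/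
noncomputable def cBEFS : ℝ :=
  Real.sqrt (8 * ∑' l : ℕ, (Real.log (1 + 1 / ((l : ℝ) + 1))) ^ 2)

/-!
By Jacobi's formula `r₂(n) = 4 ∏ (e_p + 1)`, over the exponents `e_p` of the primes `p ≡ 1 mod 4`
in `n` (unless `r₂(n) = 0`), so `log r₂(r₂(n))` is, up to `log 4`, the sum of the increments
`log (1 + 1 / l)`, `l ≤ v_q(r₂(n))`, over the primes `q ≡ 1 mod 4`. A factor `q` of `e_p + 1` costs
at least `(q - 1) log p` of the budget `log n ≤ X = log x`, and in the extremal situation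
`log p ∼ (log X) / 2`. This is a knapsack problem with items `(q, l)` of gain `log (1 + 1 / l)` and
cost `q (log X) / 2`.

At the price `1 / Y` per unit of `q`, the items worth taking bring a total surplus
`∑ (log (1 + 1 / l) - q / Y)₊ ∼ Y σ / (4 log Y)`, `σ = ∑ log (1 + 1 / l) ^ 2`, by the prime number
theorem modulo 4 with an error term. Weak Lagrange duality bounds `log r₂(r₂(n))` by
`Y σ / (4 log Y) + 2 X / (Y log X)`, and `Y = 2 √(X / σ)` gives the main term
`2 √σ √X / log X`. Conversely, the greedy solution of the knapsack problem is realised by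
`n = ∏ P (q, l) ^ (q - 1)` with distinct primes `P (q, l) ≡ 1 mod 4` of size `X ^ (1 / 2 + o(1))`.

The prime number theorem is obtained from polynomial bounds, with small exponents, for `L(s, χ)`,
its derivatives and (by the `3-4-1` inequality) `1 / L(s, χ)` near `re s = 1`, which allow one
integration by parts in Perron's formula for Riesz means.
-/

section HurwitzGrowth

open Asymptotics Complex HurwitzZeta Topology

/-- The error `(s - 1) (x^{-s} - ∫_x^{x+1} u^{-s} du)` of the left-endpoint rule, with the integral
evaluated so that the expression makes sense (and vanishes) at `s = 1`. Summed over `x ∈ M + a + ℕ`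
it continues the Hurwitz zeta function to the left of `re s = 1`. -/
noncomputable def leftRuleError (x : ℝ) (s : ℂ) : ℂ :=
  (s - 1) * (x : ℂ) ^ (-s) - ((x : ℂ) ^ (1 - s) - ((x + 1 : ℝ) : ℂ) ^ (1 - s))

lemma hasDerivAt_ofReal_add_cpow {x v : ℝ} (hxv : x + v ≠ 0) {r : ℂ} (hr : r ≠ 0) :
    HasDerivAt (fun v : ℝ => ((x + v : ℝ) : ℂ) ^ r) (r * ((x + v : ℝ) : ℂ) ^ (r - 1)) v :=
  (hasDerivAt_ofReal_cpow_const hxv hr).comp_const_add x v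

lemma norm_ofReal_add_cpow_neg_sub_le {x : ℝ} (hx : 0 < x) {s : ℂ} (hs : 0 < s.re) {v : ℝ}
    (hv : v ∈ Set.Icc (0 : ℝ) 1) :
    ‖((x + v : ℝ) : ℂ) ^ (-s) - (x : ℂ) ^ (-s)‖ ≤ ‖s‖ * x ^ (-s.re - 1) := by
  have hs0 : -s ≠ 0 := neg_ne_zero.2 fun h => by simp [h] at hs
  have hmv := norm_image_sub_le_of_norm_deriv_le_segment'
    (f := fun w : ℝ => ((x + w : ℝ) : ℂ) ^ (-s)) (C := ‖s‖ * x ^ (-s.re - 1))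
    (fun w hw =>
      (hasDerivAt_ofReal_add_cpow (by linarith [hw.1]) hs0).hasDerivWithinAt)
    (fun w hw => ?_) v hv
  · have hC : 0 ≤ ‖s‖ * x ^ (-s.re - 1) := by positivity
    simp only [add_zero, sub_zero] at hmv
    exact hmv.trans (mul_le_of_le_one_right hC hv.2)
  · rw [norm_mul, norm_neg, norm_cpow_eq_rpow_re_of_pos (by linarith [hw.1])]
    simp only [sub_re, neg_re, one_re]
    gcongr ‖s‖ * ?_
    exact Real.rpow_le_rpow_of_nonpos hx (by linarith [hw.1]) (by linarith)

lemma norm_leftRuleError_le {x : ℝ} (hx : 0 < x) {s : ℂ} (hs : 0 < s.re) :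
    ‖leftRuleError x s‖ ≤ ‖s - 1‖ * (‖s‖ * x ^ (-s.re - 1)) := by
  rcases eq_or_ne s 1 with rfl | h1
  · simp [leftRuleError]
  have hmv := norm_image_sub_le_of_norm_deriv_le_segment_01'
    (f := fun v : ℝ => (s - 1) * (x : ℂ) ^ (-s) * v + ((x + v : ℝ) : ℂ) ^ (1 - s))
    (f' := fun v : ℝ => (s - 1) * (x : ℂ) ^ (-s) + (1 - s) * ((x + v : ℝ) : ℂ) ^ (1 - s - 1))
    (C := ‖s - 1‖ * (‖s‖ * x ^ (-s.re - 1))) (fun v hv => ?_) (fun v hv => ?_)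
  · refine le_of_eq_of_le (congrArg norm ?_) hmv
    simp only [leftRuleError, ofReal_one, ofReal_zero, add_zero]
    ring
  · have hpow := hasDerivAt_ofReal_add_cpow (x := x) (v := v) (by linarith [hv.1])
      (sub_ne_zero.2 h1.symm)
    simpa using
      ((ofRealCLM.hasDerivAt.const_mul ((s - 1) * (x : ℂ) ^ (-s))).fun_add hpow).hasDerivWithinAt
  · rw [show (s - 1) * (x : ℂ) ^ (-s) + (1 - s) * ((x + v : ℝ) : ℂ) ^ (1 - s - 1)
        = -((s - 1) * (((x + v : ℝ) : ℂ) ^ (-s) - (x : ℂ) ^ (-s))) by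
      rw [sub_sub_cancel_left]; ring, norm_neg, norm_mul]
    gcongr
    exact norm_ofReal_add_cpow_neg_sub_le hx hs ⟨hv.1, hv.2.le⟩

lemma differentiable_leftRuleError {x : ℝ} (hx : 0 < x) : Differentiable ℂ (leftRuleError x) := by
  have hx0 : (x : ℂ) ≠ 0 := ofReal_ne_zero.2 hx.ne'
  have hx1 : ((x + 1 : ℝ) : ℂ) ≠ 0 := ofReal_ne_zero.2 (by positivity)
  intro s
  exact .sub (.mul (by fun_prop) (differentiableAt_id.neg.const_cpow (.inl hx0)))
    (.sub ((differentiableAt_id.const_sub 1).const_cpow (.inl hx0))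
      ((differentiableAt_id.const_sub 1).const_cpow (.inl hx1)))

lemma summable_natCast_add_one_rpow_neg {p : ℝ} (hp : 1 < p) :
    Summable fun n : ℕ => ((n : ℝ) + 1) ^ (-p) := by
  exact_mod_cast (summable_nat_add_iff 1).2 (Real.summable_nat_rpow.2 (neg_lt_neg hp))

lemma norm_leftRuleError_natCast_add_le {x : ℝ} (hx : 1 ≤ x) {s : ℂ} (hs : 0 < s.re) {α β : ℝ}
    (hα : 0 ≤ α) (hβ : 0 ≤ β) (hαβ : α + β ≤ s.re + 1) (n : ℕ) :
    ‖leftRuleError (n + x) s‖ ≤ ‖s - 1‖ * ‖s‖ * x ^ (-α) * ((n : ℝ) + 1) ^ (-β) := by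
  have hpow : ((n : ℝ) + x) ^ (-s.re - 1) ≤ x ^ (-α) * ((n : ℝ) + 1) ^ (-β) := calc
    ((n : ℝ) + x) ^ (-s.re - 1) ≤ ((n : ℝ) + x) ^ (-α + -β) :=
      Real.rpow_le_rpow_of_exponent_le (by linarith) (by linarith)
    _ = ((n : ℝ) + x) ^ (-α) * ((n : ℝ) + x) ^ (-β) := Real.rpow_add (by linarith) _ _
    _ ≤ x ^ (-α) * ((n : ℝ) + 1) ^ (-β) := by
      gcongr ?_ * ?_
      · exact Real.rpow_le_rpow_of_nonpos (by linarith) (by linarith) (by linarith)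
      · exact Real.rpow_le_rpow_of_nonpos (by linarith) (by linarith) (by linarith)
  calc ‖leftRuleError (n + x) s‖ ≤ ‖s - 1‖ * (‖s‖ * ((n : ℝ) + x) ^ (-s.re - 1)) :=
        norm_leftRuleError_le (by linarith) hs
    _ ≤ ‖s - 1‖ * (‖s‖ * (x ^ (-α) * ((n : ℝ) + 1) ^ (-β))) := by gcongr
    _ = _ := by ring

lemma norm_tsum_leftRuleError_le {x : ℝ} (hx : 1 ≤ x) {s : ℂ} (hs : 0 < s.re) {α β : ℝ}
    (hα : 0 ≤ α) (hβ : 1 < β) (hαβ : α + β ≤ s.re + 1) :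
    ‖∑' n : ℕ, leftRuleError (n + x) s‖ ≤
      ‖s - 1‖ * ‖s‖ * x ^ (-α) * ∑' n : ℕ, ((n : ℝ) + 1) ^ (-β) :=
  tsum_of_norm_bounded ((summable_natCast_add_one_rpow_neg hβ).hasSum.mul_left _)
    (norm_leftRuleError_natCast_add_le hx hs hα (by linarith) hαβ)

lemma summable_norm_leftRuleError {x : ℝ} (hx : 1 ≤ x) {s : ℂ} (hs : 0 < s.re) :
    Summable fun n : ℕ => ‖leftRuleError (n + x) s‖ :=
  .of_nonneg_of_le (fun _ => norm_nonneg _)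
    (norm_leftRuleError_natCast_add_le hx hs le_rfl (β := s.re + 1) (by linarith) (by linarith))
    ((summable_natCast_add_one_rpow_neg (by linarith)).mul_left _)

lemma differentiableAt_tsum_leftRuleError {x : ℝ} (hx : 1 ≤ x) {s : ℂ} (hs : 0 < s.re) :
    DifferentiableAt ℂ (fun z => ∑' n : ℕ, leftRuleError (n + x) z) s := by
  set R := ‖s‖ + 1
  set V : Set ℂ := {z | s.re / 2 < z.re} ∩ Metric.ball 0 R
  have hV : IsOpen V := (isOpen_lt continuous_const continuous_re).inter Metric.isOpen_ball
  have hsV : s ∈ V := ⟨half_lt_self hs, by simp [R]⟩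
  refine (differentiableOn_tsum_of_summable_norm (F := fun (n : ℕ) z => leftRuleError (n + x) z)
    (u := fun n : ℕ => (R + 1) * R * x ^ (-(0 : ℝ)) * ((n : ℝ) + 1) ^ (-(1 + s.re / 2)))
    ((summable_natCast_add_one_rpow_neg (by linarith)).mul_left _)
    (fun n => (differentiable_leftRuleError (by positivity)).differentiableOn) hV
    fun n z hz => ?_).differentiableAt (hV.mem_nhds hsV)
  have hzR : ‖z‖ ≤ R := (mem_ball_zero_iff.1 hz.2).le
  have hz0 : s.re / 2 < z.re := hz.1
  refine (norm_leftRuleError_natCast_add_le hx (by linarith) le_rfl (β := 1 + s.re / 2)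
    (by linarith) (by linarith) n).trans ?_
  gcongr ?_ * ?_ * _ * _
  exact (norm_sub_le _ _).trans (by rw [norm_one]; linarith)

/-- The right-hand side of the Euler–Maclaurin type formula for `(s - 1) ζ(s, a)`, in which the
first `M` terms of the Dirichlet series are kept. -/
noncomputable def hurwitzApprox (a : ℝ) (M : ℕ) (s : ℂ) : ℂ :=
  (s - 1) * ∑ n ∈ Finset.range M, 1 / (n + a : ℂ) ^ s + ((M + a : ℝ) : ℂ) ^ (1 - s)
    + ∑' n : ℕ, leftRuleError (n + (M + a)) s

variable {a : ℝ} {M : ℕ}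

lemma differentiableOn_hurwitzApprox (ha : 0 ≤ a) (hM : 1 ≤ M) :
    DifferentiableOn ℂ (hurwitzApprox a M) {s | 0 < s.re} := by
  intro s (hs : 0 < s.re)
  have hM1 : (1 : ℝ) ≤ M := by exact_mod_cast hM
  have hs0 : s ≠ 0 := fun h => by simp [h] at hs
  refine (DifferentiableAt.add (.add (.mul (by fun_prop) (.fun_sum fun n _ => ?_)) ?_)
    (differentiableAt_tsum_leftRuleError (by linarith) hs)).differentiableWithinAt
  · simp only [one_div, ← cpow_neg]
    exact differentiableAt_id.fun_neg.const_cpow (.inr (neg_ne_zero.2 hs0))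
  · exact (differentiableAt_id.const_sub 1).const_cpow (.inl (ofReal_ne_zero.2 (by linarith)))

lemma tendsto_natCast_add_cpow_one_sub_atTop (b : ℝ) {s : ℂ} (hs : 1 < s.re) :
    Tendsto (fun n : ℕ => ((n + b : ℝ) : ℂ) ^ (1 - s)) atTop (𝓝 0) := by
  have hx : Tendsto (fun n : ℕ => (n + b : ℝ)) atTop atTop :=
    tendsto_atTop_add_const_right _ _ tendsto_natCast_atTop_atTop
  refine tendsto_zero_iff_norm_tendsto_zero.2 <|
    ((tendsto_rpow_neg_atTop (sub_pos.2 hs)).comp hx).congr' ?_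
  filter_upwards [hx.eventually_gt_atTop 0] with n hn
  rw [norm_cpow_eq_rpow_re_of_pos hn, sub_re, one_re, Function.comp_apply, neg_sub]

lemma sum_range_leftRuleError (x : ℝ) (s : ℂ) (N : ℕ) :
    ∑ n ∈ Finset.range N, leftRuleError (n + x) s =
      (s - 1) * ∑ n ∈ Finset.range N, 1 / ((n + x : ℝ) : ℂ) ^ s
        - ((x : ℂ) ^ (1 - s) - ((N + x : ℝ) : ℂ) ^ (1 - s)) := by
  have htelescope := Finset.sum_range_sub' (fun n : ℕ => ((n + x : ℝ) : ℂ) ^ (1 - s)) N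
  rw [Nat.cast_zero, zero_add] at htelescope
  rw [← htelescope, Finset.mul_sum, ← Finset.sum_sub_distrib]
  refine Finset.sum_congr rfl fun n _ => ?_
  rw [leftRuleError, cpow_neg, one_div, show ((n + 1 : ℕ) : ℝ) + x = n + x + 1 by push_cast; ring]

lemma sub_one_mul_hurwitzZeta_of_one_lt_re (ha : a ∈ Set.Icc (0 : ℝ) 1) (hM : 1 ≤ M) {s : ℂ}
    (hs : 1 < s.re) : (s - 1) * hurwitzZeta a s = hurwitzApprox a M s := by
  have hM1 : (1 : ℝ) ≤ M := by exact_mod_cast hM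
  have hzeta := ((hasSum_nat_add_iff' M).2 (hasSum_hurwitzZeta_of_one_lt_re ha hs)).tendsto_sum_nat
  have herror : HasSum (fun n : ℕ => leftRuleError (n + (M + a)) s)
      ((s - 1) * (hurwitzZeta a s - ∑ n ∈ Finset.range M, 1 / (n + a : ℂ) ^ s)
        - (((M + a : ℝ) : ℂ) ^ (1 - s) - 0)) := by
    rw [hasSum_iff_tendsto_nat_of_summable_norm
      (summable_norm_leftRuleError (by linarith [ha.1]) (by linarith))]
    simp_rw [sum_range_leftRuleError]
    refine ((hzeta.const_mul _).congr fun N => ?_).sub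
      (tendsto_const_nhds.sub (tendsto_natCast_add_cpow_one_sub_atTop _ hs))
    simp only [Nat.cast_add, ofReal_add, ofReal_natCast, add_assoc]
  rw [hurwitzApprox, herror.tsum_eq]
  ring

lemma differentiable_update_sub_one_mul_hurwitzZeta (a : UnitAddCircle) :
    Differentiable ℂ (Function.update (fun s => (s - 1) * hurwitzZeta a s) 1 1) := by
  rw [← differentiableOn_univ,
    ← differentiableOn_compl_singleton_and_continuousAt_iff (univ_mem : Set.univ ∈ 𝓝 (1 : ℂ))]
  refine ⟨fun s hs => ?_, continuousAt_update_same.2 (hurwitzZeta_residue_one a)⟩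
  have hs1 : s ≠ 1 := hs.2
  refine DifferentiableAt.differentiableWithinAt <|
    DifferentiableAt.congr_of_eventuallyEq
      (.mul (by fun_prop) (differentiableAt_hurwitzZeta a hs1) :
        DifferentiableAt ℂ (fun s => (s - 1) * hurwitzZeta a s) s) ?_
  filter_upwards [isOpen_compl_singleton.mem_nhds hs1] with z hz
  exact Function.update_of_ne hz _ _

lemma sub_one_mul_hurwitzZeta (ha : a ∈ Set.Icc (0 : ℝ) 1) (hM : 1 ≤ M) {s : ℂ} (hs : 0 < s.re)
    (hs1 : s ≠ 1) : (s - 1) * hurwitzZeta a s = hurwitzApprox a M s := by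
  have hopen : IsOpen {s : ℂ | 0 < s.re} := isOpen_lt continuous_const continuous_re
  have heq :
      Function.update (fun s => (s - 1) * hurwitzZeta a s) 1 1 =ᶠ[𝓝 2] hurwitzApprox a M := by
    filter_upwards [(isOpen_lt continuous_const continuous_re).mem_nhds
      (show (1 : ℝ) < (2 : ℂ).re by simp)] with z hz
    rw [Function.update_of_ne (by rintro rfl; simp at hz)]
    exact sub_one_mul_hurwitzZeta_of_one_lt_re ha hM hz
  have := ((differentiable_update_sub_one_mul_hurwitzZeta a).differentiableOn.analyticOnNhd
    hopen).eqOn_of_preconnected_of_eventuallyEq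
      ((differentiableOn_hurwitzApprox ha.1 hM).analyticOnNhd hopen)
      (convex_halfSpace_re_gt _).isPreconnected (by simp) heq hs
  rwa [Function.update_of_ne hs1] at this

lemma sum_range_inv_add_one_le (N : ℕ) :
    ∑ n ∈ Finset.range N, ((n : ℝ) + 1)⁻¹ ≤ 1 + Real.log N := by
  simpa [harmonic] using harmonic_le_one_add_log N

lemma norm_one_div_natCast_succ_add_cpow_le (ha : 0 ≤ a) {s : ℂ} {δ : ℝ} (hs : 0 < s.re)
    (hsδ : 1 - δ ≤ s.re) (n : ℕ) :
    ‖1 / (((n + 1 : ℕ) : ℂ) + a) ^ s‖ ≤ ((n : ℝ) + 1) ^ δ * ((n : ℝ) + 1)⁻¹ := by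
  rw [one_div, ← cpow_neg, show (((n + 1 : ℕ) : ℂ) + a) = ((n + 1 + a : ℝ) : ℂ) by push_cast; ring,
    norm_cpow_eq_rpow_re_of_pos (by positivity), neg_re]
  calc ((n : ℝ) + 1 + a) ^ (-s.re) ≤ ((n : ℝ) + 1) ^ (-s.re) :=
        Real.rpow_le_rpow_of_nonpos (by positivity) (by linarith) (by linarith)
    _ ≤ ((n : ℝ) + 1) ^ (δ + -1) :=
        Real.rpow_le_rpow_of_exponent_le (by linarith [n.cast_nonneg (α := ℝ)]) (by linarith)
    _ = ((n : ℝ) + 1) ^ δ * ((n : ℝ) + 1)⁻¹ := by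
        rw [Real.rpow_add (by positivity), Real.rpow_neg_one]

lemma norm_sum_range_one_div_cpow_le (ha : a ∈ Set.Icc (0 : ℝ) 1) (hM : 1 ≤ M) {s : ℂ}
    {b δ : ℝ} (hδ : 0 < δ) (hs : 0 < s.re) (hsδ : 1 - δ ≤ s.re) (hsb : s.re ≤ b) :
    ‖∑ n ∈ Finset.range M, 1 / (n + a : ℂ) ^ s‖ ≤ (a ^ (-b) + 1 + 1 / δ) * (M : ℝ) ^ (2 * δ) := by
  obtain ⟨N, rfl⟩ : ∃ N, M = N + 1 := ⟨M - 1, by omega⟩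
  have hN : (1 : ℝ) ≤ (N + 1 : ℕ) := by exact_mod_cast hM
  have hNδ : 1 ≤ ((N + 1 : ℕ) : ℝ) ^ δ := Real.one_le_rpow hN hδ.le
  have hsq : ((N + 1 : ℕ) : ℝ) ^ (2 * δ) = ((N + 1 : ℕ) : ℝ) ^ δ * ((N + 1 : ℕ) : ℝ) ^ δ := by
    rw [two_mul, Real.rpow_add (by linarith)]
  have hfirst : ‖1 / (((0 : ℕ) : ℂ) + a) ^ s‖ ≤ a ^ (-b) := by
    rcases ha.1.eq_or_lt with rfl | h
    · simpa [show s ≠ 0 from fun h => by simp [h] at hs] using Real.rpow_nonneg le_rfl _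
    · rw [Nat.cast_zero, zero_add, one_div, ← cpow_neg, norm_cpow_eq_rpow_re_of_pos h]
      exact Real.rpow_le_rpow_of_exponent_ge h ha.2 (by simpa using hsb)
  have hterm : ∀ n ∈ Finset.range N, ‖1 / (((n + 1 : ℕ) : ℂ) + a) ^ s‖ ≤
      ((N + 1 : ℕ) : ℝ) ^ δ * ((n : ℝ) + 1)⁻¹ := by
    intro n hn
    refine (norm_one_div_natCast_succ_add_cpow_le ha.1 hs hsδ n).trans ?_
    gcongr
    exact_mod_cast Nat.succ_le_succ (Finset.mem_range.1 hn).le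
  have hharmonic :
      ∑ n ∈ Finset.range N, ((n : ℝ) + 1)⁻¹ ≤ (1 + 1 / δ) * ((N + 1 : ℕ) : ℝ) ^ δ := calc
    _ ≤ 1 + Real.log N := sum_range_inv_add_one_le N
    _ ≤ 1 + (N : ℝ) ^ δ / δ := by gcongr; exact Real.log_le_rpow_div N.cast_nonneg hδ
    _ ≤ ((N + 1 : ℕ) : ℝ) ^ δ + ((N + 1 : ℕ) : ℝ) ^ δ / δ := by gcongr; exact N.le_succ
    _ = _ := by ring
  rw [Finset.sum_range_succ', hsq]
  calc _ ≤ ∑ n ∈ Finset.range N, ((N + 1 : ℕ) : ℝ) ^ δ * ((n : ℝ) + 1)⁻¹ + a ^ (-b) :=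
        (norm_add_le _ _).trans (add_le_add (norm_sum_le_of_le _ hterm) hfirst)
    _ ≤ ((N + 1 : ℕ) : ℝ) ^ δ * ((1 + 1 / δ) * ((N + 1 : ℕ) : ℝ) ^ δ)
        + a ^ (-b) * (((N + 1 : ℕ) : ℝ) ^ δ * ((N + 1 : ℕ) : ℝ) ^ δ) := by
      rw [← Finset.mul_sum]
      gcongr
      exact le_mul_of_one_le_right (Real.rpow_nonneg ha.1 _)
        (one_le_mul_of_one_le_of_one_le hNδ hNδ)
    _ = _ := by ring

lemma mul_sq_rpow_le {k τ α γ : ℝ} (hk : 1 ≤ k) (hτ : 1 ≤ τ) (hα1 : α ≤ 1)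
    (hγ : 2 * α ≤ γ) : (k * τ ^ 2) ^ α ≤ k * τ ^ γ := by
  have hτ0 : 0 ≤ τ := by linarith
  rw [Real.mul_rpow (by linarith) (by positivity), ← Real.rpow_natCast, ← Real.rpow_mul hτ0]
  gcongr
  · exact Real.rpow_le_self_of_one_le hk hα1
  · exact_mod_cast hγ

lemma norm_tsum_leftRuleError_le_of_sq_le {x τ δ : ℝ} (hτ : 1 ≤ τ) (hx : τ ^ 2 ≤ x)
    (hδ : δ < 1 / 2) {s : ℂ} (hs : 1 - δ ≤ s.re) :
    ‖∑' n : ℕ, leftRuleError (n + x) s‖ ≤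
      ‖s - 1‖ * ‖s‖ * τ ^ (2 * δ - 1) * ∑' n : ℕ, ((n : ℝ) + 1) ^ (-(3 / 2) : ℝ) := by
  refine (norm_tsum_leftRuleError_le (α := 1 / 2 - δ) (β := 3 / 2) (by nlinarith) (by linarith)
    (by linarith) (by norm_num) (by linarith)).trans ?_
  gcongr
  calc x ^ (-(1 / 2 - δ)) ≤ (τ ^ 2) ^ (-(1 / 2 - δ)) :=
        Real.rpow_le_rpow_of_nonpos (by positivity) hx (by linarith)
    _ = τ ^ (2 * δ - 1) := by
        rw [← Real.rpow_natCast, ← Real.rpow_mul (by linarith)]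
        congr 1
        push_cast
        ring

lemma norm_tsum_leftRuleError_le_mul_rpow {x τ δ B : ℝ} (hτ : 1 ≤ τ) (hx : τ ^ 2 ≤ x) (hδ : 0 ≤ δ)
    (hδ' : δ < 1 / 2) {s : ℂ} (hs : 1 - δ ≤ s.re) (hsB : ‖s‖ ≤ B * τ) :
    ‖∑' n : ℕ, leftRuleError (n + x) s‖ ≤
      ‖s - 1‖ * (B * (∑' n : ℕ, ((n : ℝ) + 1) ^ (-(3 / 2) : ℝ)) * τ ^ (4 * δ)) := by
  set Z : ℝ := ∑' n : ℕ, ((n : ℝ) + 1) ^ (-(3 / 2) : ℝ)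
  have hτ0 : 0 < τ := by linarith
  have hB : 0 ≤ B := nonneg_of_mul_nonneg_left ((norm_nonneg s).trans hsB) hτ0
  have hpow : τ * τ ^ (2 * δ - 1) ≤ τ ^ (4 * δ) := by
    rw [Real.rpow_sub_one hτ0.ne', mul_div_cancel₀ _ hτ0.ne']
    exact Real.rpow_le_rpow_of_exponent_le hτ (by linarith)
  calc _ ≤ ‖s - 1‖ * ‖s‖ * τ ^ (2 * δ - 1) * Z :=
        norm_tsum_leftRuleError_le_of_sq_le hτ hx hδ' hs
    _ ≤ ‖s - 1‖ * (B * τ) * τ ^ (2 * δ - 1) * Z := by gcongr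
    _ = ‖s - 1‖ * (B * Z * (τ * τ ^ (2 * δ - 1))) := by ring
    _ ≤ _ := by gcongr

lemma norm_ofReal_cpow_one_sub_le {x k τ δ : ℝ} (hx1 : 1 ≤ x) (hx : x ≤ k * τ ^ 2) (hk : 1 ≤ k)
    (hτ : 1 ≤ τ) (hδ : 0 ≤ δ) (hδ' : δ ≤ 1) {s : ℂ} (hs : 1 - δ ≤ s.re) :
    ‖(x : ℂ) ^ (1 - s)‖ ≤ k * τ ^ (4 * δ) := by
  rw [norm_cpow_eq_rpow_re_of_pos (by linarith)]
  calc x ^ (1 - s).re ≤ x ^ δ :=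
        Real.rpow_le_rpow_of_exponent_le hx1 (by rw [sub_re, one_re]; linarith)
    _ ≤ (k * τ ^ 2) ^ δ := Real.rpow_le_rpow (by linarith) hx hδ
    _ ≤ k * τ ^ (4 * δ) := mul_sq_rpow_le hk hτ hδ' (by linarith)

/-- The part of the vertical strip `a ≤ re s ≤ b` at height at least `c` (above and below). -/
def truncStrip (a b c : ℝ) : Set ℂ := {s | a ≤ s.re ∧ s.re ≤ b ∧ c ≤ |s.im|}

lemma isBigO_hurwitzZeta (ha : a ∈ Set.Icc (0 : ℝ) 1) {b δ : ℝ} (hb : 1 ≤ b) (hδ : 0 < δ)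
    (hδ' : δ < 1 / 2) :
    hurwitzZeta a =O[𝓟 (truncStrip (1 - δ) b 1)] fun s => |s.im| ^ (4 * δ) := by
  set Z : ℝ := ∑' n : ℕ, ((n : ℝ) + 1) ^ (-(3 / 2) : ℝ)
  have hab : 0 ≤ a ^ (-b) := Real.rpow_nonneg ha.1 _
  refine isBigO_principal.2 ⟨(a ^ (-b) + 1 + 1 / δ) * 2 + 3 + (b + 1) * Z, ?_⟩
  rintro s ⟨hsδ, hsb, hs1⟩
  rw [Real.norm_of_nonneg (by positivity)]
  set τ := |s.im|
  -- A cut-off of order `τ²` is long enough for the factor `‖s‖` in the tail to be harmless.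
  set M := ⌈τ ^ 2⌉₊
  have hMlow : τ ^ 2 ≤ M := Nat.le_ceil _
  have hMup : (M : ℝ) ≤ 2 * τ ^ 2 := by nlinarith [Nat.ceil_lt_add_one (sq_nonneg τ)]
  have hM : 1 ≤ M := Nat.one_le_ceil_iff.2 (by positivity)
  have hM1 : (1 : ℝ) ≤ M := by exact_mod_cast hM
  have hs : 0 < s.re := by linarith
  have hτs : τ ≤ ‖s - 1‖ := by simpa [τ] using abs_im_le_norm (s - 1)
  have hs1' : 0 < ‖s - 1‖ := by linarith
  have hsτ : ‖s‖ ≤ (b + 1) * τ := by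
    have := norm_le_abs_re_add_abs_im s
    rw [abs_of_pos hs] at this
    nlinarith
  have hsum : ‖∑ n ∈ Finset.range M, 1 / (n + a : ℂ) ^ s‖ ≤
      (a ^ (-b) + 1 + 1 / δ) * (2 * τ ^ (4 * δ)) := by
    refine (norm_sum_range_one_div_cpow_le ha hM hδ hs hsδ hsb).trans ?_
    gcongr
    exact (Real.rpow_le_rpow (by positivity) hMup (by positivity)).trans
      (mul_sq_rpow_le one_le_two hs1 (by linarith) (by linarith))
  have hmid : ‖((M + a : ℝ) : ℂ) ^ (1 - s)‖ ≤ ‖s - 1‖ * (3 * τ ^ (4 * δ)) :=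
    (norm_ofReal_cpow_one_sub_le (by linarith [ha.1]) (by nlinarith [ha.2]) (by norm_num) hs1 hδ.le
      (by linarith) hsδ).trans (le_mul_of_one_le_left (by positivity) (by linarith))
  have htail := norm_tsum_leftRuleError_le_mul_rpow (x := M + a) hs1 (by linarith [ha.1]) hδ.le hδ'
    hsδ hsτ
  refine le_of_mul_le_mul_left ?_ hs1'
  rw [← norm_mul, sub_one_mul_hurwitzZeta ha hM hs (sub_ne_zero.1 (norm_pos_iff.1 hs1')),
    hurwitzApprox]
  calc _ ≤ ‖s - 1‖ * ((a ^ (-b) + 1 + 1 / δ) * (2 * τ ^ (4 * δ))) + ‖s - 1‖ * (3 * τ ^ (4 * δ))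
        + ‖s - 1‖ * ((b + 1) * Z * τ ^ (4 * δ)) := by
        refine norm_add₃_le.trans ?_
        rw [norm_mul]
        gcongr
    _ = _ := by ring

end HurwitzGrowth

section LFunctionGrowth

open Asymptotics Complex DirichletCharacter Topology

lemma truncStrip_mono {a b c a' b' c' : ℝ} (ha : a ≤ a') (hb : b' ≤ b) (hc : c ≤ c') :
    truncStrip a' b' c' ⊆ truncStrip a b c :=
  fun _ hs => ⟨ha.trans hs.1, hs.2.1.trans hb, hc.trans hs.2.2⟩

lemma isBigO_abs_im_rpow_of_le {a b c ε η : ℝ} (hc : 1 ≤ c) (h : ε ≤ η) :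
    (fun s : ℂ => |s.im| ^ ε) =O[𝓟 (truncStrip a b c)] fun s => |s.im| ^ η :=
  .of_bound' <| mem_principal.2 fun s hs => by
    simp only [Set.mem_ofPred_eq, Real.norm_of_nonneg (Real.rpow_nonneg (abs_nonneg s.im) _)]
    exact Real.rpow_le_rpow_of_exponent_le (hc.trans hs.2.2) h

lemma isBigO_iteratedDeriv {f : ℂ → ℂ} (hf : DifferentiableOn ℂ f {s | s.im ≠ 0})
    {a b c ε r : ℝ} (hε : 0 ≤ ε) (hr : 0 < r) (hrc : r ≤ c)
    (h : f =O[𝓟 (truncStrip a b c)] fun s => |s.im| ^ ε) (k : ℕ) :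
    iteratedDeriv k f =O[𝓟 (truncStrip (a + r) (b - r) (c + r))] fun s => |s.im| ^ ε := by
  obtain ⟨C, hC, hbound⟩ := h.exists_nonneg
  rw [isBigOWith_principal] at hbound
  refine isBigO_principal.2 ⟨k.factorial * (C * 2 ^ ε) / r ^ k, ?_⟩
  rintro s ⟨hsa, hsb, hsc⟩
  have hball : ∀ z ∈ Metric.closedBall s r, z ∈ truncStrip a b c ∧ |z.im| ≤ 2 * |s.im| := by
    intro z hz
    have hzs : ‖z - s‖ ≤ r := by simpa [dist_eq_norm] using hz
    have hre := abs_le.1 ((abs_re_le_norm (z - s)).trans hzs)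
    have him := (abs_im_le_norm (z - s)).trans hzs
    simp only [sub_re, sub_im] at hre him
    have hle := abs_sub_abs_le_abs_sub z.im s.im
    have hge := abs_sub_abs_le_abs_sub s.im z.im
    rw [abs_sub_comm] at hge
    exact ⟨⟨by linarith, by linarith, by linarith⟩, by linarith⟩
  have hdiff : DiffContOnCl ℂ f (Metric.ball s r) := by
    refine (hf.mono fun z hz => ?_).diffContOnCl
    exact abs_pos.1 ((hr.trans_le hrc).trans_le
      (hball z (Metric.closure_ball_subset_closedBall hz)).1.2.2)
  refine (norm_iteratedDeriv_le_of_forall_mem_sphere_norm_le (C := C * (2 ^ ε * |s.im| ^ ε)) k hr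
    hdiff fun z hz => ?_).trans_eq ?_
  · obtain ⟨hz1, hz2⟩ := hball z (Metric.sphere_subset_closedBall hz)
    refine (hbound z hz1).trans ?_
    rw [Real.norm_of_nonneg (by positivity), ← Real.mul_rpow zero_le_two (abs_nonneg _)]
    gcongr
  · rw [Real.norm_of_nonneg (by positivity)]
    ring

variable {N : ℕ} [NeZero N]

lemma isBigO_ZMod_LFunction (Φ : ZMod N → ℂ) {b δ : ℝ} (hb : 1 ≤ b) (hδ : 0 < δ)
    (hδ' : δ < 1 / 2) :
    ZMod.LFunction Φ =O[𝓟 (truncStrip (1 - δ) b 1)] fun s => |s.im| ^ (4 * δ) := by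
  have hfactor : (fun s : ℂ => (N : ℂ) ^ (-s)) =O[𝓟 (truncStrip (1 - δ) b 1)] fun _ => (1 : ℝ) := by
    refine isBigO_principal.2 ⟨1, fun s hs => ?_⟩
    rw [norm_one, mul_one, norm_natCast_cpow_of_pos (NeZero.pos N)]
    exact Real.rpow_le_one_of_one_le_of_nonpos (by exact_mod_cast NeZero.pos N)
      (by simpa using by linarith [hs.1])
  have hsum : (fun s => ∑ j : ZMod N, Φ j * HurwitzZeta.hurwitzZeta (ZMod.toAddCircle j) s)
      =O[𝓟 (truncStrip (1 - δ) b 1)] fun s => |s.im| ^ (4 * δ) := by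
    refine .fun_sum fun j _ => .const_mul_left ?_ _
    rw [ZMod.toAddCircle_apply]
    have hle : (j.val : ℝ) ≤ N := by exact_mod_cast (ZMod.val_lt j).le
    exact isBigO_hurwitzZeta ⟨by positivity, div_le_one_of_le₀ hle (by positivity)⟩ hb hδ hδ'
  exact (hfactor.mul hsum).congr (fun _ => rfl) fun _ => one_mul _

lemma differentiableOn_LFunction_im_ne_zero (χ : DirichletCharacter ℂ N) :
    DifferentiableOn ℂ (LFunction χ) {s | s.im ≠ 0} := fun s hs =>
  (differentiableAt_LFunction χ s (.inl fun h => hs (by simp [h]))).differentiableWithinAt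

lemma isBigO_iteratedDeriv_LFunction (χ : DirichletCharacter ℂ N) (k : ℕ) {ε : ℝ} (hε : 0 < ε) :
    iteratedDeriv k (LFunction χ) =O[𝓟 (truncStrip 1 2 2)] fun s => |s.im| ^ ε := by
  set δ := min (ε / 4) (1 / 4)
  have hδ : 0 < δ := by positivity
  have hδε : δ ≤ ε / 4 := min_le_left _ _
  have hδ4 : δ ≤ 1 / 4 := min_le_right _ _
  have hL := isBigO_iteratedDeriv (differentiableOn_LFunction_im_ne_zero χ) (by positivity) hδ
    (by linarith) (isBigO_ZMod_LFunction (χ : ZMod N → ℂ) (b := 3) (by norm_num) hδ (by linarith)) k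
  exact (hL.mono (principal_mono.2 (truncStrip_mono (by linarith) (by linarith)
    (by linarith)))).trans (isBigO_abs_im_rpow_of_le one_le_two (by linarith))

lemma isBigO_LFunction (χ : DirichletCharacter ℂ N) {ε : ℝ} (hε : 0 < ε) :
    LFunction χ =O[𝓟 (truncStrip 1 2 2)] fun s => |s.im| ^ ε := by
  simpa using isBigO_iteratedDeriv_LFunction χ 0 hε

lemma isBigO_deriv_LFunction (χ : DirichletCharacter ℂ N) {ε : ℝ} (hε : 0 < ε) :
    deriv (LFunction χ) =O[𝓟 (truncStrip 1 2 2)] fun s => |s.im| ^ ε := by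
  simpa using isBigO_iteratedDeriv_LFunction χ 1 hε

lemma isBigO_deriv_deriv_LFunction (χ : DirichletCharacter ℂ N) {ε : ℝ} (hε : 0 < ε) :
    deriv (deriv (LFunction χ)) =O[𝓟 (truncStrip 1 2 2)] fun s => |s.im| ^ ε := by
  simpa [iteratedDeriv_succ] using isBigO_iteratedDeriv_LFunction χ 2 hε

variable (N) in
lemma exists_norm_LFunctionTrivChar_le :
    ∃ A, 0 < A ∧ ∀ x : ℝ, 0 < x → x ≤ 1 → ‖LFunctionTrivChar N (1 + x)‖ ≤ A / x := by
  have hcont : Continuous fun x : ℝ => LFunctionTrivChar₁ N (1 + x) :=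
    (differentiable_LFunctionTrivChar₁ N).continuous.comp (by fun_prop)
  obtain ⟨A, hA⟩ := (isCompact_Icc (a := (0 : ℝ)) (b := 1)).exists_bound_of_continuousOn
    hcont.continuousOn
  refine ⟨max A 1, by positivity, fun x hx0 hx1 => ?_⟩
  have hne : (1 + x : ℂ) ≠ 1 := by simpa using hx0.ne'
  have hx := hA x ⟨hx0.le, hx1⟩
  rw [LFunctionTrivChar₁, Function.update_of_ne hne, norm_mul, add_sub_cancel_left, norm_real,
    Real.norm_of_nonneg hx0.le] at hx
  rw [le_div_iff₀' hx0]
  exact hx.trans (le_max_left A 1)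

/-- The `3-4-1` inequality, with the growth bound inserted for `L(χ², ·)`. -/
lemma exists_cube_le_mul_norm_LFunction_pow_four (χ : DirichletCharacter ℂ N) {ε : ℝ}
    (hε : 0 < ε) :
    ∃ D, 1 ≤ D ∧ ∀ x t : ℝ, 0 < x → x ≤ 1 → 2 ≤ |t| →
      x ^ 3 ≤ D * |t| ^ ε * ‖LFunction χ (1 + x + I * t)‖ ^ 4 := by
  obtain ⟨A, hA0, hA⟩ := exists_norm_LFunctionTrivChar_le N
  obtain ⟨B, hB⟩ := isBigO_principal.1 (isBigO_LFunction (χ ^ 2) hε)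
  refine ⟨max 1 (A ^ 3 * B * 2 ^ ε), le_max_left _ _, fun x t hx0 hx1 ht => ?_⟩
  have hsq : ‖LFunction (χ ^ 2) (1 + x + 2 * I * t)‖ ≤ B * (2 ^ ε * |t| ^ ε) := by
    have him : |(1 + (x : ℂ) + 2 * I * t).im| = 2 * |t| := by simp [abs_mul]
    have := hB (1 + x + 2 * I * t)
      ⟨by simp [hx0.le], by simp; linarith, by rw [him]; linarith⟩
    rwa [him, Real.mul_rpow zero_le_two (abs_nonneg t), Real.norm_of_nonneg (by positivity)] at this
  have hprod := norm_LFunction_product_ge_one χ hx0 t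
  rw [norm_mul, norm_mul, norm_pow, norm_pow] at hprod
  calc x ^ 3 ≤ x ^ 3 * ((A / x) ^ 3 * ‖LFunction χ (1 + x + I * t)‖ ^ 4 *
        (B * (2 ^ ε * |t| ^ ε))) := by
        refine le_mul_of_one_le_right (by positivity) (hprod.le.trans ?_)
        gcongr
        exact hA x hx0 hx1
    _ = A ^ 3 * B * 2 ^ ε * |t| ^ ε * ‖LFunction χ (1 + x + I * t)‖ ^ 4 := by field_simp
    _ ≤ _ := by gcongr; exact le_max_right _ _

lemma exists_norm_LFunction_sub_le (χ : DirichletCharacter ℂ N) {ε : ℝ} (hε : 0 < ε) :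
    ∃ B, 1 ≤ B ∧ ∀ x y t : ℝ, x ∈ Set.Icc (0 : ℝ) 1 → y ∈ Set.Icc (0 : ℝ) 1 → 2 ≤ |t| →
      ‖LFunction χ (1 + x + I * t) - LFunction χ (1 + y + I * t)‖ ≤ B * |t| ^ ε * |x - y| := by
  obtain ⟨B, hB⟩ := isBigO_principal.1 (isBigO_deriv_LFunction χ hε)
  refine ⟨max 1 B, le_max_left _ _, fun x y t hx hy ht => ?_⟩
  have hline : ∀ u ∈ Set.Icc (0 : ℝ) 1, 1 + (u : ℂ) + I * t ∈ truncStrip 1 2 2 := fun u hu =>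
    ⟨by simpa using hu.1, by simpa using by linarith [hu.2], by simpa using ht⟩
  refine (convex_Icc (0 : ℝ) 1).norm_image_sub_le_of_norm_hasDerivWithin_le
    (f := fun u : ℝ => LFunction χ (1 + u + I * t))
    (f' := fun u => deriv (LFunction χ) (1 + u + I * t)) (fun u _ => ?_) (fun u hu => ?_) hy hx
  · have hne : 1 + (u : ℂ) + I * t ≠ 1 := fun h => by
      have := congrArg im h
      simp only [add_im, one_im, ofReal_im, mul_im, I_re, zero_mul, I_im, one_mul, ofReal_re,
        zero_add] at this
      simp [this] at ht
      linarith
    have hinner : HasDerivAt (fun u : ℝ => 1 + (u : ℂ) + I * t) 1 u := by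
      simpa using ((ofRealCLM.hasDerivAt (x := u)).const_add 1).add_const (I * t)
    simpa [Function.comp_def] using ((differentiableAt_LFunction χ _ (.inl hne)).hasDerivAt.comp u
      hinner).hasDerivWithinAt
  · refine (hB _ (hline u hu)).trans ?_
    rw [Real.norm_of_nonneg (by positivity)]
    simp only [add_im, one_im, ofReal_im, mul_im, I_re, zero_mul, I_im, one_mul, ofReal_re,
      zero_add]
    gcongr
    exact le_max_right _ _

lemma one_le_mul_of_cube_le_of_lipschitz {f : ℝ → ℝ} {b d : ℝ} (hb : 1 ≤ b) (hd : 1 ≤ d)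
    (hf : ∀ x, 0 ≤ f x) (hcube : ∀ x, 0 < x → x ≤ 1 → x ^ 3 ≤ d * f x ^ 4)
    (hlip : ∀ x ∈ Set.Icc (0 : ℝ) 1, ∀ y ∈ Set.Icc (0 : ℝ) 1, |f x - f y| ≤ b * |x - y|)
    {x : ℝ} (hx : x ∈ Set.Icc (0 : ℝ) 1) : 1 ≤ 16 * b ^ 3 * d * f x := by
  -- The abscissa at which the cubic lower bound is twice the Lipschitz variation down to `0`.
  set x₀ := 1 / (16 * b ^ 4 * d)
  have hx₀ : 0 < x₀ := by positivity
  have hx₀1 : x₀ ≤ 1 := div_le_one_of_le₀ (by nlinarith [one_le_pow₀ hb (n := 4)]) (by positivity)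
  have hlarge : ∀ y, x₀ ≤ y → y ≤ 1 → 2 * b * x₀ ≤ f y := fun y hy hy1 => by
    refine le_of_pow_le_pow_left₀ four_ne_zero (hf y) ?_
    calc (2 * b * x₀) ^ 4 = x₀ ^ 3 / d := by simp only [x₀]; field_simp; norm_num
      _ ≤ y ^ 3 / d := by gcongr
      _ ≤ f y ^ 4 := (div_le_iff₀' (by positivity)).2 (hcube y (hx₀.trans_le hy) hy1)
  suffices b * x₀ ≤ f x by
    calc 1 = 16 * b ^ 3 * d * (b * x₀) := by simp only [x₀]; field_simp
      _ ≤ _ := by gcongr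
  rcases le_total x₀ x with h | h
  · nlinarith [hlarge x h hx.2]
  · have hdiff := (le_abs_self _).trans (hlip x₀ ⟨hx₀.le, hx₀1⟩ x hx)
    rw [abs_of_nonneg (sub_nonneg.2 h)] at hdiff
    nlinarith [hlarge x₀ le_rfl hx₀1, hx.1]

lemma isBigO_inv_LFunction (χ : DirichletCharacter ℂ N) {ε : ℝ} (hε : 0 < ε) :
    (fun s => (LFunction χ s)⁻¹) =O[𝓟 (truncStrip 1 2 2)] fun s => |s.im| ^ ε := by
  obtain ⟨D, hD1, hD⟩ := exists_cube_le_mul_norm_LFunction_pow_four χ (ε := ε / 4) (by positivity)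
  obtain ⟨B, hB1, hB⟩ := exists_norm_LFunction_sub_le χ (ε := ε / 4) (by positivity)
  refine isBigO_principal.2 ⟨16 * B ^ 3 * D, fun s hs => ?_⟩
  have hτ1 : 1 ≤ |s.im| ^ (ε / 4) := Real.one_le_rpow (one_le_two.trans hs.2.2) (by positivity)
  have hτ4 : (|s.im| ^ (ε / 4)) ^ 4 = |s.im| ^ ε := by
    rw [← Real.rpow_mul_natCast (abs_nonneg _)]
    norm_num
  have hlow := one_le_mul_of_cube_le_of_lipschitz
    (f := fun x : ℝ => ‖LFunction χ (1 + x + I * s.im)‖)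
    (one_le_mul_of_one_le_of_one_le hB1 hτ1) (one_le_mul_of_one_le_of_one_le hD1 hτ1)
    (fun _ => norm_nonneg _) (fun x hx0 hx1 => hD x s.im hx0 hx1 hs.2.2)
    (fun x hx y hy => (abs_norm_sub_norm_le _ _).trans (hB x y s.im hx hy hs.2.2))
    (x := s.re - 1) ⟨by linarith [hs.1], by linarith [hs.2.1]⟩
  have hs_eq : 1 + ((s.re - 1 : ℝ) : ℂ) + I * s.im = s := by
    apply Complex.ext <;> simp
  rw [hs_eq] at hlow
  have hpos : 0 < ‖LFunction χ s‖ := (norm_nonneg _).lt_of_ne fun h => by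
    rw [← h, mul_zero] at hlow
    norm_num at hlow
  rw [norm_inv, Real.norm_of_nonneg (by positivity), inv_le_iff_one_le_mul₀ hpos, ← hτ4]
  exact hlow.trans_eq (by ring)

lemma analyticAt_LFunction {χ : DirichletCharacter ℂ N} {s : ℂ} (h : s ≠ 1 ∨ χ ≠ 1) :
    AnalyticAt ℂ (LFunction χ) s := by
  rcases h with hs | hχ
  · refine Complex.analyticAt_iff_eventually_differentiableAt.2 ?_
    filter_upwards [isOpen_ne.mem_nhds hs] with z hz
    exact differentiableAt_LFunction χ z (.inl hz)
  · exact (differentiable_LFunction hχ).analyticAt s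

lemma analyticAt_logDeriv {f : ℂ → ℂ} {s : ℂ} (hf : AnalyticAt ℂ f s) (hs : f s ≠ 0) :
    AnalyticAt ℂ (logDeriv f) s :=
  hf.deriv.div hf hs

lemma isBigO_logDeriv_LFunction (χ : DirichletCharacter ℂ N) {ε : ℝ} (hε : 0 < ε) :
    logDeriv (LFunction χ) =O[𝓟 (truncStrip 1 2 2)] fun s => |s.im| ^ ε := by
  refine ((isBigO_deriv_LFunction χ (half_pos hε)).mul
    (isBigO_inv_LFunction χ (half_pos hε))).congr' (.of_forall fun s => ?_) ?_
  · rw [logDeriv_apply, div_eq_mul_inv]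
  · refine mem_principal.2 fun s hs => ?_
    change |s.im| ^ (ε / 2) * |s.im| ^ (ε / 2) = |s.im| ^ ε
    rw [← Real.rpow_add (by linarith [hs.2.2]), add_halves]

lemma isBigO_deriv_logDeriv_LFunction (χ : DirichletCharacter ℂ N) {ε : ℝ} (hε : 0 < ε) :
    deriv (logDeriv (LFunction χ)) =O[𝓟 (truncStrip 1 2 2)] fun s => |s.im| ^ ε := by
  have hmul : ∀ s ∈ truncStrip 1 2 2, |s.im| ^ (ε / 2) * |s.im| ^ (ε / 2) = |s.im| ^ ε :=
    fun s hs => by rw [← Real.rpow_add (by linarith [hs.2.2]), add_halves]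
  have hsum := ((isBigO_deriv_deriv_LFunction χ (half_pos hε)).mul
    (isBigO_inv_LFunction χ (half_pos hε))).sub
    ((isBigO_logDeriv_LFunction χ (half_pos hε)).mul (isBigO_logDeriv_LFunction χ (half_pos hε)))
  refine hsum.congr' (mem_principal.2 fun s hs => ?_) (mem_principal.2 hmul)
  have hs1 : s ≠ 1 := by
    rintro rfl
    norm_num [truncStrip] at hs
  have hL := analyticAt_LFunction (χ := χ) (.inl hs1)
  have hne := LFunction_ne_zero_of_one_le_re χ (.inr hs1) hs.1
  have hderiv : deriv (fun z => deriv (LFunction χ) z / LFunction χ z) s = _ :=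
    deriv_fun_div hL.deriv.differentiableAt hL.differentiableAt hne
  refine Eq.trans ?_ hderiv.symm
  simp only [logDeriv_apply]
  field_simp

end LFunctionGrowth

section ResidueClassRemainder

open ArithmeticFunction.vonMangoldt Asymptotics Complex DirichletCharacter Topology

variable {q : ℕ} [NeZero q] (a : ZMod q)

/-- The Dirichlet series of `n ↦ Λ(n) 1_{n ≡ a mod q} - 1 / φ(q)` on `1 < re s`, in terms of the
`L`-functions modulo `q`. Subtracting a multiple of `ζ` removes the pole at `1`. -/
noncomputable def residueClassRemainder (s : ℂ) : ℂ :=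
  -(q.totient : ℂ)⁻¹ * ∑ χ : DirichletCharacter ℂ q, χ a⁻¹ * logDeriv (LFunction χ) s -
    (q.totient : ℂ)⁻¹ * riemannZeta s

/-- The analytic continuation of `residueClassRemainder` to a neighbourhood of `1 ≤ re s`. -/
noncomputable def residueClassRemainderAux (s : ℂ) : ℂ :=
  LFunctionResidueClassAux a s - (q.totient : ℂ)⁻¹ * dslope (LFunctionTrivChar₁ 1) 1 s

lemma LFunctionTrivChar₁_ne_zero {s : ℂ} (hs : 1 ≤ s.re) : LFunctionTrivChar₁ q s ≠ 0 := by
  rcases eq_or_ne s 1 with rfl | hs1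
  · exact LFunctionTrivChar₁_apply_one_ne_zero q
  · rw [LFunctionTrivChar₁, Function.update_of_ne hs1]
    exact mul_ne_zero (sub_ne_zero_of_ne hs1) (LFunction_ne_zero_of_one_le_re _ (.inr hs1) hs)

lemma dslope_LFunctionTrivChar₁_one {s : ℂ} (hs : s ≠ 1) :
    dslope (LFunctionTrivChar₁ 1) 1 s = riemannZeta s - 1 / (s - 1) := by
  rw [dslope_of_ne _ hs, slope_def_field, LFunctionTrivChar₁, Function.update_self,
    Function.update_of_ne hs, LFunctionTrivChar, LFunction_modOne_eq]
  have := sub_ne_zero_of_ne hs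
  field_simp
  simp

variable {a} in
lemma residueClassRemainder_eq_LSeries (ha : IsUnit a) {s : ℂ} (hs : 1 < s.re) :
    residueClassRemainder a s =
      LSeries (fun n => (residueClass a n : ℂ)) s - (q.totient : ℂ)⁻¹ * riemannZeta s := by
  simp only [LSeries_residueClass_eq ha hs, residueClassRemainder, logDeriv_apply]

variable {a} in
lemma residueClassRemainder_eq_aux (ha : IsUnit a) {s : ℂ} (hs : 1 < s.re) :
    residueClassRemainder a s = residueClassRemainderAux a s := by
  have hs1 : s ≠ 1 := fun h => by simp [h] at hs
  rw [residueClassRemainderAux, eqOn_LFunctionResidueClassAux ha hs,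
    dslope_LFunctionTrivChar₁_one hs1, residueClassRemainder_eq_LSeries ha hs]
  ring

lemma analyticAt_residueClassRemainderAux {s : ℂ} (hs : 1 ≤ s.re) :
    AnalyticAt ℂ (residueClassRemainderAux a) s := by
  have htriv := (differentiable_LFunctionTrivChar₁ q).analyticAt s
  refine (analyticAt_const.mul ((htriv.deriv.neg.div htriv (LFunctionTrivChar₁_ne_zero hs)).sub
    ?_)).sub (analyticAt_const.mul ?_)
  · refine Finset.analyticAt_fun_sum _ fun χ hχ => ?_
    replace hχ : χ ≠ 1 := by simpa using hχ
    have hL := analyticAt_LFunction (s := s) (.inr hχ)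
    exact (analyticAt_const.mul hL.deriv).div hL (LFunction_ne_zero_of_one_le_re χ (.inl hχ) hs)
  · refine Differentiable.analyticAt (differentiableOn_univ.1 ?_) s
    rw [Complex.differentiableOn_dslope univ_mem]
    exact (differentiable_LFunctionTrivChar₁ 1).differentiableOn

lemma analyticAt_logDeriv_LFunction (χ : DirichletCharacter ℂ q) {s : ℂ} (hs : 1 ≤ s.re)
    (hs1 : s ≠ 1) : AnalyticAt ℂ (logDeriv (LFunction χ)) s :=
  analyticAt_logDeriv (analyticAt_LFunction (.inl hs1))
    (LFunction_ne_zero_of_one_le_re χ (.inr hs1) hs)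

lemma hasDerivAt_residueClassRemainder {s : ℂ} (hs : 1 ≤ s.re) (hs1 : s ≠ 1) :
    HasDerivAt (residueClassRemainder a)
      (-(q.totient : ℂ)⁻¹ * ∑ χ : DirichletCharacter ℂ q,
          χ a⁻¹ * deriv (logDeriv (LFunction χ)) s -
        (q.totient : ℂ)⁻¹ * deriv riemannZeta s) s := by
  refine ((HasDerivAt.fun_sum fun χ _ => ?_).const_mul _).sub
    ((differentiableAt_riemannZeta hs1).hasDerivAt.const_mul _)
  exact (analyticAt_logDeriv_LFunction χ hs hs1).differentiableAt.hasDerivAt.const_mul _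

lemma isBigO_residueClassRemainder {ε : ℝ} (hε : 0 < ε) :
    residueClassRemainder a =O[𝓟 (truncStrip 1 2 2)] fun s => |s.im| ^ ε := by
  refine ((IsBigO.fun_sum fun χ _ => ?_).const_mul_left _).sub (IsBigO.const_mul_left ?_ _)
  · exact (isBigO_logDeriv_LFunction χ hε).const_mul_left _
  · simpa using isBigO_LFunction (1 : DirichletCharacter ℂ 1) hε

lemma isBigO_deriv_residueClassRemainder {ε : ℝ} (hε : 0 < ε) :
    deriv (residueClassRemainder a) =O[𝓟 (truncStrip 1 2 2)] fun s => |s.im| ^ ε := by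
  have hsum : (fun s => -(q.totient : ℂ)⁻¹ * ∑ χ : DirichletCharacter ℂ q,
      χ a⁻¹ * deriv (logDeriv (LFunction χ)) s - (q.totient : ℂ)⁻¹ * deriv riemannZeta s)
      =O[𝓟 (truncStrip 1 2 2)] fun s => |s.im| ^ ε := by
    refine ((IsBigO.fun_sum fun χ _ => ?_).const_mul_left _).sub (IsBigO.const_mul_left ?_ _)
    · exact (isBigO_deriv_logDeriv_LFunction χ hε).const_mul_left _
    · simpa using isBigO_deriv_LFunction (1 : DirichletCharacter ℂ 1) hε
  refine hsum.congr' (mem_principal.2 fun s hs => ?_) .rfl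
  have hs1 : s ≠ 1 := by
    rintro rfl
    norm_num [truncStrip] at hs
  exact (hasDerivAt_residueClassRemainder a hs.1 hs1).deriv.symm

lemma exists_norm_le_of_isBigO_truncStrip {f g : ℂ → ℂ} {ε : ℝ} (hε : 0 < ε)
    (hf : f =O[𝓟 (truncStrip 1 2 2)] fun s => |s.im| ^ ε)
    (hg : ContinuousOn g {s | 1 ≤ s.re}) (hfg : ∀ s : ℂ, 1 < s.re → f s = g s) :
    ∃ C, 0 < C ∧ ∀ s : ℂ, 1 < s.re → s.re ≤ 2 → ‖f s‖ ≤ C * (1 + |s.im|) ^ ε := by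
  obtain ⟨B, hB0, hB⟩ := hf.exists_pos
  rw [isBigOWith_principal] at hB
  have hcompact : IsCompact (Set.Icc (1 : ℝ) 2 ×ℂ Set.Icc (-2 : ℝ) 2) :=
    isCompact_Icc.reProdIm isCompact_Icc
  obtain ⟨M, hM⟩ := hcompact.exists_bound_of_continuousOn (hg.mono fun s hs => hs.1.1)
  refine ⟨max B M, lt_max_of_lt_left hB0, fun s hs1 hs2 => ?_⟩
  rcases le_total |s.im| 2 with him | him
  · rw [hfg s hs1]
    refine (hM s ⟨⟨hs1.le, hs2⟩, abs_le.1 him⟩).trans ((le_max_right B M).trans ?_)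
    exact le_mul_of_one_le_right (hB0.le.trans (le_max_left B M))
      (Real.one_le_rpow (by linarith [abs_nonneg s.im]) hε.le)
  · refine (hB s ⟨hs1.le, hs2, him⟩).trans ?_
    rw [Real.norm_of_nonneg (by positivity)]
    gcongr
    · exact le_max_left B M
    · linarith

variable {a} in
lemma exists_norm_residueClassRemainder_le (ha : IsUnit a) {ε : ℝ} (hε : 0 < ε) :
    ∃ C, 0 < C ∧ ∀ s : ℂ, 1 < s.re → s.re ≤ 2 →
      ‖residueClassRemainder a s‖ ≤ C * (1 + |s.im|) ^ ε :=
  exists_norm_le_of_isBigO_truncStrip hε (isBigO_residueClassRemainder a hε)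
    (fun _ hs => (analyticAt_residueClassRemainderAux a hs).continuousAt.continuousWithinAt)
    fun _ hs => residueClassRemainder_eq_aux ha hs

variable {a} in
lemma exists_norm_deriv_residueClassRemainder_le (ha : IsUnit a) {ε : ℝ} (hε : 0 < ε) :
    ∃ C, 0 < C ∧ ∀ s : ℂ, 1 < s.re → s.re ≤ 2 →
      ‖deriv (residueClassRemainder a) s‖ ≤ C * (1 + |s.im|) ^ ε := by
  refine exists_norm_le_of_isBigO_truncStrip hε (isBigO_deriv_residueClassRemainder a hε)
    (fun s hs => (analyticAt_residueClassRemainderAux a hs).deriv.continuousAt.continuousWithinAt)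
    fun s hs => EventuallyEq.deriv_eq ?_
  filter_upwards [(isOpen_lt continuous_const continuous_re).mem_nhds hs] with z hz
  exact residueClassRemainder_eq_aux ha hz

end ResidueClassRemainder

section RieszMeans

open Complex MeasureTheory Topology

/-- The Mellin transform of `u ↦ (1 - u)₊`, the kernel of the Perron formula for Riesz means. -/
noncomputable def rieszKernel (s : ℂ) : ℂ := 1 / s - 1 / (s + 1)

lemma one_add_im_sq_le_norm_sq {s : ℂ} (hs : 1 ≤ s.re) : 1 + s.im ^ 2 ≤ ‖s‖ ^ 2 := by
  rw [Complex.sq_norm, normSq_apply]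
  nlinarith

lemma ne_zero_of_one_le_re {s : ℂ} (hs : 1 ≤ s.re) : s ≠ 0 := fun h => by
  norm_num [h] at hs

lemma norm_rieszKernel_le {s : ℂ} (hs : 1 ≤ s.re) : ‖rieszKernel s‖ ≤ 1 / (1 + s.im ^ 2) := by
  have hs1 : 1 ≤ (s + 1).re := by simpa using by linarith
  have hprod : rieszKernel s = 1 / (s * (s + 1)) := by
    have := ne_zero_of_one_le_re hs
    have := ne_zero_of_one_le_re hs1
    rw [rieszKernel]
    field_simp
    ring
  rw [hprod, norm_div, norm_one, norm_mul]
  refine one_div_le_one_div_of_le (by positivity) (abs_le_of_sq_le_sq' ?_ (by positivity)).2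
  calc (1 + s.im ^ 2) ^ 2 = (1 + s.im ^ 2) * (1 + (s + 1).im ^ 2) := by simp; ring
    _ ≤ ‖s‖ ^ 2 * ‖s + 1‖ ^ 2 := by
      gcongr
      exacts [one_add_im_sq_le_norm_sq hs, one_add_im_sq_le_norm_sq hs1]
    _ = (‖s‖ * ‖s + 1‖) ^ 2 := by ring

lemma hasDerivAt_rieszKernel {s : ℂ} (hs : 1 ≤ s.re) :
    HasDerivAt rieszKernel (-1 / s ^ 2 - -1 / (s + 1) ^ 2) s := by
  have hs1 : 1 ≤ (s + 1).re := by simpa using by linarith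
  have hleft := (hasDerivAt_id s).fun_inv (ne_zero_of_one_le_re hs)
  have hright := ((hasDerivAt_id s).add_const 1).fun_inv (ne_zero_of_one_le_re hs1)
  exact (hleft.fun_sub hright).congr_of_eventuallyEq (.of_forall fun z => by simp [rieszKernel])

lemma norm_deriv_rieszKernel_le {s : ℂ} (hs : 1 ≤ s.re) :
    ‖deriv rieszKernel s‖ ≤ 2 / (1 + s.im ^ 2) := by
  have hs1 : 1 ≤ (s + 1).re := by simpa using by linarith
  have hright := one_add_im_sq_le_norm_sq hs1
  rw [add_im, one_im, add_zero] at hright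
  rw [(hasDerivAt_rieszKernel hs).deriv]
  refine (norm_sub_le _ _).trans ?_
  rw [norm_div, norm_div, norm_neg, norm_one, norm_pow, norm_pow]
  calc 1 / ‖s‖ ^ 2 + 1 / ‖s + 1‖ ^ 2 ≤ 1 / (1 + s.im ^ 2) + 1 / (1 + s.im ^ 2) := by
        gcongr
        exact one_add_im_sq_le_norm_sq hs
    _ = 2 / (1 + s.im ^ 2) := by ring

lemma continuous_rieszKernel_vertical {σ : ℝ} (hσ : 1 ≤ σ) :
    Continuous fun t : ℝ => rieszKernel (σ + t * I) :=
  continuous_iff_continuousAt.2 fun t =>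
    (hasDerivAt_rieszKernel (s := σ + t * I) (by simpa using hσ)).continuousAt.comp
      (f := fun t : ℝ => (σ + t * I : ℂ)) (by fun_prop)

lemma integrable_rieszKernel_vertical {σ : ℝ} (hσ : 1 ≤ σ) :
    Integrable fun t : ℝ => rieszKernel (σ + t * I) := by
  refine integrable_inv_one_add_sq.mono'
    (continuous_rieszKernel_vertical hσ).aestronglyMeasurable (ae_of_all _ fun t => ?_)
  simpa using norm_rieszKernel_le (s := σ + t * I) (by simpa using hσ)

lemma hasMellin_max_zero_one_sub {s : ℂ} (hs : 0 < s.re) :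
    HasMellin (fun u : ℝ => ((max 0 (1 - u) : ℝ) : ℂ)) s (rieszKernel s) := by
  have hone := hasMellin_one_Ioc hs
  have hid := hasMellin_cpow_Ioc 1 (s := s) (by simpa using by linarith)
  obtain ⟨hconv, heq⟩ := hasMellin_sub hone.1 hid.1
  have hcongr : Set.EqOn (fun u : ℝ => (u : ℂ) ^ (s - 1) •
      ((Set.Ioc 0 1).indicator (fun _ => (1 : ℂ)) u -
        (Set.Ioc 0 1).indicator (fun v : ℝ => (v : ℂ) ^ (1 : ℂ)) u))
      (fun u : ℝ => (u : ℂ) ^ (s - 1) • ((max 0 (1 - u) : ℝ) : ℂ)) (Set.Ioi 0) := by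
    intro u hu
    by_cases hu1 : u ≤ 1
    · have hmem : u ∈ Set.Ioc (0 : ℝ) 1 := ⟨hu, hu1⟩
      simp [Set.indicator_of_mem hmem, hu1]
    · have hmem : u ∉ Set.Ioc (0 : ℝ) 1 := fun h => hu1 h.2
      simp [Set.indicator_of_notMem hmem, (not_le.1 hu1).le]
  refine ⟨hconv.congr_fun hcongr measurableSet_Ioi, ?_⟩
  rw [mellin, ← setIntegral_congr_fun measurableSet_Ioi hcongr]
  exact heq.trans (by rw [hone.2, hid.2, rieszKernel])

lemma integral_cpow_mul_rieszKernel {σ x : ℝ} (hσ : 1 ≤ σ) (hx : 0 < x) :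
    ∫ t : ℝ, (x : ℂ) ^ (-(σ + t * I : ℂ)) * rieszKernel (σ + t * I) =
      2 * Real.pi * ((max 0 (1 - x) : ℝ) : ℂ) := by
  have hmellin (t : ℝ) : mellin (fun u : ℝ => ((max 0 (1 - u) : ℝ) : ℂ)) (σ + t * I) =
      rieszKernel (σ + t * I) :=
    (hasMellin_max_zero_one_sub (by simpa using by linarith)).2
  have hinv := mellinInv_mellin_eq σ (fun u : ℝ => ((max 0 (1 - u) : ℝ) : ℂ)) hx
    (hasMellin_max_zero_one_sub (by simpa using by linarith)).1
    (by simpa only [VerticalIntegrable, hmellin] using integrable_rieszKernel_vertical hσ)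
    (by fun_prop)
  simp only [mellinInv, hmellin, smul_eq_mul, Complex.real_smul] at hinv
  have hpi : (2 * Real.pi : ℂ) * ((1 / (2 * Real.pi) : ℝ) : ℂ) = 1 := by
    exact_mod_cast mul_one_div_cancel Real.two_pi_pos.ne'
  rw [← hinv, ← mul_assoc, hpi, one_mul]

lemma continuous_term_vertical (a : ℕ → ℂ) (σ : ℝ) (n : ℕ) :
    Continuous fun t : ℝ => LSeries.term a (σ + t * I) n := by
  rcases eq_or_ne n 0 with rfl | hn
  · simpa only [LSeries.term_zero] using continuous_const
  · have hnc : (n : ℂ) ≠ 0 := by exact_mod_cast hn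
    simp only [LSeries.term_of_ne_zero hn]
    exact continuous_const.div (.const_cpow (by fun_prop) (.inl hnc))
      fun t => by simp [cpow_eq_zero_iff, hnc]

lemma integral_term_mul_rieszKernel {a : ℕ → ℂ} (ha0 : a 0 = 0) {σ y : ℝ} (hσ : 1 ≤ σ)
    (hy : 0 < y) (n : ℕ) :
    ∫ t : ℝ, LSeries.term a (σ + t * I) n * rieszKernel (σ + t * I) * (y : ℂ) ^ (σ + t * I : ℂ) =
      2 * Real.pi * (a n * ((max 0 (1 - n / y) : ℝ) : ℂ)) := by
  rcases eq_or_ne n 0 with rfl | hn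
  · simp [ha0]
  have hn0 : (0 : ℝ) < n := by exact_mod_cast Nat.pos_of_ne_zero hn
  rw [mul_left_comm, ← integral_cpow_mul_rieszKernel hσ (div_pos hn0 hy), ← integral_const_mul]
  congr 1
  ext t
  rw [Complex.ofReal_div, Complex.div_cpow_ofReal_nonneg hn0.le hy.le, cpow_neg, cpow_neg,
    LSeries.term_of_ne_zero hn, ofReal_natCast]
  have hyc : (y : ℂ) ≠ 0 := by exact_mod_cast hy.ne'
  have hnpow : (n : ℂ) ^ (σ + t * I : ℂ) ≠ 0 := by simp [cpow_eq_zero_iff, hn]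
  have hypow : (y : ℂ) ^ (σ + t * I : ℂ) ≠ 0 := by simp [cpow_eq_zero_iff, hyc]
  field_simp

lemma hasSum_rieszMean {a : ℕ → ℂ} (ha0 : a 0 = 0) {σ y : ℝ} (hσ : 1 ≤ σ) (hy : 0 < y)
    (ha : LSeriesSummable a σ) :
    HasSum (fun n : ℕ => 2 * Real.pi * (a n * ((max 0 (1 - n / y) : ℝ) : ℂ)))
      (∫ t : ℝ, LSeries a (σ + t * I) * rieszKernel (σ + t * I) * (y : ℂ) ^ (σ + t * I : ℂ)) := by
  set F : ℕ → ℝ → ℂ := fun n t =>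
    LSeries.term a (σ + t * I) n * rieszKernel (σ + t * I) * (y : ℂ) ^ (σ + t * I : ℂ)
  have hF_norm (n t) : ‖F n t‖ = ‖LSeries.term a σ n‖ * y ^ σ * ‖rieszKernel (σ + t * I)‖ := by
    simp only [F, norm_mul, norm_cpow_eq_rpow_re_of_pos hy, LSeries.norm_term_eq]
    simp only [add_re, ofReal_re, mul_re, I_re, mul_zero, ofReal_im, I_im, mul_one, sub_self,
      add_zero]
    ring
  have hF_int (n) : Integrable (F n) := by
    refine ((integrable_rieszKernel_vertical hσ).norm.const_mul
      (‖LSeries.term a σ n‖ * y ^ σ)).mono' (Continuous.aestronglyMeasurable ?_)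
      (ae_of_all _ fun t => (hF_norm n t).le)
    refine ((continuous_term_vertical a σ n).mul (continuous_rieszKernel_vertical hσ)).mul ?_
    exact .const_cpow (by fun_prop) (.inl (by exact_mod_cast hy.ne'))
  have hsum := hasSum_integral_of_summable_integral_norm hF_int <| by
    simp only [hF_norm, integral_const_mul]
    exact (ha.norm.mul_right _).mul_right _
  simp only [F, tsum_mul_right, integral_term_mul_rieszKernel ha0 hσ hy] at hsum
  exact hsum

lemma hasDerivAt_vertical (σ t : ℝ) : HasDerivAt (fun t : ℝ => (σ + t * I : ℂ)) I t := by
  have : HasDerivAt (fun t : ℝ => (t : ℂ)) 1 t := Complex.ofRealCLM.hasDerivAt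
  simpa using (this.mul_const I).const_add (σ : ℂ)

lemma norm_integral_mul_cpow_le {u u' : ℝ → ℂ} (hderiv : ∀ t, HasDerivAt u (u' t) t)
    (hu : Integrable u) (hu' : Integrable u') {y : ℝ} (hy : 1 < y) (σ : ℝ) :
    ‖∫ t : ℝ, u t * (y : ℂ) ^ (σ + t * I : ℂ)‖ ≤ y ^ σ / Real.log y * ∫ t, ‖u' t‖ := by
  have hy0 : 0 < y := one_pos.trans hy
  have hyc : (y : ℂ) ≠ 0 := by exact_mod_cast hy0.ne'
  have hlog : 0 < Real.log y := Real.log_pos hy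
  have hlogc : I * Real.log y ≠ 0 := by simp [hlog.ne']
  set w : ℝ → ℂ := fun t => (y : ℂ) ^ (σ + t * I : ℂ)
  set v : ℝ → ℂ := fun t => w t / (I * Real.log y)
  have hw_norm (t) : ‖w t‖ = y ^ σ := by simp [w, norm_cpow_eq_rpow_re_of_pos hy0]
  have hv_norm (t) : ‖v t‖ = y ^ σ / Real.log y := by simp [v, hw_norm, abs_of_pos hlog]
  have hv_deriv (t) : HasDerivAt v (w t) t := by
    have hcpow := ((hasDerivAt_id (σ + t * I : ℂ)).const_cpow (c := (y : ℂ)) (.inl hyc)).comp t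
      (hasDerivAt_vertical σ t)
    refine (hcpow.div_const (I * Real.log y)).congr_deriv ?_
    rw [div_eq_iff hlogc, Complex.ofReal_log hy0.le]
    simp only [w, id]
    ring
  have hw_cont : Continuous w := .const_cpow (by fun_prop) (.inl hyc)
  have hv_cont : Continuous v := hw_cont.div_const _
  have hparts := integral_mul_deriv_eq_deriv_mul_of_integrable (fun t _ => hderiv t)
    (fun t _ => hv_deriv t)
    (hu.mul_bdd hw_cont.aestronglyMeasurable (ae_of_all _ fun t => (hw_norm t).le))
    (hu'.mul_bdd hv_cont.aestronglyMeasurable (ae_of_all _ fun t => (hv_norm t).le))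
    (hu.mul_bdd hv_cont.aestronglyMeasurable (ae_of_all _ fun t => (hv_norm t).le))
  rw [hparts, norm_neg]
  refine (norm_integral_le_integral_norm _).trans_eq ?_
  simp only [norm_mul, hv_norm, integral_mul_const, mul_comm]

lemma one_add_abs_rpow_half_div_le (t : ℝ) :
    (1 + |t|) ^ (1 / 2 : ℝ) / (1 + t ^ 2) ≤ 2 * (1 + |t|) ^ (-(3 / 2) : ℝ) := by
  have hsplit : (1 + |t|) ^ (1 / 2 : ℝ) = (1 + |t|) ^ (-(3 / 2) : ℝ) * (1 + |t|) ^ 2 := by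
    rw [← Real.rpow_natCast, ← Real.rpow_add (by positivity)]
    norm_num
  have hsq : (1 + |t|) ^ 2 ≤ 2 * (1 + t ^ 2) := by nlinarith [sq_abs t, sq_nonneg (1 - |t|)]
  rw [div_le_iff₀ (by positivity), hsplit]
  calc (1 + |t|) ^ (-(3 / 2) : ℝ) * (1 + |t|) ^ 2
      ≤ (1 + |t|) ^ (-(3 / 2) : ℝ) * (2 * (1 + t ^ 2)) := by gcongr
    _ = _ := by ring

lemma integrable_one_add_abs_rpow_neg : Integrable fun t : ℝ => (1 + |t|) ^ (-(3 / 2) : ℝ) := by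
  simpa using integrable_one_add_norm (E := ℝ) (μ := volume) (r := 3 / 2) (by norm_num)

section Growth

variable {F : ℂ → ℂ} {C σ : ℝ}

lemma norm_mul_rieszKernel_vertical_le
    (hF : ∀ s : ℂ, 1 < s.re → s.re ≤ 2 → ‖F s‖ ≤ C * (1 + |s.im|) ^ (1 / 2 : ℝ))
    (hC : 0 < C) (hσ : 1 < σ) (hσ2 : σ ≤ 2) (t : ℝ) :
    ‖F (σ + t * I) * rieszKernel (σ + t * I)‖ ≤ 2 * C * (1 + |t|) ^ (-(3 / 2) : ℝ) := by
  have hFt := hF (σ + t * I) (by simpa using hσ) (by simpa using hσ2)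
  have hKt := norm_rieszKernel_le (s := σ + t * I) (by simpa using hσ.le)
  simp only [add_im, ofReal_im, mul_im, ofReal_re, I_im, mul_one, I_re, mul_zero, add_zero,
    zero_add] at hFt hKt
  rw [norm_mul]
  calc _ ≤ C * (1 + |t|) ^ (1 / 2 : ℝ) * (1 / (1 + t ^ 2)) := by gcongr
    _ = C * ((1 + |t|) ^ (1 / 2 : ℝ) / (1 + t ^ 2)) := by ring
    _ ≤ C * (2 * (1 + |t|) ^ (-(3 / 2) : ℝ)) := by gcongr; exact one_add_abs_rpow_half_div_le t
    _ = _ := by ring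

lemma norm_deriv_mul_rieszKernel_vertical_le
    (hF : ∀ s : ℂ, 1 < s.re → s.re ≤ 2 → ‖F s‖ ≤ C * (1 + |s.im|) ^ (1 / 2 : ℝ))
    (hF' : ∀ s : ℂ, 1 < s.re → s.re ≤ 2 → ‖deriv F s‖ ≤ C * (1 + |s.im|) ^ (1 / 2 : ℝ))
    (hC : 0 < C) (hσ : 1 < σ) (hσ2 : σ ≤ 2) (t : ℝ) :
    ‖deriv F (σ + t * I) * I * rieszKernel (σ + t * I) +
      F (σ + t * I) * (deriv rieszKernel (σ + t * I) * I)‖ ≤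
      6 * C * (1 + |t|) ^ (-(3 / 2) : ℝ) := by
  have hleft := norm_mul_rieszKernel_vertical_le hF' hC hσ hσ2 t
  have hFt := hF (σ + t * I) (by simpa using hσ) (by simpa using hσ2)
  have hKt := norm_deriv_rieszKernel_le (s := σ + t * I) (by simpa using hσ.le)
  simp only [add_im, ofReal_im, mul_im, ofReal_re, I_im, mul_one, I_re, mul_zero, add_zero,
    zero_add] at hFt hKt
  refine (norm_add_le _ _).trans ?_
  simp only [norm_mul, norm_I, mul_one] at hleft ⊢
  have hright : ‖F (σ + t * I)‖ * ‖deriv rieszKernel (σ + t * I)‖ ≤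
      4 * C * (1 + |t|) ^ (-(3 / 2) : ℝ) := by
    calc _ ≤ C * (1 + |t|) ^ (1 / 2 : ℝ) * (2 / (1 + t ^ 2)) := by gcongr
      _ = 2 * C * ((1 + |t|) ^ (1 / 2 : ℝ) / (1 + t ^ 2)) := by ring
      _ ≤ 2 * C * (2 * (1 + |t|) ^ (-(3 / 2) : ℝ)) := by
        gcongr
        exact one_add_abs_rpow_half_div_le t
      _ = _ := by ring
  linarith

lemma hasDerivAt_mul_rieszKernel_vertical
    (hdiff : ∀ s : ℂ, 1 < s.re → DifferentiableAt ℂ F s) (hσ : 1 < σ) (t : ℝ) :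
    HasDerivAt (fun t : ℝ => F (σ + t * I) * rieszKernel (σ + t * I))
      (deriv F (σ + t * I) * I * rieszKernel (σ + t * I) +
        F (σ + t * I) * (deriv rieszKernel (σ + t * I) * I)) t := by
  have hre : 1 < (σ + t * I : ℂ).re := by simpa using hσ
  have hkernel := (hasDerivAt_rieszKernel hre.le).differentiableAt.hasDerivAt
  have hF_comp := (hdiff _ hre).hasDerivAt.comp t (hasDerivAt_vertical σ t)
  have hkernel_comp := hkernel.comp t (hasDerivAt_vertical σ t)
  exact hF_comp.mul hkernel_comp

end Growth

lemma rpow_one_add_inv_log {y : ℝ} (hy : 1 < y) :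
    y ^ (1 + 1 / Real.log y) = Real.exp 1 * y := by
  have hy0 : 0 < y := one_pos.trans hy
  rw [Real.rpow_add hy0, Real.rpow_one, mul_comm, Real.rpow_def_of_pos hy0,
    mul_one_div_cancel (Real.log_pos hy).ne']

lemma exists_norm_integral_mul_rieszKernel_le {F : ℂ → ℂ} {C : ℝ} (hC : 0 < C)
    (hdiff : ∀ s : ℂ, 1 < s.re → DifferentiableAt ℂ F s)
    (hF : ∀ s : ℂ, 1 < s.re → s.re ≤ 2 → ‖F s‖ ≤ C * (1 + |s.im|) ^ (1 / 2 : ℝ))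
    (hF' : ∀ s : ℂ, 1 < s.re → s.re ≤ 2 → ‖deriv F s‖ ≤ C * (1 + |s.im|) ^ (1 / 2 : ℝ)) :
    ∃ D, 0 < D ∧ ∀ y σ : ℝ, Real.exp 1 ≤ y → σ = 1 + 1 / Real.log y →
      ‖∫ t : ℝ, F (σ + t * I) * rieszKernel (σ + t * I) * (y : ℂ) ^ (σ + t * I : ℂ)‖ ≤
        D * y / Real.log y := by
  set J := ∫ t : ℝ, (1 + |t|) ^ (-(3 / 2) : ℝ)
  refine ⟨Real.exp 1 * (6 * C * J + 1), by positivity, fun y σ hy hσ_eq => ?_⟩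
  have hy1 : 1 < y := (Real.one_lt_exp_iff.2 one_pos).trans_le hy
  have hlog : 1 ≤ Real.log y := (Real.le_log_iff_exp_le (by linarith)).2 hy
  have hσ : 1 < σ := by rw [hσ_eq]; simpa using by linarith
  have hσ2 : σ ≤ 2 := by
    rw [hσ_eq]
    linarith [div_le_one_of_le₀ hlog (by linarith)]
  have hderiv := hasDerivAt_mul_rieszKernel_vertical hdiff hσ
  have hu := (integrable_one_add_abs_rpow_neg.const_mul (2 * C)).mono'
    (continuous_iff_continuousAt.2 fun t => (hderiv t).continuousAt).aestronglyMeasurable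
    (ae_of_all _ (norm_mul_rieszKernel_vertical_le hF hC hσ hσ2))
  have hu'_le := norm_deriv_mul_rieszKernel_vertical_le hF hF' hC hσ hσ2
  have hu' := (integrable_one_add_abs_rpow_neg.const_mul (6 * C)).mono'
    ((funext fun t => (hderiv t).deriv) ▸ (measurable_deriv _).aestronglyMeasurable)
    (ae_of_all _ hu'_le)
  refine (norm_integral_mul_cpow_le hderiv hu hu' hy1 σ).trans ?_
  rw [hσ_eq, rpow_one_add_inv_log hy1]
  have hintegral : (∫ t : ℝ, _) ≤ 6 * C * J + 1 :=
    (integral_mono hu'.norm (integrable_one_add_abs_rpow_neg.const_mul (6 * C)) hu'_le).trans <| by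
      rw [integral_const_mul]
      exact (lt_add_one _).le
  rw [← hσ_eq]
  calc _ ≤ Real.exp 1 * y / Real.log y * (6 * C * J + 1) := by gcongr
    _ = _ := by ring

/-- Shifting the line of integration to `re s = 1 + 1 / log y` costs only a factor `e` in
`|y ^ s|`, and one integration by parts gains the factor `1 / log y`. -/
lemma exists_abs_rieszMean_le {a : ℕ → ℝ} (ha0 : a 0 = 0) {F : ℂ → ℂ} {C : ℝ} (hC : 0 < C)
    (ha : ∀ s : ℂ, 1 < s.re → LSeriesSummable (fun n => (a n : ℂ)) s)
    (haF : ∀ s : ℂ, 1 < s.re → LSeries (fun n => (a n : ℂ)) s = F s)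
    (hdiff : ∀ s : ℂ, 1 < s.re → DifferentiableAt ℂ F s)
    (hF : ∀ s : ℂ, 1 < s.re → s.re ≤ 2 → ‖F s‖ ≤ C * (1 + |s.im|) ^ (1 / 2 : ℝ))
    (hF' : ∀ s : ℂ, 1 < s.re → s.re ≤ 2 → ‖deriv F s‖ ≤ C * (1 + |s.im|) ^ (1 / 2 : ℝ)) :
    ∃ D, 0 < D ∧ ∀ y : ℝ, Real.exp 1 ≤ y → ∀ N : ℕ, y ≤ N →
      |∑ n ∈ Finset.range N, a n * max 0 (1 - n / y)| ≤ D * y / Real.log y := by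
  obtain ⟨D, hD, hintegral⟩ := exists_norm_integral_mul_rieszKernel_le hC hdiff hF hF'
  refine ⟨D, hD, fun y hy N hN => ?_⟩
  have hy0 : 0 < y := (Real.exp_pos 1).trans_le hy
  have hlog : 1 ≤ Real.log y := (Real.le_log_iff_exp_le hy0).2 hy
  have hσ : 1 < 1 + 1 / Real.log y := by simpa using by linarith
  have hperron := hasSum_rieszMean (a := fun n => (a n : ℂ)) (by simp [ha0]) hσ.le hy0
    (ha _ (by simpa using by linarith))
  have hLSeries (t : ℝ) := haF ((1 + 1 / Real.log y : ℝ) + t * I) (by simpa using by linarith)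
  simp only [hLSeries] at hperron
  have hfinite := hasSum_sum_of_ne_finset_zero (L := .unconditional ℕ) (s := Finset.range N)
    (f := fun n : ℕ => 2 * Real.pi * ((a n : ℂ) * ((max 0 (1 - n / y) : ℝ) : ℂ))) fun n hn => by
      have hNn : (N : ℝ) ≤ n := by exact_mod_cast (by simpa using hn : N ≤ n)
      have hneg : 1 - n / y ≤ 0 := sub_nonpos.2 ((one_le_div hy0).2 (hN.trans hNn))
      simp [max_eq_left hneg]
  have hbound := hintegral y _ hy rfl
  rw [hperron.unique hfinite, ← Finset.mul_sum, norm_mul] at hbound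
  have hcast : ‖∑ n ∈ Finset.range N, (a n : ℂ) * ((max 0 (1 - n / y) : ℝ) : ℂ)‖ =
      |∑ n ∈ Finset.range N, a n * max 0 (1 - n / y)| := by
    rw [← Real.norm_eq_abs, ← Complex.norm_real]
    push_cast
    rfl
  have htwoPi : 1 ≤ ‖(2 * Real.pi : ℂ)‖ := by
    simp only [norm_mul, norm_ofNat, norm_real, Real.norm_eq_abs, abs_of_pos Real.pi_pos]
    linarith [Real.pi_gt_three]
  rw [← hcast]
  exact (le_mul_of_one_le_left (norm_nonneg _) htwoPi).trans hbound

end RieszMeans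

section PrimesInResidueClasses

open ArithmeticFunction.vonMangoldt

lemma max_zero_sub_one_le_half_sq_sub (d : ℝ) :
    max 0 (d - 1) ≤ max 0 d ^ 2 / 2 - max 0 (d - 1) ^ 2 / 2 := by
  rcases le_total d 0 with hd | hd
  · simp [max_eq_left hd, max_eq_left (by linarith : d - 1 ≤ 0)]
  rcases le_total d 1 with hd1 | hd1
  · rw [max_eq_right hd, max_eq_left (by linarith)]
    nlinarith
  · rw [max_eq_right hd, max_eq_right (by linarith)]
    nlinarith

lemma half_sq_sub_le_max_zero (d : ℝ) :
    max 0 d ^ 2 / 2 - max 0 (d - 1) ^ 2 / 2 ≤ max 0 d := by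
  rcases le_total d 0 with hd | hd
  · simp [max_eq_left hd, max_eq_left (by linarith : d - 1 ≤ 0)]
  rcases le_total d 1 with hd1 | hd1
  · rw [max_eq_right hd, max_eq_left (by linarith)]
    nlinarith
  · rw [max_eq_right hd, max_eq_right (by linarith)]
    nlinarith

lemma sum_range_half_sq_sub {y : ℝ} (hy : 0 ≤ y) {N : ℕ} (hN : y ≤ N) :
    ∑ n ∈ Finset.range N, (max 0 (y - n) ^ 2 / 2 - max 0 (y - n - 1) ^ 2 / 2) = y ^ 2 / 2 := by
  have htelescope := Finset.sum_range_sub' (fun n : ℕ => max 0 (y - n) ^ 2 / 2) N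
  simp only [Nat.cast_add, Nat.cast_one, ← sub_sub, Nat.cast_zero, sub_zero, max_eq_right hy,
    max_eq_left (sub_nonpos.2 hN)] at htelescope
  simpa using htelescope

lemma abs_sum_max_zero_sub_sub_half_sq_le {y : ℝ} (hy : 0 ≤ y) {N : ℕ} (hN : y ≤ N) :
    |∑ n ∈ Finset.range N, (if n = 0 then 0 else 1) * max 0 (y - n) - y ^ 2 / 2| ≤ y := by
  have hdrop : ∑ n ∈ Finset.range N, (if n = 0 then 0 else 1) * max 0 (y - n) =
      ∑ n ∈ Finset.range N, max 0 (y - n) - y := by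
    rcases N with - | N
    · simp [le_antisymm (by simpa using hN) hy]
    · simp [Finset.sum_range_succ', max_eq_right hy]
  have hshift : ∑ n ∈ Finset.range N, max 0 (y - n) ≤
      ∑ n ∈ Finset.range N, max 0 (y - n - 1) + y := by
    have hsucc := Finset.sum_range_succ' (fun n : ℕ => max 0 (y - n)) N
    rw [Finset.sum_range_succ] at hsucc
    simp only [Nat.cast_add, Nat.cast_one, ← sub_sub, Nat.cast_zero, sub_zero,
      max_eq_right hy] at hsucc
    linarith [le_max_left 0 (y - N)]
  have hlower := Finset.sum_le_sum fun n (_ : n ∈ Finset.range N) =>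
    max_zero_sub_one_le_half_sq_sub (y - n)
  have hupper := Finset.sum_le_sum fun n (_ : n ∈ Finset.range N) =>
    half_sq_sub_le_max_zero (y - n)
  rw [sum_range_half_sq_sub hy hN] at hlower hupper
  rw [hdrop, abs_le]
  constructor <;> linarith

lemma log_sq_le_sixteen_mul_sqrt {y : ℝ} (hy : 1 ≤ y) : Real.log y ^ 2 ≤ 16 * √y := by
  have hy0 : 0 ≤ y := zero_le_one.trans hy
  calc Real.log y ^ 2 ≤ (y ^ (1 / 4 : ℝ) / (1 / 4)) ^ 2 := by
        gcongr
        exacts [Real.log_nonneg hy, Real.log_le_rpow_div hy0 (by norm_num)]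
    _ = 16 * √y := by
        rw [Real.sqrt_eq_rpow, div_pow, ← Real.rpow_natCast, ← Real.rpow_mul hy0]
        norm_num
        ring

lemma psi_sub_theta_le {y : ℝ} (hy : 1 < y) :
    Chebyshev.psi y - Chebyshev.theta y ≤ 32 * y / Real.log y := by
  have hlog : 0 < Real.log y := Real.log_pos hy
  rw [le_div_iff₀ hlog]
  calc (Chebyshev.psi y - Chebyshev.theta y) * Real.log y
      ≤ 2 * √y * Real.log y * Real.log y := by
        gcongr
        exact (le_abs_self _).trans (Chebyshev.abs_psi_sub_theta_le_sqrt_mul_log hy.le)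
    _ = 2 * √y * Real.log y ^ 2 := by ring
    _ ≤ 2 * √y * (16 * √y) := by
        gcongr
        exact log_sq_le_sixteen_mul_sqrt hy.le
    _ = 32 * y := by linear_combination 32 * Real.mul_self_sqrt (by linarith : 0 ≤ y)

variable {q : ℕ} {a : ZMod q}

/-- The primes below `N` in the residue class `a`. -/
def primesInClass (a : ZMod q) (N : ℕ) : Finset ℕ :=
  {p ∈ Finset.range N | p.Prime ∧ (p : ZMod q) = a}

lemma sum_primesInClass (f : ℕ → ℝ) (N : ℕ) :
    ∑ p ∈ primesInClass a N, f p =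
      ∑ n ∈ Finset.range N, if n.Prime ∧ (n : ZMod q) = a then f n else 0 :=
  Finset.sum_filter ..

lemma abs_residueClass_mul_sub_le {y : ℝ} (hy : 0 ≤ y) (n : ℕ) :
    |residueClass a n * max 0 (y - n) -
        if n.Prime ∧ (n : ZMod q) = a then Real.log n * max 0 (y - n) else 0| ≤
      if n ≤ ⌊y⌋₊ then y * (ArithmeticFunction.vonMangoldt n - if n.Prime then Real.log n else 0)
      else 0 := by
  rcases lt_or_ge ⌊y⌋₊ n with hn | hn
  · simp [max_eq_left (sub_nonpos.2 (Nat.lt_of_floor_lt hn).le), hn.not_ge]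
  have hle : max 0 (y - n) ≤ y := max_le hy (by linarith [n.cast_nonneg (α := ℝ)])
  have hΛ : 0 ≤ ArithmeticFunction.vonMangoldt n := ArithmeticFunction.vonMangoldt_nonneg
  by_cases ha : (n : ZMod q) = a <;> by_cases hp : n.Prime
  · simp [residueClass, ha, hp, hn, ArithmeticFunction.vonMangoldt_apply_prime hp]
  · simp only [residueClass, Set.indicator_apply, Set.mem_ofPred_eq, ha, hp, hn, if_true, if_false,
      false_and, sub_zero]
    rw [abs_of_nonneg (by positivity), mul_comm]
    gcongr
  · simp [residueClass, ha, hp, hn, ArithmeticFunction.vonMangoldt_apply_prime hp]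
  · simp [residueClass, ha, hp, hn, mul_nonneg hy hΛ]

lemma abs_sum_residueClass_sub_sum_primesInClass_le {y : ℝ} (hy : 1 < y) (N : ℕ) :
    |∑ n ∈ Finset.range N, residueClass a n * max 0 (y - n) -
      ∑ p ∈ primesInClass a N, Real.log p * max 0 (y - p)| ≤ 32 * y ^ 2 / Real.log y := by
  have hy0 : 0 ≤ y := by linarith
  have hexcess : ∑ n ∈ Finset.Icc 0 ⌊y⌋₊,
      (ArithmeticFunction.vonMangoldt n - if n.Prime then Real.log n else 0) =
        Chebyshev.psi y - Chebyshev.theta y := by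
    rw [Chebyshev.psi_eq_sum_Icc, Chebyshev.theta_eq_sum_Icc, Finset.sum_filter,
      ← Finset.sum_sub_distrib]
  have hterm (n : ℕ) :
      0 ≤ y * (ArithmeticFunction.vonMangoldt n - if n.Prime then Real.log n else 0) := by
    refine mul_nonneg hy0 ?_
    split_ifs with hp
    · rw [ArithmeticFunction.vonMangoldt_apply_prime hp, sub_self]
    · simp
  rw [sum_primesInClass, ← Finset.sum_sub_distrib]
  calc _ ≤ ∑ n ∈ Finset.range N, if n ≤ ⌊y⌋₊ then
          y * (ArithmeticFunction.vonMangoldt n - if n.Prime then Real.log n else 0) else 0 :=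
        (Finset.abs_sum_le_sum_abs _ _).trans
          (Finset.sum_le_sum fun n _ => abs_residueClass_mul_sub_le hy0 n)
    _ ≤ ∑ n ∈ Finset.Icc 0 ⌊y⌋₊,
          y * (ArithmeticFunction.vonMangoldt n - if n.Prime then Real.log n else 0) := by
        rw [← Finset.sum_filter]
        exact Finset.sum_le_sum_of_subset_of_nonneg (fun n hn => by simp_all) fun n _ _ => hterm n
    _ = y * (Chebyshev.psi y - Chebyshev.theta y) := by rw [← Finset.mul_sum, hexcess]
    _ ≤ y * (32 * y / Real.log y) := by gcongr; exact psi_sub_theta_le hy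
    _ = 32 * y ^ 2 / Real.log y := by ring

/-- The deviation of the von Mangoldt function on a residue class from its mean value; it vanishes
at `0`, as Riesz means and `L`-series require. -/
noncomputable def residueClassDeviation (a : ZMod q) (n : ℕ) : ℝ :=
  residueClass a n - (q.totient : ℝ)⁻¹ * if n = 0 then 0 else 1

lemma residueClassDeviation_zero : residueClassDeviation a 0 = 0 := by
  simp [residueClassDeviation]

lemma LSeriesSummable_residueClass {s : ℂ} (hs : 1 < s.re) :
    LSeriesSummable (fun n => (residueClass a n : ℂ)) s :=
  LSeriesSummable_of_abscissaOfAbsConv_lt_re <|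
    (abscissaOfAbsConv_residueClass_le_one a).trans_lt (by exact_mod_cast hs)

variable [NeZero q]

lemma LSeriesHasSum_residueClassDeviation (ha : IsUnit a) {s : ℂ} (hs : 1 < s.re) :
    LSeriesHasSum (fun n => (residueClassDeviation a n : ℂ)) s (residueClassRemainder a s) := by
  have hone : LSeriesHasSum 1 s (riemannZeta s) := LSeriesHasSum_one hs
  have hclass := (LSeriesSummable_residueClass (a := a) hs).LSeriesHasSum
  rw [residueClassRemainder_eq_LSeries ha hs]
  refine (LSeriesHasSum_congr s _ (fun {n} hn => ?_)).1
    (hclass.sub (hone.smul (q.totient : ℂ)⁻¹))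
  simp [residueClassDeviation, hn]

lemma exists_abs_sum_residueClassDeviation_le (ha : IsUnit a) :
    ∃ C, 0 < C ∧ ∀ y : ℝ, Real.exp 1 ≤ y → ∀ N : ℕ, y ≤ N →
      |∑ n ∈ Finset.range N, residueClassDeviation a n * max 0 (1 - n / y)| ≤
        C * y / Real.log y := by
  obtain ⟨C, hC, hF⟩ := exists_norm_residueClassRemainder_le ha one_half_pos
  obtain ⟨C', hC', hF'⟩ := exists_norm_deriv_residueClassRemainder_le ha one_half_pos
  refine exists_abs_rieszMean_le residueClassDeviation_zero (add_pos hC hC')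
    (fun s hs => (LSeriesHasSum_residueClassDeviation ha hs).LSeriesSummable)
    (fun s hs => (LSeriesHasSum_residueClassDeviation ha hs).LSeries_eq)
    (fun s hs => (hasDerivAt_residueClassRemainder a hs.le
      fun h => by simp [h] at hs).differentiableAt)
    (fun s hs hs2 => (hF s hs hs2).trans ?_) fun s hs hs2 => (hF' s hs hs2).trans ?_
  all_goals gcongr; linarith

lemma exists_abs_sum_residueClass_sub_le (ha : IsUnit a) :
    ∃ C, 0 < C ∧ ∀ y : ℝ, Real.exp 1 ≤ y → ∀ N : ℕ, y ≤ N →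
      |∑ n ∈ Finset.range N, residueClass a n * max 0 (y - n) - y ^ 2 / (2 * q.totient)| ≤
        C * y ^ 2 / Real.log y := by
  obtain ⟨C, hC, hdev⟩ := exists_abs_sum_residueClassDeviation_le ha
  refine ⟨C + 1, by positivity, fun y hy N hN => ?_⟩
  have hy0 : 0 < y := (Real.exp_pos 1).trans_le hy
  have hlog : 0 < Real.log y := one_pos.trans_le ((Real.le_log_iff_exp_le hy0).2 hy)
  have htotient : (q.totient : ℝ)⁻¹ ≤ 1 :=
    inv_le_one_of_one_le₀ (by exact_mod_cast Nat.totient_pos.2 (NeZero.pos q))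
  set meanSum := ∑ n ∈ Finset.range N, (if n = 0 then 0 else 1) * max 0 (y - n)
  have hdecomp : ∑ n ∈ Finset.range N, residueClass a n * max 0 (y - n) =
      y * ∑ n ∈ Finset.range N, residueClassDeviation a n * max 0 (1 - n / y) +
        (q.totient : ℝ)⁻¹ * meanSum := by
    rw [Finset.mul_sum, Finset.mul_sum, ← Finset.sum_add_distrib]
    refine Finset.sum_congr rfl fun n _ => ?_
    have hscale : max 0 (y - n) = y * max 0 (1 - n / y) := by
      rw [mul_max_of_nonneg _ _ hy0.le, mul_zero, mul_sub, mul_one, mul_div_cancel₀ _ hy0.ne']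
    rw [hscale, residueClassDeviation]
    ring
  have hmean : |(q.totient : ℝ)⁻¹ * (meanSum - y ^ 2 / 2)| ≤ y ^ 2 / Real.log y := by
    rw [abs_mul, abs_of_nonneg (by positivity)]
    calc _ ≤ 1 * y := by gcongr; exact abs_sum_max_zero_sub_sub_half_sq_le hy0.le hN
      _ ≤ y ^ 2 / Real.log y := by
        rw [le_div_iff₀ hlog]
        nlinarith [Real.log_le_self hy0.le]
  calc _ = |y * ∑ n ∈ Finset.range N, residueClassDeviation a n * max 0 (1 - n / y) +
        (q.totient : ℝ)⁻¹ * (meanSum - y ^ 2 / 2)| := by rw [hdecomp]; congr 1; ring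
    _ ≤ y * (C * y / Real.log y) + y ^ 2 / Real.log y := by
      refine (abs_add_le _ _).trans (add_le_add ?_ hmean)
      rw [abs_mul, abs_of_pos hy0]
      gcongr
      exact hdev y hy N hN
    _ = (C + 1) * y ^ 2 / Real.log y := by ring

lemma exists_abs_sum_primesInClass_sub_le (ha : IsUnit a) :
    ∃ C, 0 < C ∧ ∀ y : ℝ, Real.exp 1 ≤ y → ∀ N : ℕ, y ≤ N →
      |∑ p ∈ primesInClass a N, Real.log p * max 0 (y - p) - y ^ 2 / (2 * q.totient)| ≤
        C * y ^ 2 / Real.log y := by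
  obtain ⟨C, hC, hΛ⟩ := exists_abs_sum_residueClass_sub_le ha
  refine ⟨C + 32, by positivity, fun y hy N hN => ?_⟩
  have hy1 : 1 < y := (Real.one_lt_exp_iff.2 one_pos).trans_le hy
  rw [add_mul, add_div, add_comm]
  exact (abs_sub_le _ _ _).trans (add_le_add
    ((abs_sub_comm _ _).trans_le (abs_sum_residueClass_sub_sum_primesInClass_le hy1 N))
    (hΛ y hy N hN))

end PrimesInResidueClasses

section SumOfTwoSquares

lemma gaussianInt_norm_eq (z : GaussianInt) : z.norm = z.re ^ 2 + z.im ^ 2 := by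
  rw [Zsqrtd.norm_def]
  ring

/-- The Gaussian integers of norm `n`, in bijection with the representations of `n` as a sum of
two squares. -/
def normSphere (n : ℕ) : Set GaussianInt := {z | z.norm = n}

lemma mem_normSphere {n : ℕ} {z : GaussianInt} : z ∈ normSphere n ↔ z.norm = n := Iff.rfl

lemma r2_eq_ncard_normSphere (n : ℕ) : r2 n = (normSphere n).ncard :=
  Nat.card_congr
    { toFun := fun p => ⟨⟨p.1.1, p.1.2⟩, (gaussianInt_norm_eq _).trans p.2⟩
      invFun := fun z => ⟨(z.1.re, z.1.im), (gaussianInt_norm_eq _).symm.trans z.2⟩ }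

lemma finite_normSphere (n : ℕ) : (normSphere n).Finite := by
  have hbox : (Set.Icc (-(n : ℤ)) n ×ˢ Set.Icc (-(n : ℤ)) n).Finite :=
    (Set.finite_Icc _ _).prod (Set.finite_Icc _ _)
  refine (hbox.image fun p => (⟨p.1, p.2⟩ : GaussianInt)).subset fun z hz => ?_
  rw [mem_normSphere, gaussianInt_norm_eq] at hz
  have hre : |z.re| ≤ n := (Int.le_self_sq _).trans (by rw [sq_abs]; linarith [sq_nonneg z.im])
  have him : |z.im| ≤ n := (Int.le_self_sq _).trans (by rw [sq_abs]; linarith [sq_nonneg z.re])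
  exact ⟨(z.re, z.im), ⟨abs_le.1 hre, abs_le.1 him⟩, rfl⟩

lemma normSphere_one :
    normSphere 1 = {⟨1, 0⟩, ⟨-1, 0⟩, ⟨0, 1⟩, ⟨0, -1⟩} := by
  ext ⟨x, y⟩
  simp only [mem_normSphere, gaussianInt_norm_eq, Set.mem_insert_iff, Set.mem_singleton_iff,
    Zsqrtd.ext_iff, Nat.cast_one]
  refine ⟨fun h => ?_, by rintro (⟨rfl, rfl⟩ | ⟨rfl, rfl⟩ | ⟨rfl, rfl⟩ | ⟨rfl, rfl⟩) <;> norm_num⟩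
  have hx : |x| ≤ 1 := abs_le_one_iff_mul_self_le_one.2 (by nlinarith)
  have hy : |y| ≤ 1 := abs_le_one_iff_mul_self_le_one.2 (by nlinarith)
  rw [abs_le] at hx hy
  obtain ⟨hx₁, hx₂⟩ := hx
  obtain ⟨hy₁, hy₂⟩ := hy
  interval_cases x <;> interval_cases y <;> simp_all

lemma r2_one : r2 1 = 4 := by
  rw [r2_eq_ncard_normSphere, normSphere_one, Set.ncard_insert_of_notMem,
    Set.ncard_insert_of_notMem, Set.ncard_pair]
  all_goals simp [Zsqrtd.ext_iff]

lemma r2_zero : r2 0 = 1 := by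
  have hzero : normSphere 0 = {0} := by
    ext z
    rw [mem_normSphere, Nat.cast_zero, GaussianInt.norm_eq_zero, Set.mem_singleton_iff]
  rw [r2_eq_ncard_normSphere, hzero, Set.ncard_singleton]

lemma ncard_normSphere_dvd {w : GaussianInt} {k : ℕ} (hk : k ≠ 0) (hw : w.norm = k) (n : ℕ) :
    {z ∈ normSphere (k * n) | w ∣ z}.ncard = r2 n := by
  have hw0 : w ≠ 0 := by
    rintro rfl
    exact hk (by simpa using hw.symm)
  have himage : {z ∈ normSphere (k * n) | w ∣ z} = (w * ·) '' normSphere n := by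
    ext z
    constructor
    · rintro ⟨hz, u, rfl⟩
      refine ⟨u, ?_, rfl⟩
      rw [mem_normSphere, Zsqrtd.norm_mul, hw, Nat.cast_mul] at hz
      exact mul_left_cancel₀ (by exact_mod_cast hk) hz
    · rintro ⟨u, hu, rfl⟩
      refine ⟨?_, dvd_mul_right _ _⟩
      rw [mem_normSphere, Zsqrtd.norm_mul, hw, mem_normSphere.1 hu, Nat.cast_mul]
  rw [himage, Set.ncard_image_of_injective _ (mul_right_injective₀ hw0), r2_eq_ncard_normSphere]

lemma natCast_eq_mul_star {n : ℕ} {z : GaussianInt} (hz : z.norm = n) :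
    (n : GaussianInt) = z * star z := by
  rw [← Zsqrtd.norm_eq_mul_conj, hz, Int.cast_natCast]

lemma dvd_or_star_dvd_of_mem_normSphere {w z : GaussianInt} {n : ℕ} (hw : Prime w)
    (hwn : w ∣ n) (hz : z ∈ normSphere n) : w ∣ z ∨ star w ∣ z := by
  rw [natCast_eq_mul_star hz] at hwn
  refine (hw.dvd_or_dvd hwn).imp_right fun ⟨u, hu⟩ => ⟨star u, ?_⟩
  rw [← star_mul', ← hu, star_star]

lemma prime_of_norm_eq_prime {w : GaussianInt} {p : ℕ} (hp : p.Prime) (hw : w.norm = p) :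
    Prime w := by
  refine Irreducible.prime (irreducible_iff.2 ⟨fun h => ?_, fun a b hab => ?_⟩)
  · rw [← Zsqrtd.norm_eq_one_iff, hw, Int.natAbs_natCast] at h
    exact hp.ne_one h
  · have hmul : a.norm.natAbs * b.norm.natAbs = p := by
      rw [← Int.natAbs_mul, ← Zsqrtd.norm_mul, ← hab, hw, Int.natAbs_natCast]
    have := (Nat.irreducible_iff_prime.2 hp.prime).isUnit_or_isUnit hmul.symm
    simpa only [Nat.isUnit_iff, Zsqrtd.norm_eq_one_iff] using this

lemma r2_two_mul (n : ℕ) : r2 (2 * n) = r2 n := by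
  set w : GaussianInt := ⟨1, 1⟩
  have hw : w.norm = (2 : ℕ) := rfl
  have hwstar : w ∣ star w := ⟨⟨0, -1⟩, rfl⟩
  rw [← ncard_normSphere_dvd two_ne_zero hw n, r2_eq_ncard_normSphere]
  congr 1
  refine (Set.sep_eq_self_iff_mem_true.2 fun z hz => ?_).symm
  have hwn : w ∣ (2 * n : ℕ) := by
    rw [Nat.cast_mul, natCast_eq_mul_star hw]
    exact (dvd_mul_right _ _).mul_right _
  exact (dvd_or_star_dvd_of_mem_normSphere (prime_of_norm_eq_prime Nat.prime_two hw) hwn hz).elim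
    id hwstar.trans

lemma r2_two_pow_mul (k n : ℕ) : r2 (2 ^ k * n) = r2 n := by
  induction k with
  | zero => simp
  | succ k ih => rw [pow_succ', mul_assoc, r2_two_mul, ih]

section OddPrime

variable {p : ℕ}

lemma not_star_dvd_self {w : GaussianInt} (hp : p.Prime) (hp2 : p ≠ 2) (hw : w.norm = p) :
    ¬star w ∣ w := by
  intro h
  have hpZ : Prime (p : ℤ) := Nat.prime_iff_prime_int.1 hp
  obtain ⟨u, hu⟩ : star w ∣ ((2 * w.re : ℤ) : GaussianInt) := by
    have htrace : ((2 * w.re : ℤ) : GaussianInt) = w + star w := by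
      ext <;> simp [two_mul]
    exact htrace ▸ dvd_add h dvd_rfl
  have hre : (p : ℤ) ∣ w.re := by
    have hnorm := congrArg Zsqrtd.norm hu
    rw [Zsqrtd.norm_mul, Zsqrtd.norm_conj, hw, Zsqrtd.norm_intCast] at hnorm
    have hdvd : (p : ℤ) ∣ 2 * w.re := (hpZ.dvd_or_dvd ⟨_, hnorm⟩).elim id id
    refine (hpZ.dvd_or_dvd hdvd).resolve_left fun h2 => hp2 ?_
    exact (Nat.prime_dvd_prime_iff_eq hp Nat.prime_two).1 (by exact_mod_cast h2)
  rw [gaussianInt_norm_eq] at hw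
  have him : (p : ℤ) ∣ w.im := by
    refine hpZ.dvd_of_dvd_pow (n := 2) ?_
    rw [eq_sub_of_add_eq' hw]
    exact dvd_sub dvd_rfl (dvd_pow hre two_ne_zero)
  have hsq := dvd_add (pow_dvd_pow_of_dvd hre 2) (pow_dvd_pow_of_dvd him 2)
  rw [hw] at hsq
  exact one_lt_two.not_ge ((Nat.pow_dvd_pow_iff_le_right (l := 1) hp.one_lt).1
    (by simpa using (by exact_mod_cast hsq : p ^ 2 ∣ p)))

/-- Inclusion–exclusion over the two conjugate Gaussian primes above `p`. -/
lemma r2_mul_add_of_mod_four_eq_one (hp : p.Prime) (hp1 : p % 4 = 1) (n : ℕ) :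
    r2 (p * n) + {z ∈ normSphere (p * n) | (p : GaussianInt) ∣ z}.ncard = 2 * r2 n := by
  have := Fact.mk hp
  obtain ⟨x, y, hxy⟩ := Nat.Prime.sq_add_sq (p := p) (by omega)
  set w : GaussianInt := ⟨x, y⟩
  have hw : w.norm = p := (gaussianInt_norm_eq w).trans (by simp only [w]; exact_mod_cast hxy)
  have hw' : (star w).norm = p := (Zsqrtd.norm_conj w).trans hw
  have hpw : (p : GaussianInt) = w * star w := natCast_eq_mul_star hw
  have hunion : normSphere (p * n) =
      {z ∈ normSphere (p * n) | w ∣ z} ∪ {z ∈ normSphere (p * n) | star w ∣ z} := by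
    rw [← Set.sep_or]
    refine (Set.sep_eq_self_iff_mem_true.2 fun z hz => ?_).symm
    refine dvd_or_star_dvd_of_mem_normSphere (prime_of_norm_eq_prime hp hw) ?_ hz
    rw [Nat.cast_mul, hpw]
    exact (dvd_mul_right _ _).mul_right _
  have hinter : {z ∈ normSphere (p * n) | (p : GaussianInt) ∣ z} =
      {z ∈ normSphere (p * n) | w ∣ z} ∩ {z ∈ normSphere (p * n) | star w ∣ z} := by
    rw [← Set.sep_and]
    refine Set.sep_ext_iff.2 fun z _ => ⟨fun h => ?_, fun ⟨⟨u, hu⟩, h⟩ => ?_⟩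
    · exact ⟨(Dvd.intro _ hpw.symm).trans h, (Dvd.intro_left _ hpw.symm).trans h⟩
    · rw [hu] at h ⊢
      rw [hpw]
      exact mul_dvd_mul_left w <| ((prime_of_norm_eq_prime hp hw').dvd_or_dvd h).resolve_left
        (not_star_dvd_self hp (by omega) hw)
  have hcard := Set.ncard_union_add_ncard_inter {z ∈ normSphere (p * n) | w ∣ z}
    {z ∈ normSphere (p * n) | star w ∣ z} ((finite_normSphere _).subset fun z hz => hz.1)
    ((finite_normSphere _).subset fun z hz => hz.1)
  rw [← hunion, ← hinter, ncard_normSphere_dvd hp.ne_zero hw, ncard_normSphere_dvd hp.ne_zero hw',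
    ← r2_eq_ncard_normSphere] at hcard
  rw [hcard, two_mul]

lemma r2_mul_of_mod_four_eq_three (hp : p.Prime) (hp3 : p % 4 = 3) (n : ℕ) :
    r2 (p * n) = {z ∈ normSphere (p * n) | (p : GaussianInt) ∣ z}.ncard := by
  have := Fact.mk hp
  rw [r2_eq_ncard_normSphere]
  congr 1
  refine (Set.sep_eq_self_iff_mem_true.2 fun z hz => ?_).symm
  have hprime := GaussianInt.prime_of_nat_prime_of_mod_four_eq_three p hp3
  simpa using dvd_or_star_dvd_of_mem_normSphere hprime (by simp) hz

lemma ncard_normSphere_mul_mul_natCast_dvd (hp : p ≠ 0) (n : ℕ) :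
    {z ∈ normSphere (p * (p * n)) | (p : GaussianInt) ∣ z}.ncard = r2 n := by
  rw [← mul_assoc]
  exact ncard_normSphere_dvd (mul_ne_zero hp hp) (by simp) n

lemma normSphere_mul_natCast_dvd_eq_empty {n : ℕ} (hp : p ≠ 0) (hn : ¬p ∣ n) :
    {z ∈ normSphere (p * n) | (p : GaussianInt) ∣ z} = ∅ := by
  refine Set.eq_empty_of_forall_notMem ?_
  rintro - ⟨hz, u, rfl⟩
  rw [mem_normSphere, Zsqrtd.norm_mul, Zsqrtd.norm_natCast, Nat.cast_mul, mul_assoc] at hz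
  have hcancel := mul_left_cancel₀ (by exact_mod_cast hp) hz
  exact hn (Int.natCast_dvd_natCast.1 ⟨_, hcancel.symm⟩)

lemma r2_pow_mul_of_mod_four_eq_one (hp : p.Prime) (hp1 : p % 4 = 1) {n : ℕ} (hn : ¬p ∣ n)
    (k : ℕ) : r2 (p ^ k * n) = (k + 1) * r2 n := by
  induction k using Nat.twoStepInduction with
  | zero => simp
  | one =>
    have hone := r2_mul_add_of_mod_four_eq_one hp hp1 n
    rw [normSphere_mul_natCast_dvd_eq_empty hp.ne_zero hn] at hone
    simpa using hone
  | more k ih ih' =>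
    have hrec := r2_mul_add_of_mod_four_eq_one hp hp1 (p * (p ^ k * n))
    rw [ncard_normSphere_mul_mul_natCast_dvd hp.ne_zero, ← mul_assoc p (p ^ k), ← pow_succ',
      ← mul_assoc, ← pow_succ', ih, ih'] at hrec
    linarith

lemma r2_pow_mul_of_mod_four_eq_three (hp : p.Prime) (hp3 : p % 4 = 3) {n : ℕ} (hn : ¬p ∣ n)
    (k : ℕ) : r2 (p ^ k * n) = 0 ∨ r2 (p ^ k * n) = r2 n := by
  induction k using Nat.twoStepInduction with
  | zero => simp
  | one =>
    simp [r2_mul_of_mod_four_eq_three hp hp3, normSphere_mul_natCast_dvd_eq_empty hp.ne_zero hn]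
  | more k ih _ =>
    rwa [pow_succ', pow_succ', mul_assoc, mul_assoc, r2_mul_of_mod_four_eq_three hp hp3,
      ncard_normSphere_mul_mul_natCast_dvd hp.ne_zero]

end OddPrime

/-- The number of divisors of `n` composed of primes `p ≡ 1 (mod 4)`, those that split in the
Gaussian integers. -/
noncomputable def splitDivisorCount (n : ℕ) : ℕ :=
  n.factorization.prod fun p k => if p % 4 = 1 then k + 1 else 1

lemma splitDivisorCount_prime_pow_mul {p k n : ℕ} (hp : p.Prime) (hn : ¬p ∣ n) :
    splitDivisorCount (p ^ k * n) = (if p % 4 = 1 then k + 1 else 1) * splitDivisorCount n := by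
  have hcoprime : Nat.Coprime (p ^ k) n := ((hp.coprime_iff_not_dvd).2 hn).pow_left k
  rw [splitDivisorCount, Nat.factorization_mul_of_coprime hcoprime,
    Finsupp.prod_add_index_of_disjoint, hp.factorization_pow, Finsupp.prod_single_index (by simp),
    splitDivisorCount]
  rw [Nat.support_factorization, Nat.support_factorization]
  exact hcoprime.disjoint_primeFactors

lemma r2_eq_zero_or_eq {n : ℕ} (hn : n ≠ 0) : r2 n = 0 ∨ r2 n = 4 * splitDivisorCount n := by
  induction n using Nat.recOnPrimePow with
  | zero => exact absurd rfl hn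
  | one => simp [r2_one, splitDivisorCount]
  | prime_pow_mul a p k hp hpa _ ih =>
    specialize ih (right_ne_zero_of_mul hn)
    rw [splitDivisorCount_prime_pow_mul hp hpa]
    obtain rfl | hp1 | hp3 : p = 2 ∨ p % 4 = 1 ∨ p % 4 = 3 := by
      have := hp.eq_two_or_odd
      omega
    · simpa [r2_two_pow_mul] using ih
    · rw [r2_pow_mul_of_mod_four_eq_one hp hp1 hpa, if_pos hp1, mul_left_comm]
      exact ih.imp (by simp_all) (by simp_all)
    · rw [if_neg (by omega), one_mul]
      rcases r2_pow_mul_of_mod_four_eq_three hp hp3 hpa k with h | h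
      · exact .inl h
      · rwa [h]

lemma r2_eq_of_forall_mod_four_ne_three {n : ℕ} (hn : n ≠ 0)
    (h3 : ∀ p, p.Prime → p ∣ n → p % 4 ≠ 3) : r2 n = 4 * splitDivisorCount n := by
  induction n using Nat.recOnPrimePow with
  | zero => exact absurd rfl hn
  | one => simp [r2_one, splitDivisorCount]
  | prime_pow_mul a p k hp hpa hk ih =>
    specialize ih (right_ne_zero_of_mul hn) fun q hq hqa => h3 q hq (hqa.mul_left _)
    rw [splitDivisorCount_prime_pow_mul hp hpa]
    obtain rfl | hp1 : p = 2 ∨ p % 4 = 1 := by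
      have := hp.eq_two_or_odd
      have := h3 p hp ((dvd_pow_self p hk.ne').mul_right _)
      omega
    · simpa [r2_two_pow_mul] using ih
    · rw [r2_pow_mul_of_mod_four_eq_one hp hp1 hpa, if_pos hp1, mul_left_comm, ih]

end SumOfTwoSquares

section LogStep

/-- The increment `log (l + 2) - log (l + 1)`: the gain in `log (v + 1)` when the exponent `v` of a
prime is raised from `l` to `l + 1`. -/
noncomputable def logStep (l : ℕ) : ℝ := Real.log (1 + 1 / ((l : ℝ) + 1))

lemma logStep_le (l : ℕ) : logStep l ≤ 1 / ((l : ℝ) + 1) := by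
  simpa [logStep] using Real.log_le_sub_one_of_pos (x := 1 + 1 / ((l : ℝ) + 1)) (by positivity)

lemma logStep_pos (l : ℕ) : 0 < logStep l :=
  Real.log_pos (lt_add_of_pos_right 1 (by positivity))

lemma antitone_logStep : Antitone logStep := fun a b hab => by
  unfold logStep
  gcongr

lemma logStep_le_one (l : ℕ) : logStep l ≤ 1 :=
  (antitone_logStep l.zero_le).trans (by simpa using logStep_le 0)

lemma sum_range_logStep (b : ℕ) : ∑ l ∈ Finset.range b, logStep l = Real.log (b + 1) := by
  induction b with
  | zero => simp
  | succ b ih =>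
    rw [Finset.sum_range_succ, ih, logStep, ← Real.log_mul (by positivity) (by positivity)]
    congr 1
    push_cast
    field_simp

lemma sum_logStep_le_log_card_add_one (B : Finset ℕ) :
    ∑ l ∈ B, logStep l ≤ Real.log (B.card + 1) := by
  induction B using Finset.induction_on_max with
  | empty => simp
  | insert a s hlt ih =>
    have ha : a ∉ s := fun h => (hlt a h).false
    have hcard : s.card ≤ a := by
      simpa using Finset.card_le_card fun i hi => Finset.mem_range.2 (hlt i hi)
    rw [Finset.sum_insert ha, Finset.card_insert_of_notMem ha, ← sum_range_logStep,
      Finset.sum_range_succ, sum_range_logStep, add_comm]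
    exact add_le_add ih (antitone_logStep hcard)

lemma summable_logStep_rpow {r : ℝ} (hr : 1 < r) : Summable fun l : ℕ => logStep l ^ r := by
  have hr0 : 0 ≤ r := by linarith
  have hmajorant := (summable_nat_add_iff 1).2 (Real.summable_one_div_nat_rpow.2 hr)
  refine hmajorant.of_nonneg_of_le (fun l => Real.rpow_nonneg (logStep_pos l).le _) fun l => ?_
  calc logStep l ^ r ≤ (1 / ((l : ℝ) + 1)) ^ r :=
        Real.rpow_le_rpow (logStep_pos l).le (logStep_le l) hr0
    _ = 1 / ((l + 1 : ℕ) : ℝ) ^ r := by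
        rw [Real.div_rpow zero_le_one (by positivity), Real.one_rpow, Nat.cast_succ]

lemma summable_logStep_sq : Summable fun l : ℕ => logStep l ^ 2 := by
  simpa using summable_logStep_rpow one_lt_two

/-- The sum `∑ log (1 + 1 / l) ^ 2` over `l ≥ 1`, so that `cBEFS ^ 2 = 8 * logStepSqSum`. -/
noncomputable def logStepSqSum : ℝ := ∑' l : ℕ, logStep l ^ 2

lemma logStepSqSum_pos : 0 < logStepSqSum :=
  summable_logStep_sq.tsum_pos (fun _ => sq_nonneg _) 0 (pow_pos (logStep_pos 0) 2)

lemma sum_range_logStep_sq_le (N : ℕ) : ∑ l ∈ Finset.range N, logStep l ^ 2 ≤ logStepSqSum :=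
  summable_logStep_sq.sum_le_tsum _ fun _ _ => sq_nonneg _

lemma sum_range_logStep_add_sq_le {N : ℕ} (hN : 0 < N) (n : ℕ) :
    ∑ i ∈ Finset.range n, logStep (i + N) ^ 2 ≤ 1 / (N : ℝ) - 1 / ((N : ℝ) + n) := by
  have hN0 : (0 : ℝ) < N := Nat.cast_pos.2 hN
  induction n with
  | zero => simp
  | succ n ih =>
    have hterm : logStep (n + N) ^ 2 ≤ 1 / ((N : ℝ) + n) - 1 / ((N : ℝ) + (n + 1 : ℕ)) := by
      refine (pow_le_pow_left₀ (logStep_pos _).le (logStep_le _) 2).trans ?_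
      push_cast
      rw [div_sub_div _ _ (by positivity) (by positivity), div_pow,
        div_le_div_iff₀ (by positivity) (by positivity)]
      nlinarith
    rw [Finset.sum_range_succ]
    linarith

lemma logStepSqSum_sub_sum_range_le {N : ℕ} (hN : 0 < N) :
    logStepSqSum - ∑ l ∈ Finset.range N, logStep l ^ 2 ≤ 1 / (N : ℝ) := by
  have htail : ∑' i, logStep (i + N) ^ 2 ≤ 1 / (N : ℝ) :=
    Real.tsum_le_of_sum_range_le (fun _ => sq_nonneg _) fun n =>
      (sum_range_logStep_add_sq_le hN n).trans (sub_le_self _ (by positivity))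
  rw [logStepSqSum, ← summable_logStep_sq.sum_add_tsum_nat_add N]
  linarith

lemma cBEFS_div_sqrt_two : cBEFS / √2 = 2 * √logStepSqSum := by
  change √(8 * logStepSqSum) / √2 = _
  rw [← Real.sqrt_div' _ zero_le_two, show 8 * logStepSqSum / 2 = 2 ^ 2 * logStepSqSum by ring,
    Real.sqrt_mul (by norm_num), Real.sqrt_sq zero_le_two]

end LogStep

section SplitPrimes

/-- The primes `p ≡ 1 [MOD 4]` below `N`, i.e. those that split in the Gaussian integers. -/
def splitPrimes (N : ℕ) : Finset ℕ := {p ∈ Finset.range N | p.Prime ∧ p % 4 = 1}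

lemma mem_splitPrimes {p N : ℕ} : p ∈ splitPrimes N ↔ p < N ∧ p.Prime ∧ p % 4 = 1 := by
  simp [splitPrimes]

lemma five_le_of_prime_of_mod_four_eq_one {p : ℕ} (hp : p.Prime) (hp1 : p % 4 = 1) : 5 ≤ p := by
  have := hp.two_le
  omega

lemma five_le_of_mem_splitPrimes {p N : ℕ} (hp : p ∈ splitPrimes N) : (5 : ℝ) ≤ p := by
  obtain ⟨-, hprime, hp1⟩ := mem_splitPrimes.1 hp
  exact_mod_cast five_le_of_prime_of_mod_four_eq_one hprime hp1

lemma primesInClass_one_eq_splitPrimes (N : ℕ) : primesInClass (1 : ZMod 4) N = splitPrimes N := by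
  refine Finset.filter_congr fun p _ => and_congr_right fun _ => ?_
  rw [← Nat.cast_one, ZMod.natCast_eq_natCast_iff']

lemma exists_abs_sum_splitPrimes_sub_le :
    ∃ C, 0 < C ∧ ∀ y : ℝ, Real.exp 1 ≤ y → ∀ N : ℕ, y ≤ N →
      |∑ p ∈ splitPrimes N, Real.log p * max 0 (y - p) - y ^ 2 / 4| ≤ C * y ^ 2 / Real.log y := by
  obtain ⟨C, hC, hsum⟩ := exists_abs_sum_primesInClass_sub_le (q := 4) isUnit_one
  refine ⟨C, hC, fun y hy N hN => ?_⟩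
  have htotient : 2 * (Nat.totient 4 : ℝ) = 4 := by
    rw [show Nat.totient 4 = 2 by decide]
    norm_num
  simpa only [primesInClass_one_eq_splitPrimes, htotient] using hsum y hy N hN

lemma sum_splitPrimes_eq_zero {y : ℝ} (hy : y ≤ 5) (N : ℕ) :
    ∑ p ∈ splitPrimes N, Real.log p * max 0 (y - p) = 0 :=
  Finset.sum_eq_zero fun p hp => by
    rw [max_eq_left (by linarith [five_le_of_mem_splitPrimes hp]), mul_zero]

lemma exists_abs_sum_splitPrimes_sub_le_mul_sq :
    ∃ C, 0 < C ∧ ∀ y : ℝ, 0 < y → ∀ N : ℕ, y ≤ N →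
      |∑ p ∈ splitPrimes N, Real.log p * max 0 (y - p) - y ^ 2 / 4| ≤ C * y ^ 2 := by
  obtain ⟨C, hC, hsum⟩ := exists_abs_sum_splitPrimes_sub_le
  refine ⟨C + 1, by positivity, fun y hy N hN => ?_⟩
  rcases le_or_gt (Real.exp 1) y with hye | hye
  · have hlog : 1 ≤ Real.log y := (Real.le_log_iff_exp_le hy).2 hye
    calc _ ≤ C * y ^ 2 / Real.log y := hsum y hye N hN
      _ ≤ C * y ^ 2 := div_le_self (by positivity) hlog
      _ ≤ (C + 1) * y ^ 2 := by gcongr; linarith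
  · rw [sum_splitPrimes_eq_zero (by linarith [Real.exp_one_lt_d9]), zero_sub, abs_neg,
      abs_of_nonneg (by positivity)]
    nlinarith [sq_nonneg y]

lemma card_filter_cast_le_le {S : Finset ℕ} {c : ℝ} (hS : ∀ q ∈ S, 0 < q) (hc : 0 ≤ c) :
    ((S.filter fun q : ℕ => (q : ℝ) ≤ c).card : ℝ) ≤ c := by
  have hsub : (S.filter fun q : ℕ => (q : ℝ) ≤ c) ⊆ Finset.Ioc 0 ⌊c⌋₊ := fun q hq => by
    rw [Finset.mem_filter] at hq
    exact Finset.mem_Ioc.2 ⟨hS q hq.1, Nat.le_floor hq.2⟩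
  have hcard := Finset.card_le_card hsub
  rw [Nat.card_Ioc, Nat.sub_zero] at hcard
  exact (Nat.cast_le.2 hcard).trans (Nat.floor_le hc)

lemma card_filter_cast_lt_le {S : Finset ℕ} {c : ℝ} (hS : ∀ q ∈ S, 0 < q) (hc : 0 ≤ c) :
    ((S.filter fun q : ℕ => (q : ℝ) < c).card : ℝ) ≤ c :=
  (Nat.cast_le.2 (Finset.card_le_card (Finset.monotone_filter_right S fun _ _ h => h.le))).trans
    (card_filter_cast_le_le hS hc)

lemma exists_le_card_splitPrimes_lt :
    ∃ y₀ : ℝ, 3 ≤ y₀ ∧ ∀ y : ℝ, y₀ ≤ y → ∀ N : ℕ, y ≤ N →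
      y / (5 * Real.log y) ≤ ((splitPrimes N).filter fun q : ℕ => (q : ℝ) < y).card := by
  obtain ⟨C, hC, hsum⟩ := exists_abs_sum_splitPrimes_sub_le
  refine ⟨max 3 (Real.exp (20 * C + 1)), le_max_left _ _, fun y hy N hN => ?_⟩
  obtain ⟨hy3, hye⟩ := max_le_iff.1 hy
  have hy0 : 0 < y := by linarith
  have hlog : 20 * C + 1 ≤ Real.log y := (Real.le_log_iff_exp_le hy0).2 hye
  have hlog0 : 0 < Real.log y := by linarith
  have hsum_y := abs_le.1 (hsum y ((Real.exp_le_exp.2 (by linarith)).trans hye) N hN)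
  have herror : C * y ^ 2 / Real.log y ≤ y ^ 2 / 20 := by
    rw [div_le_div_iff₀ hlog0 (by norm_num)]
    nlinarith [sq_nonneg y]
  have hcount : ∑ q ∈ splitPrimes N, Real.log q * max 0 (y - q) ≤
      ((splitPrimes N).filter fun q : ℕ => (q : ℝ) < y).card * (Real.log y * y) := by
    rw [← nsmul_eq_mul, ← Finset.sum_const, Finset.sum_filter]
    refine Finset.sum_le_sum fun q hq => ?_
    have hq5 := five_le_of_mem_splitPrimes hq
    split_ifs with hqy
    · rw [max_eq_right (by linarith)]
      gcongr
      linarith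
    · rw [max_eq_left (by linarith), mul_zero]
  rw [div_le_iff₀ (by positivity)]
  nlinarith

end SplitPrimes

section Excess

variable {Y c : ℝ} {N : ℕ}

/-- The total surplus, at price `1 / Y` per unit of cost, of the exponent steps `l < N` of a prime
that costs `c` per step: the contribution of that prime to the Lagrange dual of maximising
`∑ log (v q + 1)` over exponents `v` with `∑ q * v q` bounded. -/
noncomputable def excess (Y c : ℝ) (N : ℕ) : ℝ := ∑ l ∈ Finset.range N, max 0 (logStep l - c / Y)

/-- The total surplus at price `1 / Y` over all primes `q ≡ 1 [MOD 4]` below `N`. -/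
noncomputable def totalExcess (Y : ℝ) (N : ℕ) : ℝ := ∑ q ∈ splitPrimes N, excess Y q N

/-- The variant of `totalExcess` in which each prime `q` has weight `log q`, which is the one that
the prime number theorem in progressions evaluates directly. -/
noncomputable def logWeightedExcess (Y : ℝ) (N : ℕ) : ℝ :=
  ∑ q ∈ splitPrimes N, Real.log q * excess Y q N

lemma excess_nonneg (Y c : ℝ) (N : ℕ) : 0 ≤ excess Y c N :=
  Finset.sum_nonneg fun _ _ => le_max_left _ _

lemma totalExcess_nonneg (Y : ℝ) (N : ℕ) : 0 ≤ totalExcess Y N :=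
  Finset.sum_nonneg fun _ _ => excess_nonneg _ _ _

lemma excess_eq_zero (hY : 0 < Y) (hc : Y ≤ c) (N : ℕ) : excess Y c N = 0 :=
  Finset.sum_eq_zero fun l _ => max_eq_left <| sub_nonpos.2 <|
    (logStep_le_one l).trans ((one_le_div hY).2 hc)

lemma logStep_le_div_of_le (hY : 0 < Y) (hc : 1 ≤ c) {l : ℕ} (hl : Y ≤ l + 1) :
    logStep l ≤ c / Y :=
  (logStep_le l).trans (div_le_div₀ (by linarith) hc hY hl)

lemma excess_le_two_mul_log (hY : 2 ≤ Y) (hc : 1 ≤ c) (N : ℕ) : excess Y c N ≤ 2 * Real.log Y := by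
  have hY0 : 0 < Y := by linarith
  have hfloor : (⌊Y⌋₊ : ℝ) ≤ Y := Nat.floor_le hY0.le
  have hterm : ∀ l ∈ Finset.range N, max 0 (logStep l - c / Y) ≤
      if l < ⌊Y⌋₊ then logStep l else 0 := fun l _ => by
    split_ifs with hl
    · exact max_le (logStep_pos l).le (sub_le_self _ (by positivity))
    · have hYl : Y ≤ l + 1 := (Nat.lt_floor_add_one Y).le.trans (by gcongr; omega)
      exact max_le le_rfl (sub_nonpos.2 (logStep_le_div_of_le hY0 hc hYl))
  calc excess Y c N ≤ ∑ l ∈ Finset.range N with l < ⌊Y⌋₊, logStep l := by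
        rw [Finset.sum_filter]
        exact Finset.sum_le_sum hterm
    _ ≤ ∑ l ∈ Finset.range ⌊Y⌋₊, logStep l :=
        Finset.sum_le_sum_of_subset_of_nonneg
          (fun l hl => Finset.mem_range.2 (Finset.mem_filter.1 hl).2)
          fun l _ _ => (logStep_pos l).le
    _ = Real.log (⌊Y⌋₊ + 1) := sum_range_logStep _
    _ ≤ Real.log (Y ^ 2) := Real.log_le_log (by positivity) (by nlinarith)
    _ = 2 * Real.log Y := by rw [Real.log_pow, Nat.cast_ofNat]

lemma mul_logWeightedExcess (hY : 0 < Y) (N : ℕ) :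
    Y * logWeightedExcess Y N = ∑ l ∈ Finset.range N,
      ∑ q ∈ splitPrimes N, Real.log q * max 0 (Y * logStep l - q) := by
  simp only [logWeightedExcess, excess, Finset.mul_sum]
  rw [Finset.sum_comm]
  refine Finset.sum_congr rfl fun l _ => Finset.sum_congr rfl fun q _ => ?_
  rw [mul_left_comm, mul_max_of_nonneg _ _ hY.le, mul_zero, mul_sub, mul_div_cancel₀ _ hY.ne']

lemma exists_abs_sum_splitPrimes_mul_sub_le :
    ∃ C, 0 < C ∧ ∀ Y : ℝ, Real.exp 2 ≤ Y → ∀ N : ℕ, Y ≤ N → ∀ t : ℝ, 0 < t → t ≤ 1 →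
      |∑ q ∈ splitPrimes N, Real.log q * max 0 (Y * t - q) - (Y * t) ^ 2 / 4| ≤
        C * Y ^ 2 / Real.log Y * t ^ (3 / 2 : ℝ) := by
  obtain ⟨C₁, hC₁, hlarge⟩ := exists_abs_sum_splitPrimes_sub_le
  obtain ⟨C₂, hC₂, hsmall⟩ := exists_abs_sum_splitPrimes_sub_le_mul_sq
  refine ⟨2 * C₁ + 4 * C₂, by positivity, fun Y hY N hN t ht0 ht1 => ?_⟩
  have hY0 : 0 < Y := (Real.exp_pos 2).trans_le hY
  have hlog : 0 < Real.log Y := two_pos.trans_le ((Real.le_log_iff_exp_le hY0).2 hY)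
  have hYt : Y * t ≤ N := (mul_le_of_le_one_right hY0.le ht1).trans hN
  have hsq : t ^ 2 = t ^ (3 / 2 : ℝ) * √t := by
    rw [Real.sqrt_eq_rpow, ← Real.rpow_add ht0, ← Real.rpow_natCast]
    norm_num
  have hsplit : (2 * C₁ + 4 * C₂) * Y ^ 2 / Real.log Y * t ^ (3 / 2 : ℝ) =
      2 * C₁ * Y ^ 2 / Real.log Y * t ^ (3 / 2 : ℝ) +
        C₂ * Y ^ 2 * (t ^ (3 / 2 : ℝ) * (4 / Real.log Y)) := by ring
  rw [hsplit]
  rcases le_or_gt √Y (Y * t) with hbig | hbig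
  · refine le_add_of_le_of_nonneg ?_ (by positivity)
    have hexp : Real.exp 1 ≤ √Y := by
      refine Real.le_sqrt_of_sq_le ?_
      rwa [← Real.exp_nat_mul, Nat.cast_ofNat, mul_one]
    have hlogt : Real.log Y / 2 ≤ Real.log (Y * t) := by
      rw [← Real.log_sqrt hY0.le]
      exact Real.log_le_log (by positivity) hbig
    calc _ ≤ C₁ * (Y * t) ^ 2 / Real.log (Y * t) := hlarge _ (hexp.trans hbig) N hYt
      _ ≤ C₁ * (Y * t) ^ 2 / (Real.log Y / 2) := by gcongr
      _ = 2 * C₁ * Y ^ 2 / Real.log Y * (t ^ (3 / 2 : ℝ) * √t) := by rw [← hsq]; field_simp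
      _ ≤ 2 * C₁ * Y ^ 2 / Real.log Y * t ^ (3 / 2 : ℝ) := by
        gcongr
        exact mul_le_of_le_one_right (by positivity) (Real.sqrt_le_one.2 ht1)
  · refine le_add_of_nonneg_of_le (by positivity) ?_
    have hsqrt : √t ≤ 4 / Real.log Y := by
      have hle : t * √Y ≤ 1 := by nlinarith [Real.mul_self_sqrt hY0.le, Real.sqrt_pos.2 hY0]
      have hlogsq := log_sq_le_sixteen_mul_sqrt ((Real.one_le_exp zero_le_two).trans hY)
      rw [Real.sqrt_le_left (by positivity), div_pow, le_div_iff₀ (by positivity)]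
      nlinarith
    calc _ ≤ C₂ * (Y * t) ^ 2 := hsmall _ (by positivity) N hYt
      _ = C₂ * Y ^ 2 * (t ^ (3 / 2 : ℝ) * √t) := by rw [← hsq]; ring
      _ ≤ C₂ * Y ^ 2 * (t ^ (3 / 2 : ℝ) * (4 / Real.log Y)) := by gcongr

lemma exists_abs_logWeightedExcess_sub_sum_le :
    ∃ K, 0 < K ∧ ∀ Y : ℝ, Real.exp 2 ≤ Y → ∀ N : ℕ, Y ≤ N →
      |logWeightedExcess Y N - Y / 4 * ∑ l ∈ Finset.range N, logStep l ^ 2| ≤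
        K * Y / Real.log Y := by
  obtain ⟨C, hC, hbound⟩ := exists_abs_sum_splitPrimes_mul_sub_le
  have hsummable := summable_logStep_rpow (r := 3 / 2) (by norm_num)
  have hnonneg : ∀ l, 0 ≤ logStep l ^ (3 / 2 : ℝ) := fun l => Real.rpow_nonneg (logStep_pos l).le _
  refine ⟨C * ∑' l, logStep l ^ (3 / 2 : ℝ), mul_pos hC (hsummable.tsum_pos hnonneg 0
    (Real.rpow_pos_of_pos (logStep_pos 0) _)), fun Y hY N hN => ?_⟩
  have hY0 : 0 < Y := (Real.exp_pos 2).trans_le hY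
  have hlog : 0 < Real.log Y := two_pos.trans_le ((Real.le_log_iff_exp_le hY0).2 hY)
  refine le_of_mul_le_mul_left ?_ hY0
  calc Y * |logWeightedExcess Y N - Y / 4 * ∑ l ∈ Finset.range N, logStep l ^ 2|
      = |∑ l ∈ Finset.range N, (∑ q ∈ splitPrimes N, Real.log q * max 0 (Y * logStep l - q) -
          (Y * logStep l) ^ 2 / 4)| := by
        rw [Finset.sum_sub_distrib, ← mul_logWeightedExcess hY0, ← abs_of_pos hY0, ← abs_mul,
          abs_of_pos hY0, mul_sub, Finset.mul_sum, Finset.mul_sum]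
        refine congrArg (fun S => |Y * logWeightedExcess Y N - S|) ?_
        exact Finset.sum_congr rfl fun l _ => by ring
    _ ≤ ∑ l ∈ Finset.range N, C * Y ^ 2 / Real.log Y * logStep l ^ (3 / 2 : ℝ) :=
        (Finset.abs_sum_le_sum_abs _ _).trans <| Finset.sum_le_sum fun l _ =>
          hbound Y hY N hN _ (logStep_pos l) (logStep_le_one l)
    _ ≤ C * Y ^ 2 / Real.log Y * ∑' l, logStep l ^ (3 / 2 : ℝ) := by
        rw [← Finset.mul_sum]
        gcongr
        exact hsummable.sum_le_tsum _ fun l _ => hnonneg l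
    _ = Y * (C * (∑' l, logStep l ^ (3 / 2 : ℝ)) * Y / Real.log Y) := by ring

lemma exists_abs_logWeightedExcess_sub_le :
    ∃ K, 0 < K ∧ ∀ Y : ℝ, Real.exp 2 ≤ Y → ∀ N : ℕ, Y ≤ N →
      |logWeightedExcess Y N - Y * logStepSqSum / 4| ≤ K * Y / Real.log Y := by
  obtain ⟨K, hK, hpartial⟩ := exists_abs_logWeightedExcess_sub_sum_le
  refine ⟨K + 1, by positivity, fun Y hY N hN => ?_⟩
  have hY0 : 0 < Y := (Real.exp_pos 2).trans_le hY
  have hlog : 0 < Real.log Y := two_pos.trans_le ((Real.le_log_iff_exp_le hY0).2 hY)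
  have hN0 : (0 : ℝ) < N := hY0.trans_le hN
  have htail : Y / 4 * (logStepSqSum - ∑ l ∈ Finset.range N, logStep l ^ 2) ≤ 1 := by
    calc _ ≤ N / 4 * (1 / N : ℝ) := by
          gcongr
          exacts [sub_nonneg.2 (sum_range_logStep_sq_le N),
            logStepSqSum_sub_sum_range_le (Nat.cast_pos.1 hN0)]
      _ ≤ 1 := by field_simp; norm_num
  have htail0 : 0 ≤ Y / 4 * (logStepSqSum - ∑ l ∈ Finset.range N, logStep l ^ 2) :=
    mul_nonneg (by positivity) (sub_nonneg.2 (sum_range_logStep_sq_le N))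
  have hone : 1 ≤ Y / Real.log Y := (one_le_div hlog).2 (Real.log_le_self hY0.le)
  have hsum := abs_le.1 (hpartial Y hY N hN)
  rw [add_mul, add_div, one_mul, abs_le]
  constructor <;> linarith

lemma logWeightedExcess_le_log_mul_totalExcess (hY : 0 < Y) (N : ℕ) :
    logWeightedExcess Y N ≤ Real.log Y * totalExcess Y N := by
  rw [logWeightedExcess, totalExcess, Finset.mul_sum]
  refine Finset.sum_le_sum fun q hq => ?_
  rcases le_or_gt Y q with hYq | hqY
  · simp [excess_eq_zero hY hYq]
  · have hq5 := five_le_of_mem_splitPrimes hq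
    exact mul_le_mul_of_nonneg_right (Real.log_le_log (by linarith) hqY.le) (excess_nonneg _ _ _)

lemma totalExcess_le_logWeightedExcess_div_add (hY : 2 ≤ Y) {z : ℝ} (hz : 1 < z) (N : ℕ) :
    totalExcess Y N ≤ logWeightedExcess Y N / Real.log z + z * (2 * Real.log Y) := by
  have hlogz : 0 < Real.log z := Real.log_pos hz
  have hlogY : 0 ≤ Real.log Y := Real.log_nonneg (by linarith)
  have hcard : (((splitPrimes N).filter fun q : ℕ => (q : ℝ) < z).card : ℝ) ≤ z :=
    card_filter_cast_lt_le (fun q hq => (mem_splitPrimes.1 hq).2.1.pos) (by linarith)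
  refine le_trans ?_ (add_le_add_right (mul_le_mul_of_nonneg_right hcard (by positivity)) _)
  rw [← nsmul_eq_mul, ← Finset.sum_const, Finset.sum_filter, totalExcess, logWeightedExcess,
    Finset.sum_div, ← Finset.sum_add_distrib]
  refine Finset.sum_le_sum fun q hq => ?_
  have hq5 := five_le_of_mem_splitPrimes hq
  have hexcess := excess_nonneg Y q N
  split_ifs with hqz
  · exact le_add_of_nonneg_of_le (by positivity) (excess_le_two_mul_log hY (by linarith) N)
  · have hlogq : Real.log z ≤ Real.log q := Real.log_le_log (by linarith) (not_lt.1 hqz)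
    rw [add_zero, le_div_iff₀ hlogz, mul_comm]
    gcongr

lemma exists_le_totalExcess :
    ∃ K, 0 < K ∧ ∀ Y : ℝ, Real.exp 2 ≤ Y → ∀ N : ℕ, Y ≤ N →
      Y * logStepSqSum / (4 * Real.log Y) - K * Y / Real.log Y ^ 2 ≤ totalExcess Y N := by
  obtain ⟨K, hK, hweighted⟩ := exists_abs_logWeightedExcess_sub_le
  refine ⟨K, hK, fun Y hY N hN => ?_⟩
  have hY0 : 0 < Y := (Real.exp_pos 2).trans_le hY
  have hlog : 0 < Real.log Y := two_pos.trans_le ((Real.le_log_iff_exp_le hY0).2 hY)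
  calc Y * logStepSqSum / (4 * Real.log Y) - K * Y / Real.log Y ^ 2
      = (Y * logStepSqSum / 4 - K * Y / Real.log Y) / Real.log Y := by field_simp
    _ ≤ logWeightedExcess Y N / Real.log Y := by
        gcongr
        linarith [(abs_le.1 (hweighted Y hY N hN)).1]
    _ ≤ totalExcess Y N :=
        (div_le_iff₀' hlog).2 (logWeightedExcess_le_log_mul_totalExcess hY0 N)

/-- Primes below `Y / log Y ^ 3` are negligible, and `log q = log Y + O(log log Y)` for the
others. -/
lemma exists_totalExcess_le :
    ∃ K, 0 < K ∧ ∀ Y : ℝ, Real.exp 2 ≤ Y → 1 ≤ Real.log (Real.log Y) →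
      6 * Real.log (Real.log Y) ≤ Real.log Y → ∀ N : ℕ, Y ≤ N →
      totalExcess Y N ≤ Y * logStepSqSum / (4 * Real.log Y) +
        K * Y * Real.log (Real.log Y) / Real.log Y ^ 2 := by
  obtain ⟨K, hK, hweighted⟩ := exists_abs_logWeightedExcess_sub_le
  have hσ := logStepSqSum_pos
  refine ⟨2 * logStepSqSum + 2 * K + 2, by positivity, fun Y hY hℓ1 hℓ6 N hN => ?_⟩
  have hY0 : 0 < Y := (Real.exp_pos 2).trans_le hY
  have hH := (abs_le.1 (hweighted Y hY N hN)).2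
  set L := Real.log Y
  set ℓ := Real.log L
  have hL0 : 0 < L := by linarith
  have hlogz : Real.log (Y / L ^ 3) = L - 3 * ℓ := by
    rw [Real.log_div hY0.ne' (by positivity), Real.log_pow, Nat.cast_ofNat]
  have hz : 1 < Y / L ^ 3 := (Real.log_pos_iff (by positivity)).1 (by linarith)
  have hsplit := totalExcess_le_logWeightedExcess_div_add
    (by linarith [Real.add_one_le_exp 2] : 2 ≤ Y) hz N
  rw [hlogz] at hsplit
  have hinv : 1 / (L - 3 * ℓ) ≤ (L + 6 * ℓ) / L ^ 2 := by
    rw [div_le_div_iff₀ (by linarith) (by positivity)]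
    nlinarith
  have hratio : ℓ / L ≤ 1 / 6 := (div_le_iff₀ hL0).2 (by linarith)
  calc totalExcess Y N
      ≤ logWeightedExcess Y N * (1 / (L - 3 * ℓ)) + Y / L ^ 3 * (2 * L) := by
        rwa [mul_one_div]
    _ ≤ (Y * logStepSqSum / 4 + K * Y / L) * ((L + 6 * ℓ) / L ^ 2) + Y / L ^ 3 * (2 * L) := by
        gcongr
        · exact one_div_nonneg.2 (by linarith)
        · linarith
    _ = Y * logStepSqSum / (4 * L) +
          (3 / 2 * logStepSqSum * ℓ + K * (1 + 6 * (ℓ / L)) + 2) * (Y / L ^ 2) := by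
        field_simp
        ring
    _ ≤ Y * logStepSqSum / (4 * L) +
          ((2 * logStepSqSum + 2 * K + 2) * ℓ) * (Y / L ^ 2) := by
        gcongr
        nlinarith
    _ = _ := by ring

end Excess

section UpperBound

variable {Y c z : ℝ} {M N n : ℕ}

/-- The prime factors `p ≡ 1 [MOD 4]` of `n`. -/
def splitPrimeFactors (n : ℕ) : Finset ℕ := {p ∈ n.primeFactors | p % 4 = 1}

lemma mem_splitPrimeFactors {p : ℕ} :
    p ∈ splitPrimeFactors n ↔ p ∈ n.primeFactors ∧ p % 4 = 1 :=
  Finset.mem_filter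

lemma prime_of_mem_splitPrimeFactors {p : ℕ} (hp : p ∈ splitPrimeFactors n) : p.Prime :=
  Nat.prime_of_mem_primeFactors (mem_splitPrimeFactors.1 hp).1

lemma five_le_of_mem_splitPrimeFactors {p : ℕ} (hp : p ∈ splitPrimeFactors n) : (5 : ℝ) ≤ p := by
  exact_mod_cast five_le_of_prime_of_mod_four_eq_one (prime_of_mem_splitPrimeFactors hp)
    (mem_splitPrimeFactors.1 hp).2

lemma splitDivisorCount_eq_prod_of_subset {S : Finset ℕ} (hS : n.primeFactors ⊆ S) :
    splitDivisorCount n = ∏ p ∈ S, if p % 4 = 1 then n.factorization p + 1 else 1 :=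
  Finsupp.prod_of_support_subset _ (by rwa [Nat.support_factorization]) _ fun _ _ => by simp

lemma splitDivisorCount_eq_prod_splitPrimeFactors (n : ℕ) :
    splitDivisorCount n = ∏ p ∈ splitPrimeFactors n, (n.factorization p + 1) := by
  rw [splitDivisorCount_eq_prod_of_subset subset_rfl, splitPrimeFactors, Finset.prod_filter]

lemma splitDivisorCount_pos (n : ℕ) : 0 < splitDivisorCount n := by
  rw [splitDivisorCount_eq_prod_splitPrimeFactors]
  exact Finset.prod_pos fun p _ => Nat.succ_pos _

lemma splitDivisorCount_mul_le {a b : ℕ} (ha : a ≠ 0) (hb : b ≠ 0) :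
    splitDivisorCount (a * b) ≤ splitDivisorCount a * splitDivisorCount b := by
  rw [splitDivisorCount_eq_prod_of_subset (Nat.primeFactors_mul ha hb).subset,
    splitDivisorCount_eq_prod_of_subset (Finset.subset_union_left (s₂ := b.primeFactors)),
    splitDivisorCount_eq_prod_of_subset (Finset.subset_union_right (s₁ := a.primeFactors)),
    ← Finset.prod_mul_distrib]
  refine Finset.prod_le_prod' fun p _ => ?_
  rw [Nat.factorization_mul ha hb, Finsupp.add_apply]
  split_ifs
  · nlinarith [Nat.zero_le (a.factorization p * b.factorization p)]
  · simp

lemma splitDivisorCount_le_self (hn : n ≠ 0) : splitDivisorCount n ≤ n := by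
  conv_rhs => rw [← Nat.prod_factorization_pow_eq_self hn, Finsupp.prod]
  rw [splitDivisorCount, Finsupp.prod]
  refine Finset.prod_le_prod' fun p hp => ?_
  have hprime : p.Prime := Nat.prime_of_mem_primeFactors (by simpa using hp)
  split_ifs
  · exact Nat.lt_pow_self hprime.one_lt
  · exact Nat.one_le_pow _ _ hprime.pos

lemma log_r2_le (n : ℕ) : Real.log (r2 n) ≤ Real.log 4 + Real.log (splitDivisorCount n) := by
  have hpos : (0 : ℝ) < splitDivisorCount n := Nat.cast_pos.2 (splitDivisorCount_pos n)
  have hnonneg : 0 ≤ Real.log 4 + Real.log (splitDivisorCount n) :=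
    add_nonneg (Real.log_nonneg (by norm_num)) (Real.log_natCast_nonneg _)
  rcases eq_or_ne n 0 with rfl | hn
  · simpa [r2_zero] using hnonneg
  rcases r2_eq_zero_or_eq hn with h | h
  · simpa [h] using hnonneg
  · rw [h, Nat.cast_mul, Nat.cast_ofNat, Real.log_mul (by norm_num) hpos.ne']

lemma r2_four_mul (n : ℕ) : r2 (4 * n) = r2 n := r2_two_pow_mul 2 n

lemma log_r2_r2_le (hn : n ≠ 0) :
    Real.log (r2 (r2 n)) ≤ Real.log 4 + Real.log (splitDivisorCount (splitDivisorCount n)) := by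
  rcases r2_eq_zero_or_eq hn with h | h
  · rw [h, r2_zero, Nat.cast_one, Real.log_one]
    exact add_nonneg (Real.log_nonneg (by norm_num)) (Real.log_natCast_nonneg _)
  · rw [h, r2_four_mul]
    exact log_r2_le _

/-- The completely additive function with value `p - 1` at each prime `p`; its values bound from
below the cost of realising `n` as a product of exponents plus one. -/
def primeWeight (n : ℕ) : ℕ := n.factorization.sum fun p k => k * (p - 1)

lemma primeWeight_mul {a b : ℕ} (ha : a ≠ 0) (hb : b ≠ 0) :
    primeWeight (a * b) = primeWeight a + primeWeight b := by
  rw [primeWeight, Nat.factorization_mul ha hb, Finsupp.sum_add_index' (by simp)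
    fun p i j => add_mul i j (p - 1), primeWeight, primeWeight]

lemma primeWeight_add_one_le (hn : n ≠ 0) : primeWeight n + 1 ≤ n := by
  induction n using induction_on_primes with
  | zero => exact absurd rfl hn
  | one => simp [primeWeight]
  | prime_mul p a hp ih =>
    have ha : a ≠ 0 := right_ne_zero_of_mul hn
    have hweight : primeWeight p = p - 1 := by simp [primeWeight, hp.factorization]
    obtain ⟨k, rfl⟩ := Nat.exists_eq_add_of_le' hp.two_le
    rw [primeWeight_mul hp.ne_zero ha, hweight, show k + 2 - 1 = k + 1 by omega]
    nlinarith [ih ha]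

lemma primeWeight_prod_add_one_le {ι : Type*} (s : Finset ι) (f : ι → ℕ) :
    primeWeight (∏ i ∈ s, (f i + 1)) ≤ ∑ i ∈ s, f i := by
  classical
  induction s using Finset.induction_on with
  | empty => simp [primeWeight]
  | insert a s ha ih =>
    rw [Finset.prod_insert ha, Finset.sum_insert ha, primeWeight_mul (f a).succ_ne_zero
      (Finset.prod_ne_zero_iff.2 fun i _ => (f i).succ_ne_zero)]
    exact add_le_add (Nat.le_of_succ_le_succ (primeWeight_add_one_le (f a).succ_ne_zero)) ih

lemma log_add_one_le_excess_add (hY : 0 < Y) (hc : 1 ≤ c) (hN : Y ≤ N) (b : ℕ) :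
    Real.log (b + 1) ≤ excess Y c N + b * (c / Y) := by
  have hcut : ∑ l ∈ Finset.range b, max 0 (logStep l - c / Y) ≤ excess Y c N := by
    rw [excess, ← Finset.sum_filter_add_sum_filter_not (Finset.range b) (· < N),
      Finset.sum_eq_zero (s := {l ∈ Finset.range b | ¬l < N}), add_zero]
    · exact Finset.sum_le_sum_of_subset_of_nonneg
        (fun l hl => Finset.mem_range.2 (Finset.mem_filter.1 hl).2) fun l _ _ => le_max_left _ _
    · intro l hl
      have hNl : (N : ℝ) ≤ l := Nat.cast_le.2 (not_lt.1 (Finset.mem_filter.1 hl).2)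
      exact max_eq_left (sub_nonpos.2 (logStep_le_div_of_le hY hc (by linarith)))
  calc Real.log (b + 1) = ∑ l ∈ Finset.range b, logStep l := (sum_range_logStep b).symm
    _ ≤ ∑ l ∈ Finset.range b, (max 0 (logStep l - c / Y) + c / Y) :=
        Finset.sum_le_sum fun l _ => by linarith [le_max_right 0 (logStep l - c / Y)]
    _ = ∑ l ∈ Finset.range b, max 0 (logStep l - c / Y) + b * (c / Y) := by
        rw [Finset.sum_add_distrib, Finset.sum_const, Finset.card_range, nsmul_eq_mul]
    _ ≤ excess Y c N + b * (c / Y) := by gcongr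

lemma excess_le_excess_add_one_add (hY : 0 < Y) (hc : 0 < c) (N : ℕ) :
    excess Y c N ≤ excess Y (c + 1) N + c⁻¹ * (1 + Real.log N) := by
  have hterm : ∀ l ∈ Finset.range N, max 0 (logStep l - c / Y) ≤
      max 0 (logStep l - (c + 1) / Y) + c⁻¹ * ((l : ℝ) + 1)⁻¹ := fun l _ => by
    have hmax := le_max_right 0 (logStep l - (c + 1) / Y)
    rcases le_or_gt (logStep l) (c / Y) with hle | hgt
    · rw [max_eq_left (sub_nonpos.2 hle)]
      positivity
    · rw [max_eq_right (sub_nonneg.2 hgt.le)]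
      have hinv : Y⁻¹ ≤ c⁻¹ * ((l : ℝ) + 1)⁻¹ := by
        calc Y⁻¹ = c⁻¹ * (c / Y) := by field_simp
          _ ≤ c⁻¹ * ((l : ℝ) + 1)⁻¹ := by
            gcongr
            simpa using hgt.le.trans (logStep_le l)
      rw [add_div, one_div] at hmax ⊢
      linarith
  refine (Finset.sum_le_sum hterm).trans ?_
  rw [Finset.sum_add_distrib, ← Finset.mul_sum]
  exact add_le_add le_rfl (by gcongr; exact sum_range_inv_add_one_le N)

lemma sum_splitPrimes_inv_sub_one_le (N : ℕ) :
    ∑ q ∈ splitPrimes N, ((q : ℝ) - 1)⁻¹ ≤ 1 + Real.log N := by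
  have hsub : splitPrimes N ⊆ Finset.Ico 2 (N + 2) := fun q hq => by
    obtain ⟨hqN, hprime, -⟩ := mem_splitPrimes.1 hq
    exact Finset.mem_Ico.2 ⟨hprime.two_le, by omega⟩
  refine (Finset.sum_le_sum_of_subset_of_nonneg hsub fun q hq _ => ?_).trans ?_
  · have hq2 : (2 : ℝ) ≤ q := by exact_mod_cast (Finset.mem_Ico.1 hq).1
    exact inv_nonneg.2 (by linarith)
  · refine le_of_eq_of_le ?_ (sum_range_inv_add_one_le N)
    rw [Finset.sum_Ico_eq_sum_range, Nat.add_sub_cancel]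
    refine Finset.sum_congr rfl fun i _ => ?_
    push_cast
    congr 1
    ring

lemma sum_splitPrimes_excess_sub_one_le (hY : 0 < Y) (N : ℕ) :
    ∑ q ∈ splitPrimes N, excess Y (q - 1) N ≤ totalExcess Y N + (1 + Real.log N) ^ 2 := by
  calc ∑ q ∈ splitPrimes N, excess Y (q - 1) N
      ≤ ∑ q ∈ splitPrimes N, (excess Y q N + ((q : ℝ) - 1)⁻¹ * (1 + Real.log N)) :=
        Finset.sum_le_sum fun q hq => by
          simpa using excess_le_excess_add_one_add hY
            (c := q - 1) (by linarith [five_le_of_mem_splitPrimes hq]) N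
    _ = totalExcess Y N + (∑ q ∈ splitPrimes N, ((q : ℝ) - 1)⁻¹) * (1 + Real.log N) := by
        rw [Finset.sum_add_distrib, Finset.sum_mul, totalExcess]
    _ ≤ totalExcess Y N + (1 + Real.log N) ^ 2 := by
        rw [sq]
        gcongr
        exact sum_splitPrimes_inv_sub_one_le N

lemma sum_splitPrimeFactors_excess_sub_one_le (hY : 0 < Y) (hN : Y + 1 ≤ N) :
    ∑ q ∈ splitPrimeFactors M, excess Y (q - 1) N ≤ ∑ q ∈ splitPrimes N, excess Y (q - 1) N := by
  rw [← Finset.sum_filter_add_sum_filter_not _ (· < N),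
    Finset.sum_eq_zero (s := {q ∈ splitPrimeFactors M | ¬q < N}), add_zero]
  · refine Finset.sum_le_sum_of_subset_of_nonneg (fun q hq => ?_) fun q _ _ => excess_nonneg _ _ _
    obtain ⟨hqM, hqN⟩ := Finset.mem_filter.1 hq
    exact mem_splitPrimes.2
      ⟨hqN, prime_of_mem_splitPrimeFactors hqM, (mem_splitPrimeFactors.1 hqM).2⟩
  · intro q hq
    have hNq : (N : ℝ) ≤ q := Nat.cast_le.2 (not_lt.1 (Finset.mem_filter.1 hq).2)
    exact excess_eq_zero hY (by linarith) N

lemma sum_splitPrimeFactors_factorization_mul_le (M : ℕ) :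
    ∑ q ∈ splitPrimeFactors M, (M.factorization q : ℝ) * (q - 1) ≤ primeWeight M := by
  rw [primeWeight, Finsupp.sum, Nat.support_factorization, Nat.cast_sum]
  refine (Finset.sum_le_sum fun q hq => ?_).trans (Finset.sum_le_sum_of_subset_of_nonneg
    (Finset.filter_subset _ _) fun _ _ _ => Nat.cast_nonneg _)
  rw [Nat.cast_mul, Nat.cast_pred (prime_of_mem_splitPrimeFactors hq).pos]

/-- Weak Lagrange duality: each exponent step is charged the price `1 / Y` per unit of weight. -/
lemma log_splitDivisorCount_le (M : ℕ) (hY : 0 < Y) (hN : Y + 1 ≤ N) :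
    Real.log (splitDivisorCount M) ≤
      totalExcess Y N + (1 + Real.log N) ^ 2 + primeWeight M / Y := by
  calc Real.log (splitDivisorCount M)
      = ∑ q ∈ splitPrimeFactors M, Real.log (M.factorization q + 1) := by
        rw [splitDivisorCount_eq_prod_splitPrimeFactors]
        push_cast
        exact Real.log_prod fun q _ => by positivity
    _ ≤ ∑ q ∈ splitPrimeFactors M,
          (excess Y (q - 1) N + M.factorization q * (((q : ℝ) - 1) / Y)) :=
        Finset.sum_le_sum fun q hq => log_add_one_le_excess_add hY
          (by linarith [five_le_of_mem_splitPrimeFactors hq]) (by linarith) _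
    _ = ∑ q ∈ splitPrimeFactors M, excess Y (q - 1) N +
          (∑ q ∈ splitPrimeFactors M, (M.factorization q : ℝ) * (q - 1)) / Y := by
        simp only [Finset.sum_add_distrib, Finset.sum_div, mul_div_assoc]
    _ ≤ totalExcess Y N + (1 + Real.log N) ^ 2 + primeWeight M / Y := by
        gcongr
        · exact (sum_splitPrimeFactors_excess_sub_one_le hY hN).trans
            (sum_splitPrimes_excess_sub_one_le hY N)
        · exact sum_splitPrimeFactors_factorization_mul_le M

lemma sum_factorization_mul_log_le {S : Finset ℕ} (hS : S ⊆ splitPrimeFactors n) :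
    ∑ p ∈ S, (n.factorization p : ℝ) * Real.log p ≤ Real.log n := by
  rw [Real.log_nat_eq_sum_factorization n, Finsupp.sum, Nat.support_factorization]
  exact Finset.sum_le_sum_of_subset_of_nonneg (hS.trans (Finset.filter_subset _ _)) fun p _ _ =>
    mul_nonneg (Nat.cast_nonneg _) (Real.log_natCast_nonneg p)

lemma factorization_le_log {p : ℕ} (hp : p ∈ splitPrimeFactors n) :
    (n.factorization p : ℝ) ≤ Real.log n := by
  have hp5 := five_le_of_mem_splitPrimeFactors hp
  have hlog : 1 ≤ Real.log p :=
    (Real.le_log_iff_exp_le (by linarith)).2 (by linarith [Real.exp_one_lt_d9])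
  have hsum := sum_factorization_mul_log_le (Finset.singleton_subset_iff.2 hp)
  rw [Finset.sum_singleton] at hsum
  exact (le_mul_of_one_le_right (Nat.cast_nonneg _) hlog).trans hsum

lemma log_prod_factorization_add_one_le {S : Finset ℕ} (hS : S ⊆ splitPrimeFactors n)
    (hz : 0 ≤ z) (hSz : ∀ p ∈ S, (p : ℝ) < z) :
    Real.log (∏ p ∈ S, (n.factorization p + 1) : ℕ) ≤ z * Real.log (Real.log n + 1) := by
  have hcard : (S.card : ℝ) ≤ z := by
    simpa only [Finset.filter_true_of_mem hSz] using card_filter_cast_lt_le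
      (fun p hp => (prime_of_mem_splitPrimeFactors (hS hp)).pos) hz
  push_cast
  rw [Real.log_prod fun p _ => by positivity]
  refine (Finset.sum_le_card_nsmul _ _ (Real.log (Real.log n + 1)) fun p hp => ?_).trans ?_
  · have := factorization_le_log (hS hp)
    gcongr
  · rw [nsmul_eq_mul]
    gcongr
    exact Real.log_nonneg (le_add_of_nonneg_left (Real.log_natCast_nonneg n))

lemma primeWeight_prod_factorization_add_one_le {S : Finset ℕ} (hS : S ⊆ splitPrimeFactors n)
    (hz : 1 < z) (hSz : ∀ p ∈ S, z ≤ p) :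
    (primeWeight (∏ p ∈ S, (n.factorization p + 1)) : ℝ) ≤ Real.log n / Real.log z := by
  rw [le_div_iff₀ (Real.log_pos hz)]
  calc _ ≤ (∑ p ∈ S, (n.factorization p : ℝ)) * Real.log z := by
        gcongr
        · exact (Real.log_pos hz).le
        · exact_mod_cast primeWeight_prod_add_one_le _ _
    _ ≤ ∑ p ∈ S, (n.factorization p : ℝ) * Real.log p := by
        rw [Finset.sum_mul]
        exact Finset.sum_le_sum fun p hp => by have := hSz p hp; gcongr
    _ ≤ Real.log n := sum_factorization_mul_log_le hS

lemma log_r2_r2_le_of_log_le (hn : n ≠ 0) {X : ℝ} (hX : Real.log n ≤ X) (hz : 1 < z)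
    (hY : 0 < Y) (hN : Y + 1 ≤ N) :
    Real.log (r2 (r2 n)) ≤ Real.log 4 + z * Real.log (X + 1) +
      (totalExcess Y N + (1 + Real.log N) ^ 2 + X / Real.log z / Y) := by
  set A := ∏ p ∈ splitPrimeFactors n with ((p : ℕ) : ℝ) < z, (n.factorization p + 1)
  set B := ∏ p ∈ splitPrimeFactors n with ¬((p : ℕ) : ℝ) < z, (n.factorization p + 1)
  have hlogz : 0 < Real.log z := Real.log_pos hz
  have hA : A ≠ 0 := Finset.prod_ne_zero_iff.2 fun p _ => Nat.succ_ne_zero _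
  have hB : B ≠ 0 := Finset.prod_ne_zero_iff.2 fun p _ => Nat.succ_ne_zero _
  have hAB : splitDivisorCount n = A * B := by
    rw [splitDivisorCount_eq_prod_splitPrimeFactors, Finset.prod_filter_mul_prod_filter_not]
  have hsubmul : splitDivisorCount (splitDivisorCount n) ≤ A * splitDivisorCount B := by
    rw [hAB]
    exact (splitDivisorCount_mul_le hA hB).trans
      (Nat.mul_le_mul_right _ (splitDivisorCount_le_self hA))
  have hlogsubmul : Real.log (splitDivisorCount (splitDivisorCount n)) ≤
      Real.log A + Real.log (splitDivisorCount B) := by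
    rw [← Real.log_mul (Nat.cast_ne_zero.2 hA)
      (Nat.cast_ne_zero.2 (splitDivisorCount_pos B).ne'), ← Nat.cast_mul]
    exact Real.log_le_log (Nat.cast_pos.2 (splitDivisorCount_pos _)) (Nat.cast_le.2 hsubmul)
  have hsmall : Real.log A ≤ z * Real.log (X + 1) :=
    (log_prod_factorization_add_one_le (Finset.filter_subset _ _) (by linarith)
      fun p hp => (Finset.mem_filter.1 hp).2).trans (by gcongr)
  have hlarge : (primeWeight B : ℝ) / Y ≤ X / Real.log z / Y := by
    gcongr
    exact (primeWeight_prod_factorization_add_one_le (Finset.filter_subset _ _) hz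
      fun p hp => not_lt.1 (Finset.mem_filter.1 hp).2).trans (by gcongr)
  linarith [log_r2_r2_le hn, log_splitDivisorCount_le B hY hN]

end UpperBound

section UpperAsymptotics

variable {X : ℝ}

lemma eventually_log_le_mul {c : ℝ} (hc : 0 < c) : ∀ᶠ u : ℝ in atTop, Real.log u ≤ c * u := by
  filter_upwards [Real.isLittleO_log_id_atTop.bound hc, eventually_ge_atTop 1] with u hbound hu
  rwa [id, Real.norm_of_nonneg (Real.log_nonneg hu), Real.norm_of_nonneg (by linarith)] at hbound

/-- The range of `X = log x` in which the explicit estimates below hold. The numerical constants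
are convenient, not optimal. -/
structure IsLarge (X : ℝ) : Prop where
  pos : 0 < X
  le_log : 50000 ≤ Real.log X
  mul_log_log_le : 24 * Real.log (Real.log X) ≤ Real.log X

/-- The error term `√X log log X / (log X)²`, where `X = log x`. -/
noncomputable def errorTerm (X : ℝ) : ℝ := √X * Real.log (Real.log X) / Real.log X ^ 2

lemma eventually_isLarge : ∀ᶠ X in atTop, IsLarge X := by
  filter_upwards [eventually_gt_atTop 0, Real.tendsto_log_atTop.eventually_ge_atTop 50000,
    Real.tendsto_log_atTop.eventually (eventually_log_le_mul (c := 1 / 24) (by norm_num))]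
    with X hX hlog hloglog
  exact ⟨hX, hlog, by linarith⟩

namespace IsLarge

lemma log_pos (hX : IsLarge X) : 0 < Real.log X := by linarith [hX.le_log]

lemma one_le_log_log (hX : IsLarge X) : 1 ≤ Real.log (Real.log X) :=
  (Real.le_log_iff_exp_le hX.log_pos).2 (by linarith [hX.le_log, Real.exp_one_lt_d9])

lemma sqrt_pos (hX : IsLarge X) : 0 < √X := Real.sqrt_pos.2 hX.pos

lemma mul_log_pow_four_le_sqrt (hX : IsLarge X) : 11 * Real.log X ^ 4 ≤ √X := by
  have hlog := hX.le_log
  calc 11 * Real.log X ^ 4 ≤ Real.log X ^ 4 * (Real.log X / 3840) := by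
        nlinarith only [pow_nonneg hX.log_pos.le 4, hlog]
    _ = (Real.log X / 2) ^ 5 / (Nat.factorial 5 : ℕ) := by norm_num [Nat.factorial]; ring
    _ ≤ Real.exp (Real.log X / 2) := Real.pow_div_factorial_le_exp _ (by linarith) 5
    _ = √X := by rw [← Real.log_sqrt hX.pos.le, Real.exp_log hX.sqrt_pos]

lemma sqrt_div_log_sq_le_errorTerm (hX : IsLarge X) : √X / Real.log X ^ 2 ≤ errorTerm X := by
  rw [errorTerm]
  gcongr
  exact le_mul_of_one_le_right (Real.sqrt_nonneg X) hX.one_le_log_log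

lemma mul_log_sq_le_errorTerm (hX : IsLarge X) :
    11 * Real.log X ^ 2 ≤ errorTerm X := by
  have hlog := hX.log_pos
  refine le_trans ?_ hX.sqrt_div_log_sq_le_errorTerm
  rw [le_div_iff₀ (by positivity)]
  linarith [hX.mul_log_pow_four_le_sqrt]

lemma errorTerm_nonneg (hX : IsLarge X) : 0 ≤ errorTerm X :=
  (by positivity : (0 : ℝ) ≤ √X / Real.log X ^ 2).trans hX.sqrt_div_log_sq_le_errorTerm

end IsLarge

/-- The price `Y` at which the two main terms `Y σ / (2 log X)` and `2 X / (Y log X)` of the upper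
bound coincide, where `σ = logStepSqSum`. -/
noncomputable def optimalThreshold (X : ℝ) : ℝ := 2 / √logStepSqSum * √X

lemma sqrt_logStepSqSum_pos : 0 < √logStepSqSum := Real.sqrt_pos.2 logStepSqSum_pos

lemma optimalThreshold_pos (hX : 0 < X) : 0 < optimalThreshold X :=
  mul_pos (div_pos two_pos sqrt_logStepSqSum_pos) (Real.sqrt_pos.2 hX)

lemma log_optimalThreshold (hX : 0 < X) :
    Real.log (optimalThreshold X) = Real.log X / 2 + Real.log (2 / √logStepSqSum) := by
  rw [optimalThreshold, Real.log_mul (div_pos two_pos sqrt_logStepSqSum_pos).ne'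
    (Real.sqrt_pos.2 hX).ne', Real.log_sqrt hX.le, add_comm]

lemma IsLarge.log_sqrt_div_log_cube (hX : IsLarge X) :
    Real.log (√X / Real.log X ^ 3) = Real.log X / 2 - 3 * Real.log (Real.log X) := by
  rw [Real.log_div hX.sqrt_pos.ne' (pow_pos hX.log_pos 3).ne', Real.log_pow,
    Real.log_sqrt hX.pos.le, Nat.cast_ofNat]

lemma IsLarge.one_lt_sqrt_div_log_cube (hX : IsLarge X) : 1 < √X / Real.log X ^ 3 := by
  refine (Real.log_pos_iff (div_nonneg (Real.sqrt_nonneg X) (pow_pos hX.log_pos 3).le)).1 ?_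
  rw [hX.log_sqrt_div_log_cube]
  linarith [hX.mul_log_log_le, hX.log_pos]

lemma IsLarge.log_add_one_le (hX : IsLarge X) : Real.log (X + 1) ≤ 2 * Real.log X := by
  have hX2 : 2 ≤ X := by linarith [Real.log_le_sub_one_of_pos hX.pos, hX.le_log]
  calc Real.log (X + 1) ≤ Real.log (X ^ 2) :=
        Real.log_le_log (by linarith) (by nlinarith only [hX2])
    _ = 2 * Real.log X := by rw [Real.log_pow, Nat.cast_ofNat]

lemma IsLarge.sqrt_div_log_cube_mul_log_le (hX : IsLarge X) :
    √X / Real.log X ^ 3 * Real.log (X + 1) ≤ 2 * errorTerm X := by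
  have hlog := hX.log_pos
  calc √X / Real.log X ^ 3 * Real.log (X + 1)
      ≤ √X / Real.log X ^ 3 * (2 * Real.log X) := by gcongr; exact hX.log_add_one_le
    _ = 2 * (√X / Real.log X ^ 2) := by field_simp
    _ ≤ 2 * errorTerm X := by gcongr; exact hX.sqrt_div_log_sq_le_errorTerm

lemma IsLarge.log_four_add_sq_le (hX : IsLarge X) {N : ℕ} (hN : Real.log N ≤ 2 * Real.log X) :
    Real.log 4 + (1 + Real.log N) ^ 2 ≤ errorTerm X := by
  have hfour : Real.log 4 ≤ 3 := by
    linarith [Real.log_le_sub_one_of_pos (x := 4) (by norm_num)]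
  nlinarith only [hX.mul_log_sq_le_errorTerm, hX.le_log, hN, hfour, Real.log_natCast_nonneg N]

lemma IsLarge.div_log_div_optimalThreshold_le (hX : IsLarge X) :
    X / Real.log (√X / Real.log X ^ 3) / optimalThreshold X ≤
      √logStepSqSum * (√X / Real.log X) + 12 * √logStepSqSum * errorTerm X := by
  have hlog := hX.log_pos
  have hgap : 0 < Real.log X - 6 * Real.log (Real.log X) := by linarith [hX.mul_log_log_le]
  have hinv : 1 / (Real.log X - 6 * Real.log (Real.log X)) ≤
      1 / Real.log X + 12 * Real.log (Real.log X) / Real.log X ^ 2 := by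
    rw [show 1 / Real.log X + 12 * Real.log (Real.log X) / Real.log X ^ 2 =
      (Real.log X + 12 * Real.log (Real.log X)) / Real.log X ^ 2 by field_simp,
      div_le_div_iff₀ hgap (by positivity)]
    nlinarith only [hX.mul_log_log_le, hlog, hX.one_le_log_log]
  have hsqrt := hX.sqrt_pos
  have hs := sqrt_logStepSqSum_pos
  calc X / Real.log (√X / Real.log X ^ 3) / optimalThreshold X
      = √X ^ 2 / ((Real.log X - 6 * Real.log (Real.log X)) / 2) / optimalThreshold X := by
        rw [Real.sq_sqrt hX.pos.le, hX.log_sqrt_div_log_cube]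
        ring_nf
    _ = √logStepSqSum * √X * (1 / (Real.log X - 6 * Real.log (Real.log X))) := by
        rw [optimalThreshold]
        field_simp
    _ ≤ √logStepSqSum * √X *
          (1 / Real.log X + 12 * Real.log (Real.log X) / Real.log X ^ 2) := by gcongr
    _ = √logStepSqSum * (√X / Real.log X) + 12 * √logStepSqSum * errorTerm X := by
        rw [errorTerm]
        ring

lemma IsLarge.le_log_optimalThreshold (hX : IsLarge X)
    (hd : 4 * |Real.log (2 / √logStepSqSum)| ≤ Real.log X) :
    Real.log X / 4 ≤ Real.log (optimalThreshold X) := by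
  rw [log_optimalThreshold hX.pos]
  linarith [neg_abs_le (Real.log (2 / √logStepSqSum))]

lemma IsLarge.log_optimalThreshold_le (hX : IsLarge X)
    (hd : 4 * |Real.log (2 / √logStepSqSum)| ≤ Real.log X) :
    Real.log (optimalThreshold X) ≤ Real.log X := by
  rw [log_optimalThreshold hX.pos]
  linarith [le_abs_self (Real.log (2 / √logStepSqSum)), hX.log_pos]

lemma IsLarge.optimalThreshold_mul_div_le (hX : IsLarge X)
    (hd : 4 * |Real.log (2 / √logStepSqSum)| ≤ Real.log X) :
    optimalThreshold X * logStepSqSum / (4 * Real.log (optimalThreshold X)) ≤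
      √logStepSqSum * (√X / Real.log X) +
        4 * √logStepSqSum * |Real.log (2 / √logStepSqSum)| * errorTerm X := by
  have hlog := hX.log_pos
  have hs := sqrt_logStepSqSum_pos
  have hL := hX.le_log_optimalThreshold hd
  have hLeq := log_optimalThreshold hX.pos
  set L := Real.log (optimalThreshold X)
  set d := Real.log (2 / √logStepSqSum)
  have hinv : 1 / (2 * L) ≤ 1 / Real.log X + 4 * |d| / Real.log X ^ 2 := by
    rw [show 1 / Real.log X + 4 * |d| / Real.log X ^ 2 =
      (Real.log X + 4 * |d|) / Real.log X ^ 2 by field_simp,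
      div_le_div_iff₀ (by linarith) (by positivity)]
    nlinarith only [hLeq, neg_abs_le d, abs_nonneg d, hd, hlog]
  calc optimalThreshold X * logStepSqSum / (4 * L)
      = optimalThreshold X * √logStepSqSum ^ 2 / (4 * L) := by
        rw [Real.sq_sqrt logStepSqSum_pos.le]
    _ = √logStepSqSum * √X * (1 / (2 * L)) := by
        rw [optimalThreshold]
        field_simp
        ring
    _ ≤ √logStepSqSum * √X * (1 / Real.log X + 4 * |d| / Real.log X ^ 2) := by gcongr
    _ = √logStepSqSum * (√X / Real.log X) +
          4 * √logStepSqSum * |d| * (√X / Real.log X ^ 2) := by ring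
    _ ≤ √logStepSqSum * (√X / Real.log X) + 4 * √logStepSqSum * |d| * errorTerm X := by
        gcongr
        exact hX.sqrt_div_log_sq_le_errorTerm

lemma IsLarge.mul_optimalThreshold_mul_log_log_le (hX : IsLarge X)
    (hd : 4 * |Real.log (2 / √logStepSqSum)| ≤ Real.log X) {K : ℝ} (hK : 0 ≤ K) :
    K * optimalThreshold X * Real.log (Real.log (optimalThreshold X)) /
      Real.log (optimalThreshold X) ^ 2 ≤ 32 * K / √logStepSqSum * errorTerm X := by
  have hlog := hX.log_pos
  have hY := optimalThreshold_pos hX.pos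
  have hL := hX.le_log_optimalThreshold hd
  have hlogL : Real.log (Real.log (optimalThreshold X)) ≤ Real.log (Real.log X) :=
    Real.log_le_log (by linarith) (hX.log_optimalThreshold_le hd)
  have := hX.one_le_log_log
  calc K * optimalThreshold X * Real.log (Real.log (optimalThreshold X)) /
        Real.log (optimalThreshold X) ^ 2
      ≤ K * optimalThreshold X * Real.log (Real.log X) / (Real.log X / 4) ^ 2 := by gcongr
    _ = 32 * K / √logStepSqSum * errorTerm X := by
        rw [optimalThreshold, errorTerm]
        field_simp
        ring

lemma exists_log_r2_r2_le : ∃ C : ℝ, 0 < C ∧ ∀ᶠ X : ℝ in atTop, ∀ n : ℕ, n ≠ 0 →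
    Real.log n ≤ X →
    Real.log (r2 (r2 n)) ≤ √X / Real.log X * (2 * √logStepSqSum) + C * errorTerm X := by
  obtain ⟨K, hK, htotal⟩ := exists_totalExcess_le
  set s := √logStepSqSum
  set d := Real.log (2 / s)
  have hs : 0 < s := sqrt_logStepSqSum_pos
  refine ⟨4 * s * |d| + 12 * s + 32 * K / s + 2 + 1, by positivity, ?_⟩
  filter_upwards [eventually_isLarge, Real.tendsto_log_atTop.eventually_ge_atTop (4 * |d|)]
    with X hX hd n hn hnX
  have hlog := hX.le_log
  have hloglog := hX.mul_log_log_le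
  have hY := optimalThreshold_pos hX.pos
  have hL := hX.le_log_optimalThreshold hd
  have hLle := hX.log_optimalThreshold_le hd
  have hlogL : Real.log (Real.log (optimalThreshold X)) ≤ Real.log (Real.log X) :=
    Real.log_le_log (by linarith) hLle
  have hexp : Real.exp 2 ≤ optimalThreshold X := (Real.le_log_iff_exp_le hY).1 (by linarith)
  have hloglogY : 1 ≤ Real.log (Real.log (optimalThreshold X)) :=
    (Real.le_log_iff_exp_le (by linarith)).2 (by linarith [Real.exp_one_lt_d9])
  set N := ⌈optimalThreshold X⌉₊ + 1
  have hN : optimalThreshold X + 1 ≤ N := by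
    push_cast [N]
    linarith [Nat.le_ceil (optimalThreshold X)]
  have hlogN : Real.log N ≤ 2 * Real.log X := by
    have hNle : (N : ℝ) ≤ optimalThreshold X ^ 2 := by
      push_cast [N]
      nlinarith [Nat.ceil_lt_add_one hY.le, Real.add_one_le_exp 2]
    have := Real.log_le_log (by linarith) hNle
    rw [Real.log_pow, Nat.cast_ofNat] at this
    linarith
  linarith [log_r2_r2_le_of_log_le hn hnX hX.one_lt_sqrt_div_log_cube hY hN,
    hX.sqrt_div_log_cube_mul_log_le, hX.log_four_add_sq_le hlogN,
    hX.div_log_div_optimalThreshold_le, hX.optimalThreshold_mul_div_le hd,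
    hX.mul_optimalThreshold_mul_log_log_le hd hK.le,
    htotal _ hexp hloglogY (by linarith) N (by linarith)]

end UpperAsymptotics

section Construction

variable {ι : Type*}

lemma exists_eq_of_prime_dvd_prod_pow {s : Finset ι} {P k : ι → ℕ} (hP : ∀ i ∈ s, (P i).Prime)
    {p : ℕ} (hp : p.Prime) (hdvd : p ∣ ∏ i ∈ s, P i ^ k i) : ∃ i ∈ s, p = P i := by
  obtain ⟨i, hi, hpi⟩ := (Prime.dvd_finsetProd_iff hp.prime _).1 hdvd
  exact ⟨i, hi, (Nat.prime_dvd_prime_iff_eq hp (hP i hi)).1 (hp.dvd_of_dvd_pow hpi)⟩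

lemma r2_prod_pow {s : Finset ι} {P : ι → ℕ} (k : ι → ℕ)
    (hP : ∀ i ∈ s, (P i).Prime ∧ P i % 4 = 1) :
    r2 (∏ i ∈ s, P i ^ k i) = 4 * splitDivisorCount (∏ i ∈ s, P i ^ k i) := by
  refine r2_eq_of_forall_mod_four_ne_three
    (Finset.prod_ne_zero_iff.2 fun i hi => pow_ne_zero _ (hP i hi).1.ne_zero) fun p hp hdvd => ?_
  obtain ⟨i, hi, rfl⟩ := exists_eq_of_prime_dvd_prod_pow (fun i hi => (hP i hi).1) hp hdvd
  rw [(hP i hi).2]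
  decide

lemma splitDivisorCount_prod_pow {s : Finset ι} {P : ι → ℕ} (k : ι → ℕ) (hinj : Set.InjOn P s)
    (hP : ∀ i ∈ s, (P i).Prime ∧ P i % 4 = 1) :
    splitDivisorCount (∏ i ∈ s, P i ^ k i) = ∏ i ∈ s, (k i + 1) := by
  classical
  induction s using Finset.induction_on with
  | empty => simp [splitDivisorCount]
  | insert a s ha ih =>
    rw [Finset.forall_mem_insert] at hP
    have hndvd : ¬P a ∣ ∏ i ∈ s, P i ^ k i := fun hdvd => by
      obtain ⟨i, hi, hai⟩ :=
        exists_eq_of_prime_dvd_prod_pow (fun i hi => (hP.2 i hi).1) hP.1.1 hdvd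
      exact ha (hinj (by simp) (by simp [hi]) hai ▸ hi)
    rw [Finset.prod_insert ha, Finset.prod_insert ha, splitDivisorCount_prime_pow_mul hP.1.1 hndvd,
      if_pos hP.1.2, ih (hinj.mono (by simp)) hP.2]

lemma factorization_prod_prime {s : Finset ι} {P : ι → ℕ} (hP : ∀ i ∈ s, (P i).Prime) (q : ℕ) :
    (∏ i ∈ s, P i).factorization q = (s.filter fun i => P i = q).card := by
  rw [Nat.factorization_prod fun i hi => (hP i hi).ne_zero, Finsupp.finsetSum_apply,
    Finset.card_filter]
  exact Finset.sum_congr rfl fun i hi => by rw [(hP i hi).factorization, Finsupp.single_apply]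

lemma sum_logStep_le_log_splitDivisorCount_prod {A : Finset (ℕ × ℕ)}
    (hA : ∀ e ∈ A, e.1.Prime ∧ e.1 % 4 = 1) :
    ∑ e ∈ A, logStep e.2 ≤ Real.log (splitDivisorCount (∏ e ∈ A, e.1)) := by
  have hsub : (∏ e ∈ A, e.1).primeFactors ⊆ A.image Prod.fst := fun p hp => by
    obtain ⟨e, he, rfl⟩ := exists_eq_of_prime_dvd_prod_pow (k := fun _ => 1)
      (fun e he => (hA e he).1) (Nat.prime_of_mem_primeFactors hp)
      (by simpa using Nat.dvd_of_mem_primeFactors hp)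
    exact Finset.mem_image_of_mem _ he
  rw [splitDivisorCount_eq_prod_of_subset hsub]
  push_cast
  rw [Real.log_prod fun q _ => by split_ifs <;> positivity,
    ← Finset.sum_fiberwise_of_maps_to fun e he => Finset.mem_image_of_mem Prod.fst he]
  refine Finset.sum_le_sum fun q hq => ?_
  have hq4 : q % 4 = 1 := by
    obtain ⟨e, he, rfl⟩ := Finset.mem_image.1 hq
    exact (hA e he).2
  have hinj : Set.InjOn Prod.snd (A.filter fun e => e.1 = q : Set (ℕ × ℕ)) := fun a ha b hb hab =>
    Prod.ext ((Finset.mem_filter.1 ha).2.trans (Finset.mem_filter.1 hb).2.symm) hab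
  rw [if_pos hq4, factorization_prod_prime (fun e he => (hA e he).1), ← Finset.sum_image hinj,
    ← Finset.card_image_of_injOn hinj]
  exact sum_logStep_le_log_card_add_one _

lemma log_prod_pow_sub_one_le {A : Finset (ℕ × ℕ)} {P : ℕ × ℕ → ℕ} {y : ℝ}
    (hP : ∀ e ∈ A, 0 < P e ∧ (P e : ℝ) ≤ y) :
    Real.log (∏ e ∈ A, P e ^ (e.1 - 1) : ℕ) ≤ (∑ e ∈ A, (e.1 : ℝ)) * Real.log y := by
  push_cast
  rw [Real.log_prod fun e he => pow_ne_zero _ (Nat.cast_ne_zero.2 (hP e he).1.ne'),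
    Finset.sum_mul]
  refine Finset.sum_le_sum fun e he => ?_
  have hsub : ((e.1 - 1 : ℕ) : ℝ) ≤ e.1 := Nat.cast_le.2 (Nat.sub_le _ _)
  have hlog : Real.log (P e) ≤ Real.log y :=
    Real.log_le_log (Nat.cast_pos.2 (hP e he).1) (hP e he).2
  rw [Real.log_pow]
  gcongr

/-- Attach to each pair `e = (q, l)` its own prime `P e`; then `n = ∏ P e ^ (q - 1)` satisfies
`r₂(n) = 4 ∏ q`. -/
lemma exists_sum_logStep_le_log_r2_r2 {A : Finset (ℕ × ℕ)} {S : Finset ℕ} {y : ℝ}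
    (hcard : A.card ≤ S.card) (hA : ∀ e ∈ A, e.1.Prime ∧ e.1 % 4 = 1)
    (hS : ∀ p ∈ S, (p.Prime ∧ p % 4 = 1) ∧ (p : ℝ) ≤ y) :
    ∃ n : ℕ, n ≠ 0 ∧ Real.log n ≤ (∑ e ∈ A, (e.1 : ℝ)) * Real.log y ∧
      ∑ e ∈ A, logStep e.2 ≤ Real.log (r2 (r2 n)) := by
  obtain ⟨P, hPS, hinj⟩ := A.finite_toSet.exists_injOn_of_encard_le (t := (S : Set ℕ))
    (by simpa using hcard)
  have hP : ∀ e ∈ A, (P e).Prime ∧ P e % 4 = 1 := fun e he => (hS _ (hPS he)).1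
  have hr2 : r2 (∏ e ∈ A, P e ^ (e.1 - 1)) = 4 * ∏ e ∈ A, e.1 := by
    rw [r2_prod_pow _ hP, splitDivisorCount_prod_pow _ hinj hP]
    exact congrArg _ (Finset.prod_congr rfl fun e he => Nat.sub_add_cancel (hA e he).1.one_le)
  have hr2r2 : r2 (∏ e ∈ A, e.1) = 4 * splitDivisorCount (∏ e ∈ A, e.1) := by
    simpa using r2_prod_pow (fun _ => 1) hA
  refine ⟨∏ e ∈ A, P e ^ (e.1 - 1),
    Finset.prod_ne_zero_iff.2 fun e he => pow_ne_zero _ (hP e he).1.ne_zero,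
    log_prod_pow_sub_one_le fun e he => ⟨(hP e he).1.pos, (hS _ (hPS he)).2⟩, ?_⟩
  rw [hr2, r2_four_mul, hr2r2]
  exact (sum_logStep_le_log_splitDivisorCount_prod hA).trans (Real.log_le_log
    (Nat.cast_pos.2 (splitDivisorCount_pos _)) (Nat.cast_le.2 (Nat.le_mul_of_pos_left _ four_pos)))

end Construction

section Knapsack

variable {ι : Type*} {U : Finset ι} {c v : ι → ℝ} {T : ℝ}

lemma exists_sum_lt_le_lt_sum_le (ρ : ι → ℝ) (hT : 0 ≤ T) (hU : T < ∑ i ∈ U, c i) :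
    ∃ j ∈ U, ∑ i ∈ U with ρ i < ρ j, c i ≤ T ∧ T < ∑ i ∈ U with ρ i ≤ ρ j, c i := by
  set V := {j ∈ U | T < ∑ i ∈ U with ρ i ≤ ρ j, c i}
  have hUne : U.Nonempty := Finset.nonempty_of_sum_ne_zero (hT.trans_lt hU).ne'
  obtain ⟨m, hmU, hmax⟩ := U.exists_max_image ρ hUne
  have hVne : V.Nonempty :=
    ⟨m, Finset.mem_filter.2 ⟨hmU, by rwa [Finset.filter_true_of_mem hmax]⟩⟩
  obtain ⟨j, hjV, hmin⟩ := V.exists_min_image ρ hVne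
  obtain ⟨hjU, hjT⟩ := Finset.mem_filter.1 hjV
  refine ⟨j, hjU, ?_, hjT⟩
  by_contra! hlt
  have hne : (U.filter fun i => ρ i < ρ j).Nonempty :=
    Finset.nonempty_of_sum_ne_zero (hT.trans_lt hlt).ne'
  obtain ⟨k, hk, hkmax⟩ := Finset.exists_max_image _ ρ hne
  obtain ⟨hkU, hkj⟩ := Finset.mem_filter.1 hk
  have heq : (U.filter fun i => ρ i ≤ ρ k) = U.filter fun i => ρ i < ρ j :=
    Finset.filter_congr fun i hi =>
      ⟨fun h => h.trans_lt hkj, fun h => hkmax i (Finset.mem_filter.2 ⟨hi, h⟩)⟩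
  exact (hmin k (Finset.mem_filter.2 ⟨hkU, by rwa [heq]⟩)).not_gt hkj

lemma exists_subset_sum_le_lt_sum_add {A₀ A₁ : Finset ι} (hsub : A₀ ⊆ A₁)
    (hA₀ : ∑ i ∈ A₀, c i ≤ T) (hA₁ : T < ∑ i ∈ A₁, c i) :
    ∃ A, A₀ ⊆ A ∧ A ⊆ A₁ ∧ ∑ i ∈ A, c i ≤ T ∧ ∃ j ∈ A₁, T < ∑ i ∈ A, c i + c j := by
  classical
  obtain ⟨A, hA, hmax⟩ := {A ∈ A₁.powerset | A₀ ⊆ A ∧ ∑ i ∈ A, c i ≤ T}.exists_max_image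
    Finset.card ⟨A₀, by simp [hsub, hA₀]⟩
  simp only [Finset.mem_filter, Finset.mem_powerset] at hA hmax
  obtain ⟨hAA₁, hA₀A, hAT⟩ := hA
  obtain ⟨j, hj, hjA⟩ : ∃ j ∈ A₁, j ∉ A := by
    by_contra! hall
    exact hA₁.not_ge (subset_antisymm hAA₁ hall ▸ hAT)
  refine ⟨A, hA₀A, hAA₁, hAT, j, hj, ?_⟩
  by_contra! hle
  have := hmax (insert j A) ⟨Finset.insert_subset hj hAA₁, hA₀A.trans (Finset.subset_insert _ _),
    by rwa [Finset.sum_insert hjA, add_comm]⟩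
  rw [Finset.card_insert_of_notMem hjA] at this
  omega

/-- Greedy solution of the knapsack problem: take items by increasing ratio `c i / v i` until the
budget `T` is exhausted; `Y` is the critical ratio. -/
lemma exists_knapsack (hc : ∀ i ∈ U, 0 < c i) (hv : ∀ i ∈ U, 0 < v i ∧ v i ≤ 1) (hT : 0 ≤ T)
    (hU : T < ∑ i ∈ U, c i) :
    ∃ A ⊆ U, ∃ Y > 0, (∃ j ∈ U, c j = Y * v j) ∧ ∑ i ∈ U with c i < Y * v i, c i ≤ T ∧
      (∀ i ∈ A, c i ≤ Y * v i) ∧ ∑ i ∈ A, c i ≤ T ∧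
      ∑ i ∈ U, max 0 (v i - c i / Y) + T / Y - 1 ≤ ∑ i ∈ A, v i := by
  classical
  obtain ⟨j, hj, hlt, hle⟩ := exists_sum_lt_le_lt_sum_le (fun i => c i / v i) hT hU
  set Y := c j / v j
  have hY : 0 < Y := div_pos (hc j hj) (hv j hj).1
  have hfilter_lt : {i ∈ U | c i / v i < Y} = {i ∈ U | c i < Y * v i} :=
    Finset.filter_congr fun i hi => div_lt_iff₀ (hv i hi).1
  have hfilter_le : {i ∈ U | c i / v i ≤ Y} = {i ∈ U | c i ≤ Y * v i} :=
    Finset.filter_congr fun i hi => div_le_iff₀ (hv i hi).1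
  rw [hfilter_lt] at hlt
  rw [hfilter_le] at hle
  obtain ⟨A, hA₀, hA₁, hAT, k, hk, hTk⟩ := exists_subset_sum_le_lt_sum_add
    (Finset.monotone_filter_right U fun i _ (h : c i < Y * v i) => h.le) hlt hle
  have hAU : A ⊆ U := hA₁.trans (Finset.filter_subset _ _)
  have hAY : ∀ i ∈ A, c i ≤ Y * v i := fun i hi => (Finset.mem_filter.1 (hA₁ hi)).2
  have hkY : c k ≤ Y := by
    obtain ⟨hkU, hkY⟩ := Finset.mem_filter.1 hk
    exact hkY.trans (mul_le_of_le_one_right hY.le (hv k hkU).2)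
  have hexcess : ∑ i ∈ U, max 0 (v i - c i / Y) = ∑ i ∈ A, v i - (∑ i ∈ A, c i) / Y := by
    rw [Finset.sum_div, ← Finset.sum_sub_distrib]
    refine (Finset.sum_subset_zero_on_sdiff hAU (fun i hi => ?_) fun i hi => ?_).symm
    · obtain ⟨hiU, hiA⟩ := Finset.mem_sdiff.1 hi
      have hge : ¬c i < Y * v i := fun h => hiA (hA₀ (Finset.mem_filter.2 ⟨hiU, h⟩))
      exact max_eq_left (sub_nonpos.2 ((le_div_iff₀' hY).2 (not_lt.1 hge)))
    · exact (max_eq_right (sub_nonneg.2 ((div_le_iff₀' hY).2 (hAY i hi)))).symm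
  have hbudget : T / Y - 1 ≤ (∑ i ∈ A, c i) / Y := by
    rw [le_div_iff₀ hY, sub_mul, div_mul_cancel₀ _ hY.ne']
    linarith
  exact ⟨A, hAU, Y, hY, ⟨j, hj, (div_mul_cancel₀ _ (hv j hj).1.ne').symm⟩, hlt, hAY, hAT,
    by linarith⟩

end Knapsack

section LowerBound

variable {N : ℕ} {T : ℝ}

lemma sum_lt_sum_product_of_le {r : ℝ} (hr : (N : ℝ) ≤ r)
    (hT : T < ∑ q ∈ splitPrimes N with 2 * q < N, (q : ℝ)) :
    T < ∑ e ∈ splitPrimes N ×ˢ Finset.range N with (e.1 : ℝ) < r * logStep e.2, (e.1 : ℝ) := by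
  have hlogStep : 1 / 2 < logStep 0 := by
    have hlog : logStep 0 = Real.log 2 := by norm_num [logStep]
    linarith [Real.log_two_gt_d9]
  calc T < ∑ q ∈ splitPrimes N with 2 * q < N, (q : ℝ) := hT
    _ = ∑ e ∈ {q ∈ splitPrimes N | 2 * q < N} ×ˢ {0}, (e.1 : ℝ) := by
        simp
    _ ≤ _ := by
        refine Finset.sum_le_sum_of_subset_of_nonneg (fun e he => ?_) fun e _ _ => Nat.cast_nonneg _
        simp only [Finset.mem_product, Finset.mem_filter, Finset.mem_singleton] at he
        obtain ⟨⟨hq, hqN⟩, hl⟩ := he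
        have hqN' : 2 * (e.1 : ℝ) < N := by exact_mod_cast hqN
        simp only [Finset.mem_filter, Finset.mem_product, Finset.mem_range, hl]
        exact ⟨⟨hq, by omega⟩, by nlinarith⟩

lemma exists_subset_totalExcess_add_le (hT : 0 ≤ T)
    (hTN : T < ∑ q ∈ splitPrimes N with 2 * q < N, (q : ℝ)) :
    ∃ A ⊆ splitPrimes N ×ˢ Finset.range N, ∃ Y : ℝ, 5 ≤ Y ∧ Y ≤ N ∧
      (∀ e ∈ A, ((e.2 : ℝ) + 1) * e.1 ≤ N) ∧ ∑ e ∈ A, (e.1 : ℝ) ≤ T ∧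
      totalExcess Y N + T / Y - 1 ≤ ∑ e ∈ A, logStep e.2 := by
  have hfive : ∀ e ∈ splitPrimes N ×ˢ Finset.range N, (5 : ℝ) ≤ e.1 := fun e he =>
    five_le_of_mem_splitPrimes (Finset.mem_product.1 he).1
  obtain ⟨A, hA, Y, hY, ⟨j, hj, hjY⟩, hsmall, hAY, hAT, hAv⟩ := exists_knapsack
    (c := fun e : ℕ × ℕ => (e.1 : ℝ)) (v := fun e => logStep e.2)
    (fun e he => by linarith [hfive e he]) (fun e _ => ⟨logStep_pos _, logStep_le_one _⟩) hT
    ((sum_lt_sum_product_of_le le_rfl hTN).trans_le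
      (Finset.sum_le_sum_of_subset_of_nonneg (Finset.filter_subset _ _) fun e _ _ =>
        Nat.cast_nonneg _))
  have hYN : Y ≤ N := by
    by_contra! hlt
    exact (sum_lt_sum_product_of_le hlt.le hTN).not_ge hsmall
  refine ⟨A, hA, Y, ?_, hYN, fun e he => ?_, hAT, ?_⟩
  · exact (hfive j hj).trans (hjY.le.trans (mul_le_of_le_one_right hY.le (logStep_le_one _)))
  · calc ((e.2 : ℝ) + 1) * e.1 ≤ (e.2 + 1) * (Y * (1 / (e.2 + 1))) := by
          gcongr
          exact (hAY e he).trans (by gcongr; exact logStep_le _)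
      _ = Y := by field_simp
      _ ≤ N := hYN
  · simpa only [totalExcess, excess, Finset.sum_product] using hAv

lemma card_le_mul_one_add_log {A : Finset (ℕ × ℕ)} (hA : A ⊆ splitPrimes N ×ˢ Finset.range N)
    (hAN : ∀ e ∈ A, ((e.2 : ℝ) + 1) * e.1 ≤ N) : (A.card : ℝ) ≤ N * (1 + Real.log N) := by
  rw [Finset.card_eq_sum_card_fiberwise fun e he => (Finset.mem_product.1 (hA he)).2,
    Nat.cast_sum]
  calc ∑ l ∈ Finset.range N, ((A.filter fun e => e.2 = l).card : ℝ)
      ≤ ∑ l ∈ Finset.range N, (N : ℝ) * ((l : ℝ) + 1)⁻¹ := by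
        refine Finset.sum_le_sum fun l _ => ?_
        have hinj : Set.InjOn Prod.fst (A.filter fun e => e.2 = l : Set (ℕ × ℕ)) :=
          fun a ha b hb hab => Prod.ext hab
            ((Finset.mem_filter.1 ha).2.trans (Finset.mem_filter.1 hb).2.symm)
        set B := (A.filter fun e => e.2 = l).image Prod.fst
        have hB : ∀ q ∈ B, 0 < q ∧ (q : ℝ) ≤ N * ((l : ℝ) + 1)⁻¹ := fun q hq => by
          obtain ⟨e, he, rfl⟩ := Finset.mem_image.1 hq
          obtain ⟨heA, rfl⟩ := Finset.mem_filter.1 he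
          have hprime := (mem_splitPrimes.1 (Finset.mem_product.1 (hA heA)).1).2.1
          refine ⟨hprime.pos, ?_⟩
          rw [← div_eq_mul_inv, le_div_iff₀' (by positivity)]
          exact hAN e heA
        rw [← Finset.card_image_of_injOn hinj]
        simpa only [Finset.filter_true_of_mem fun q hq => (hB q hq).2] using
          card_filter_cast_le_le (fun q hq => (hB q hq).1)
            (c := N * ((l : ℝ) + 1)⁻¹) (by positivity)
    _ ≤ N * (1 + Real.log N) := by
        rw [← Finset.mul_sum]
        gcongr
        exact sum_range_inv_add_one_le N

lemma sq_div_four_le_sum_cast {S : Finset ℕ} {c : ℝ} (hc : 0 ≤ c) (hcS : c ≤ S.card)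
    (hS : ∀ q ∈ S, 0 < q) : c ^ 2 / 4 ≤ ∑ q ∈ S, (q : ℝ) := by
  have hsmall := card_filter_cast_le_le hS (c := c / 2) (by positivity)
  have hsplit := Finset.card_filter_add_card_filter_not (s := S) fun q : ℕ => (q : ℝ) ≤ c / 2
  rw [← hsplit, Nat.cast_add] at hcS
  set B := S.filter fun q : ℕ => ¬(q : ℝ) ≤ c / 2
  calc c ^ 2 / 4 = c / 2 * (c / 2) := by ring
    _ ≤ B.card * (c / 2) := by gcongr; linarith
    _ ≤ ∑ q ∈ B, (q : ℝ) := by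
        rw [← nsmul_eq_mul]
        exact Finset.card_nsmul_le_sum _ _ _ fun q hq => (not_le.1 (Finset.mem_filter.1 hq).2).le
    _ ≤ ∑ q ∈ S, (q : ℝ) := Finset.sum_le_sum_of_subset_of_nonneg (Finset.filter_subset _ _)
        fun _ _ _ => Nat.cast_nonneg _

end LowerBound

section LowerAsymptotics

variable {X : ℝ}

lemma IsLarge.log_sqrt_mul_log_pow (hX : IsLarge X) (k : ℕ) :
    Real.log (√X * Real.log X ^ k) = Real.log X / 2 + k * Real.log (Real.log X) := by
  rw [Real.log_mul hX.sqrt_pos.ne' (pow_pos hX.log_pos k).ne', Real.log_pow,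
    Real.log_sqrt hX.pos.le]

lemma IsLarge.log_le_sqrt (hX : IsLarge X) : Real.log X ≤ √X := by
  have hpow : Real.log X ≤ Real.log X ^ 4 :=
    le_self_pow₀ (by linarith [hX.le_log]) (by norm_num)
  linarith [hX.mul_log_pow_four_le_sqrt, hX.log_pos]

lemma eventually_lt_sum_splitPrimes : ∀ᶠ X : ℝ in atTop, ∀ N : ℕ, √X * Real.log X ^ 2 ≤ N →
    X < ∑ q ∈ splitPrimes N with 2 * q < N, (q : ℝ) := by
  obtain ⟨y₀, -, hcount⟩ := exists_le_card_splitPrimes_lt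
  filter_upwards [eventually_isLarge, Real.tendsto_log_atTop.eventually_ge_atTop y₀]
    with X hX hy₀ N hN
  have hlog := hX.le_log
  have hsqrt := hX.sqrt_pos
  set u := Real.log X
  set y := √X * u ^ 2 / 2 with hy
  have huy : u ≤ y := by nlinarith [hX.log_le_sqrt]
  have hlogy : Real.log y ≤ u := by
    have hle : Real.log y ≤ Real.log (√X * u ^ 2) :=
      Real.log_le_log (by positivity) (half_le_self (by positivity))
    rw [hX.log_sqrt_mul_log_pow] at hle
    push_cast at hle
    linarith [hX.mul_log_log_le]
  have hcard : √X * u / 10 ≤ ((splitPrimes N).filter fun q : ℕ => (q : ℝ) < y).card := by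
    have hlogy0 : 0 < Real.log y := Real.log_pos (by linarith)
    calc √X * u / 10 = y / (5 * u) := by rw [hy]; field_simp; ring
      _ ≤ y / (5 * Real.log y) := by gcongr
      _ ≤ _ := hcount y (hy₀.trans huy) N (by linarith)
  calc X < X * (u ^ 2 / 400) := lt_mul_of_one_lt_right hX.pos (by nlinarith only [hlog])
    _ = (√X * u / 10) ^ 2 / 4 := by
        conv_lhs => rw [← Real.sq_sqrt hX.pos.le]
        ring
    _ ≤ ∑ q ∈ (splitPrimes N).filter fun q : ℕ => (q : ℝ) < y, (q : ℝ) :=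
        sq_div_four_le_sum_cast (by positivity) hcard fun q hq =>
          (mem_splitPrimes.1 (Finset.mem_filter.1 hq).1).2.1.pos
    _ ≤ ∑ q ∈ splitPrimes N with 2 * q < N, (q : ℝ) := by
        refine Finset.sum_le_sum_of_subset_of_nonneg
          (Finset.monotone_filter_right _ fun q _ hq => ?_) fun _ _ _ => Nat.cast_nonneg _
        exact_mod_cast (by linarith : 2 * (q : ℝ) < N)

/-- The bound `√X (log X)⁵` for the prime factors of the extremal `n`. -/
noncomputable def primeCutoff (X : ℝ) : ℝ := √X * Real.log X ^ 5

lemma IsLarge.log_primeCutoff (hX : IsLarge X) :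
    Real.log (primeCutoff X) = Real.log X / 2 + 5 * Real.log (Real.log X) := by
  rw [primeCutoff, hX.log_sqrt_mul_log_pow, Nat.cast_ofNat]

lemma IsLarge.log_primeCutoff_pos (hX : IsLarge X) : 0 < Real.log (primeCutoff X) := by
  rw [hX.log_primeCutoff]
  linarith [hX.log_pos, hX.one_le_log_log]

lemma IsLarge.log_primeCutoff_le (hX : IsLarge X) : Real.log (primeCutoff X) ≤ Real.log X := by
  rw [hX.log_primeCutoff]
  linarith [hX.mul_log_log_le, hX.log_pos]

lemma eventually_exists_le_card : ∀ᶠ X : ℝ in atTop, ∃ S : Finset ℕ,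
    (∀ p ∈ S, (p.Prime ∧ p % 4 = 1) ∧ (p : ℝ) ≤ primeCutoff X) ∧
      4 * (√X * Real.log X ^ 3) ≤ S.card := by
  obtain ⟨y₀, -, hcount⟩ := exists_le_card_splitPrimes_lt
  filter_upwards [eventually_isLarge, Real.tendsto_log_atTop.eventually_ge_atTop y₀]
    with X hX hy₀
  have hlog := hX.le_log
  have hsqrt := hX.sqrt_pos
  have hD := hX.log_primeCutoff_pos
  have hDle := hX.log_primeCutoff_le
  have hcutoff : √X ≤ primeCutoff X :=
    le_mul_of_one_le_right hsqrt.le (one_le_pow₀ (by linarith))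
  refine ⟨(splitPrimes ⌈primeCutoff X⌉₊).filter fun q : ℕ => (q : ℝ) < primeCutoff X,
    fun p hp => ?_, ?_⟩
  · obtain ⟨hmem, hlt⟩ := Finset.mem_filter.1 hp
    exact ⟨(mem_splitPrimes.1 hmem).2, hlt.le⟩
  · calc 4 * (√X * Real.log X ^ 3) ≤ Real.log X / 5 * (√X * Real.log X ^ 3) := by
          gcongr
          linarith
      _ = primeCutoff X / (5 * Real.log X) := by rw [primeCutoff]; field_simp
      _ ≤ primeCutoff X / (5 * Real.log (primeCutoff X)) := by
          have := hsqrt.le.trans hcutoff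
          gcongr
      _ ≤ _ := hcount _ (by linarith [hX.log_le_sqrt]) _ (Nat.le_ceil _)

lemma IsLarge.log_le_of_le_two_mul (hX : IsLarge X) {x : ℝ} (hx : 0 < x)
    (hxX : x ≤ 2 * (√X * Real.log X ^ 2)) :
    Real.log x ≤ Real.log X / 2 + 2 * Real.log (Real.log X) + 1 := by
  have hlog := hX.log_pos
  have hsqrt := hX.sqrt_pos
  have hle := Real.log_le_log hx hxX
  rw [Real.log_mul two_ne_zero (by positivity), hX.log_sqrt_mul_log_pow, Nat.cast_ofNat] at hle
  linarith [Real.log_two_lt_d9]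

lemma eventually_exists_totalExcess_add_le : ∀ᶠ X : ℝ in atTop, ∃ n : ℕ, n ≠ 0 ∧
    Real.log n ≤ X ∧ ∃ (N : ℕ) (Y : ℝ), 5 ≤ Y ∧ Y ≤ N ∧ N ≤ 2 * (√X * Real.log X ^ 2) ∧
      totalExcess Y N + X / Real.log (primeCutoff X) / Y - 1 ≤ Real.log (r2 (r2 n)) := by
  filter_upwards [eventually_isLarge, eventually_lt_sum_splitPrimes, eventually_exists_le_card]
    with X hX hsum hprimes
  obtain ⟨S, hS, hcardS⟩ := hprimes
  have hlog := hX.le_log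
  have hsqrt := hX.sqrt_pos
  have hD := hX.log_primeCutoff_pos
  have hD1 : 1 ≤ Real.log (primeCutoff X) := by
    rw [hX.log_primeCutoff]
    linarith [hX.one_le_log_log]
  set N := ⌈√X * Real.log X ^ 2⌉₊
  have hNge : √X * Real.log X ^ 2 ≤ N := Nat.le_ceil _
  have hNle : (N : ℝ) ≤ 2 * (√X * Real.log X ^ 2) := by
    have hceil := Nat.ceil_lt_add_one (a := √X * Real.log X ^ 2) (by positivity)
    nlinarith [hX.log_le_sqrt, one_le_pow₀ (M₀ := ℝ) (n := 2) (by linarith : 1 ≤ Real.log X)]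
  have hlogN := hX.log_le_of_le_two_mul
    ((mul_pos hsqrt (pow_pos hX.log_pos 2)).trans_le hNge) hNle
  obtain ⟨A, hA, Y, hY5, hYN, hAN, hAT, hAsum⟩ := exists_subset_totalExcess_add_le
    (div_pos hX.pos hD).le ((div_le_self hX.pos.le hD1).trans_lt (hsum N hNge))
  have hcard : A.card ≤ S.card := by
    have hcardA : (A.card : ℝ) ≤ 4 * (√X * Real.log X ^ 3) :=
      calc (A.card : ℝ) ≤ N * (1 + Real.log N) := card_le_mul_one_add_log hA hAN
        _ ≤ 2 * (√X * Real.log X ^ 2) * (2 * Real.log X) := by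
            gcongr
            linarith [hX.mul_log_log_le]
        _ = 4 * (√X * Real.log X ^ 3) := by ring
    exact_mod_cast hcardA.trans hcardS
  obtain ⟨n, hn, hnlog, hnsum⟩ := exists_sum_logStep_le_log_r2_r2 hcard
    (fun e he => (mem_splitPrimes.1 (Finset.mem_product.1 (hA he)).1).2) hS
  exact ⟨n, hn, hnlog.trans ((le_div_iff₀ hD).1 hAT), N, Y, hY5, hYN, hNle, hAsum.trans hnsum⟩

lemma mul_sqrt_div_le_sq_mul_div_add {D Y : ℝ} (hX : 0 ≤ X) (hD : 0 < D) (hY : 0 < Y) (t : ℝ) :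
    t * √X / D ≤ t ^ 2 * Y / (4 * D) + X / D / Y := by
  have hsquare : t ^ 2 * Y / (4 * D) + √X ^ 2 / D / Y - t * √X / D =
      (t * Y / 2 - √X) ^ 2 / (D * Y) := by
    field_simp
    ring
  rw [Real.sq_sqrt hX] at hsquare
  linarith [show 0 ≤ (t * Y / 2 - √X) ^ 2 / (D * Y) by positivity]

lemma IsLarge.two_div_log_sub_le (hX : IsLarge X) :
    2 / Real.log X - 20 * Real.log (Real.log X) / Real.log X ^ 2 ≤
      1 / Real.log (primeCutoff X) := by
  have hlog := hX.log_pos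
  rw [show 2 / Real.log X - 20 * Real.log (Real.log X) / Real.log X ^ 2 =
    (2 * Real.log X - 20 * Real.log (Real.log X)) / Real.log X ^ 2 by field_simp,
    div_le_div_iff₀ (by positivity) hX.log_primeCutoff_pos, hX.log_primeCutoff]
  nlinarith only [hX.one_le_log_log, hlog, sq_nonneg (Real.log (Real.log X))]

lemma IsLarge.sub_mul_errorTerm_le_mul_sqrt_div {s a : ℝ} (hX : IsLarge X) (ha : 0 ≤ a)
    (has : a / Real.log X ≤ s) :
    √X / Real.log X * (2 * s) - (2 * a + 20 * s) * errorTerm X ≤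
      (s - a / Real.log X) * √X / Real.log (primeCutoff X) := by
  have hlog := hX.log_pos
  have hsqrt := hX.sqrt_pos
  have haerror : 2 * a * (√X / Real.log X ^ 2) ≤ 2 * a * errorTerm X := by
    gcongr
    exact hX.sqrt_div_log_sq_le_errorTerm
  have hterror : 20 * (s - a / Real.log X) * errorTerm X ≤ 20 * s * errorTerm X := by
    have herror := hX.errorTerm_nonneg
    gcongr
    exact sub_le_self s (by positivity)
  calc √X / Real.log X * (2 * s) - (2 * a + 20 * s) * errorTerm X
      ≤ √X / Real.log X * (2 * s) - 2 * a * (√X / Real.log X ^ 2) -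
          20 * (s - a / Real.log X) * errorTerm X := by linarith
    _ = (s - a / Real.log X) * √X *
          (2 / Real.log X - 20 * Real.log (Real.log X) / Real.log X ^ 2) := by
        rw [errorTerm]
        field_simp
    _ ≤ (s - a / Real.log X) * √X * (1 / Real.log (primeCutoff X)) := by
        gcongr
        exact hX.two_div_log_sub_le
    _ = _ := by rw [mul_one_div]

lemma IsLarge.sqrt_div_log_mul_le_of_le_div {s Y : ℝ} (hX : IsLarge X)
    (hs : 2 * s ≤ Real.log X) (hY : 0 < Y) (hYX : Y ≤ √X / Real.log X) :
    √X / Real.log X * (2 * s) ≤ X / Real.log (primeCutoff X) / Y := by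
  have hlog := hX.log_pos
  have hD := hX.log_primeCutoff_pos
  calc √X / Real.log X * (2 * s) ≤ √X / Real.log X * Real.log X := by gcongr
    _ = √X := div_mul_cancel₀ _ hlog.ne'
    _ ≤ X / Real.log (primeCutoff X) / Y := by
        rw [le_div_iff₀ hY, le_div_iff₀ hD]
        calc √X * Y * Real.log (primeCutoff X) ≤ √X * (√X / Real.log X) * Real.log X :=
              mul_le_mul (by gcongr) hX.log_primeCutoff_le hD.le (by positivity)
          _ = √X ^ 2 := by field_simp
          _ = X := Real.sq_sqrt hX.pos.le

lemma IsLarge.sq_mul_div_le {s K Y : ℝ} (hX : IsLarge X) (hs : 0 < s) (hK : 0 ≤ K)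
    (hKs : 16 * K / s / Real.log X ≤ s) (hY : 0 < Y) (hL : Real.log X / 4 ≤ Real.log Y)
    (hLD : Real.log Y ≤ Real.log (primeCutoff X)) :
    (s - 16 * K / s / Real.log X) ^ 2 * Y / (4 * Real.log (primeCutoff X)) ≤
      Y * s ^ 2 / (4 * Real.log Y) - K * Y / Real.log Y ^ 2 := by
  have hlog := hX.log_pos
  have hL0 : 0 < Real.log Y := by linarith
  have hsquare : (s - 16 * K / s / Real.log X) ^ 2 ≤ s ^ 2 - 16 * K / Real.log X := by
    have hnonneg : 0 ≤ 16 * K / s / Real.log X := by positivity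
    rw [show 16 * K / Real.log X = s * (16 * K / s / Real.log X) by field_simp]
    nlinarith only [hKs, hnonneg]
  have hKL : 4 * K / Real.log Y ≤ 16 * K / Real.log X := by
    rw [div_le_div_iff₀ hL0 hlog]
    nlinarith only [hK, hL]
  calc (s - 16 * K / s / Real.log X) ^ 2 * Y / (4 * Real.log (primeCutoff X))
      ≤ (s - 16 * K / s / Real.log X) ^ 2 * Y / (4 * Real.log Y) := by gcongr
    _ ≤ (s ^ 2 - 4 * K / Real.log Y) * Y / (4 * Real.log Y) := by gcongr; linarith
    _ = Y * s ^ 2 / (4 * Real.log Y) - K * Y / Real.log Y ^ 2 := by field_simp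

lemma exists_le_log_r2_r2 : ∃ C : ℝ, 0 < C ∧ ∀ᶠ X : ℝ in atTop, ∃ n : ℕ, n ≠ 0 ∧
    Real.log n ≤ X ∧
    √X / Real.log X * (2 * √logStepSqSum) - C * errorTerm X ≤ Real.log (r2 (r2 n)) := by
  obtain ⟨K, hK, htotal⟩ := exists_le_totalExcess
  have hs := sqrt_logStepSqSum_pos
  have hsq := Real.sq_sqrt logStepSqSum_pos.le
  set s := √logStepSqSum
  refine ⟨2 * (16 * K / s) + 20 * s + 1, by positivity, ?_⟩
  filter_upwards [eventually_isLarge, eventually_exists_totalExcess_add_le,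
    Real.tendsto_log_atTop.eventually_ge_atTop (2 * s),
    Real.tendsto_log_atTop.eventually_ge_atTop (16 * K / s / s)] with X hX hexists hsX hKX
  obtain ⟨n, hn, hnX, N, Y, hY5, hYN, hNX, hr2⟩ := hexists
  refine ⟨n, hn, hnX, ?_⟩
  have hlog := hX.le_log
  have hloglog := hX.mul_log_log_le
  have hY : 0 < Y := by linarith
  have herror : 1 ≤ errorTerm X := by nlinarith only [hX.mul_log_sq_le_errorTerm, hlog]
  have hCerror : 0 ≤ (2 * (16 * K / s) + 20 * s) * errorTerm X := by positivity
  rcases le_or_gt Y (√X / Real.log X) with hYX | hYX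
  · linarith [hX.sqrt_div_log_mul_le_of_le_div hsX hY hYX, totalExcess_nonneg Y N]
  · have hlogY : Real.log X / 2 - Real.log (Real.log X) ≤ Real.log Y := by
      have hle := Real.log_le_log (div_pos hX.sqrt_pos hX.log_pos) hYX.le
      rwa [Real.log_div hX.sqrt_pos.ne' hX.log_pos.ne', Real.log_sqrt hX.pos.le] at hle
    have hlogY_le : Real.log Y ≤ Real.log (primeCutoff X) := by
      rw [hX.log_primeCutoff]
      linarith [hX.log_le_of_le_two_mul hY (hYN.trans hNX), hX.one_le_log_log]
    have hKs : 16 * K / s / Real.log X ≤ s := (div_le_comm₀ hX.log_pos hs).2 hKX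
    have hexcess := htotal Y ((Real.le_log_iff_exp_le hY).1 (by linarith)) N hYN
    rw [← hsq] at hexcess
    linarith [hX.sub_mul_errorTerm_le_mul_sqrt_div (by positivity) hKs,
      mul_sqrt_div_le_sq_mul_div_add hX.pos.le hX.log_primeCutoff_pos hY
        (s - 16 * K / s / Real.log X),
      hX.sq_mul_div_le hs hK.le hKs hY (by linarith) hlogY_le]

end LowerAsymptotics

section BiSup

variable {ι : Type*} {s : Finset ι} {f : ι → ℝ}

lemma biSup_le_of_nonneg {B : ℝ} (hB : 0 ≤ B) (hf : ∀ i ∈ s, f i ≤ B) : ⨆ i ∈ s, f i ≤ B :=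
  Real.iSup_le (fun i => Real.iSup_le (hf i) hB) hB

lemma le_biSup_of_mem {i : ι} (hi : i ∈ s) : f i ≤ ⨆ j ∈ s, f j := by
  have hbdd : BddAbove (Set.range fun j => ⨆ _ : j ∈ s, f j) := by
    refine ⟨∑ j ∈ s, |f j|, ?_⟩
    rintro _ ⟨j, rfl⟩
    exact Real.iSup_le (fun hj => (le_abs_self _).trans
      (Finset.single_le_sum (f := fun j => |f j|) (fun _ _ => abs_nonneg _) hj))
      (Finset.sum_nonneg fun _ _ => abs_nonneg _)
  simpa only [ciSup_pos hi] using le_ciSup hbdd i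

end BiSup

section MaximalOrder

variable {x : ℕ} {f : ℕ → ℝ}

lemma biSup_Icc_le_of_forall_log_le {B : ℝ} (hB : 0 ≤ B)
    (hf : ∀ n : ℕ, n ≠ 0 → Real.log n ≤ Real.log x → f n ≤ B) : ⨆ n ∈ Finset.Icc 1 x, f n ≤ B :=
  biSup_le_of_nonneg hB fun n hn => by
    obtain ⟨h1, hnx⟩ := Finset.mem_Icc.1 hn
    exact hf n (by omega) (Real.log_le_log (by exact_mod_cast h1) (by exact_mod_cast hnx))

lemma le_biSup_Icc_of_log_le (hx : 1 ≤ x) {n : ℕ} (hn : n ≠ 0)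
    (hnx : Real.log n ≤ Real.log x) : f n ≤ ⨆ m ∈ Finset.Icc 1 x, f m := by
  have hle : (n : ℝ) ≤ x :=
    (Real.log_le_log_iff (by positivity) (by positivity)).1 hnx
  exact le_biSup_of_mem (Finset.mem_Icc.2 ⟨Nat.one_le_iff_ne_zero.2 hn, Nat.cast_le.1 hle⟩)

end MaximalOrder

/-- `max_{n ≤ x} log r₂(r₂(n)) = (√(log x)/log₂ x)·(c/√2 + O(log₃ x/log₂ x))` as `x → ∞`. -/
theorem maxOrder_iterated_r2 :
    ∃ C : ℝ, 0 < C ∧ ∀ᶠ x : ℕ in atTop,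
      |(⨆ n ∈ Finset.Icc 1 x, Real.log (r2 (r2 n))) -
          Real.sqrt (Real.log x) / Real.log (Real.log x) * (cBEFS / Real.sqrt 2)| ≤
        C * (Real.sqrt (Real.log x) / Real.log (Real.log x)) *
          (Real.log (Real.log (Real.log x)) / Real.log (Real.log x)) := by
  obtain ⟨C₁, hC₁, hupper⟩ := exists_log_r2_r2_le
  obtain ⟨C₂, hC₂, hlower⟩ := exists_le_log_r2_r2
  have hlog : Tendsto (fun x : ℕ => Real.log x) atTop atTop :=
    Real.tendsto_log_atTop.comp tendsto_natCast_atTop_atTop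
  refine ⟨C₁ + C₂, add_pos hC₁ hC₂, ?_⟩
  filter_upwards [hlog.eventually hupper, hlog.eventually hlower,
    hlog.eventually eventually_isLarge, eventually_ge_atTop 1]
    with x hupper_x ⟨n, hn, hnx, hlower_x⟩ hlarge hx
  have herror := hlarge.errorTerm_nonneg
  have hmain : 0 ≤ √(Real.log x) / Real.log (Real.log x) * (2 * √logStepSqSum) :=
    mul_nonneg (div_nonneg (Real.sqrt_nonneg _) hlarge.log_pos.le) (by positivity)
  have hsup_le := biSup_Icc_le_of_forall_log_le
    (add_nonneg hmain (mul_nonneg hC₁.le herror)) hupper_x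
  have hle_sup := le_biSup_Icc_of_log_le (f := fun n => Real.log (r2 (r2 n))) hx hn hnx
  rw [cBEFS_div_sqrt_two, mul_assoc, div_mul_div_comm, ← sq, ← errorTerm, abs_le]
  constructor <;> nlinarith
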